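/- Let j ≥ 2 be an integer and let s ∈ ℝ satisfy −j + 1/2 ≤ s ≤ −j/2. There exists a constant C > 0 depending only on j and s (in particular independent of λ) such that for every λ ≥ 1 and all nonnegative measurable f₁, f₂ : Ż_λ × ℝ → [0,∞], the function g(k,τ) := |k|·⟨σ⟩^{−1}·(f₁∗f₂)(k,τ) on Ż_λ × ℝ satisfies: the Y^s norm of g is at most C times the product of the Z^s norms of f₁ and f₂. -/

import Mathlib

/-!
The proof pairs the left side with a function `h` of the frequency alone (`n2_dual`), so that the
claim becomes a trilinear estimate for the integral of `h(k) |k| ⟨k⟩^s ⟨σ⟩⁻¹ f₁(p₁) f₂(p - p₁)` over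
two copies of `ℤ × ℝ`.

Write `n = 2j + 1`, and `σ`, `σ₁`, `σ₂` for the modulations at `p`, `p₁`, `p₂ = p - p₁`.  The basic fact
is the resonance identity `σ₁ + σ₂ - σ = k^n - k₁^n - k₂^n`, whose right side has size at least
`k_min k_max^{2j}` up to a constant (`Cfg`, `exists_cfg`).  One of the three modulations is therefore
large, and by the symmetry between `f₁` and `f₂` one may assume `|σ₂| ≤ |σ₁|`.  Splitting according to
which of `σ`, `σ₁` dominates and to the regions `D₁, …, D₅` containing the two inputs, the weights of
the `X^s` norm and the gain from the large modulation absorb `|k| ⟨k⟩^s` (`real_all`).  In these case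
distinctions the lower bound on `s` makes powers such as `(1 + k_max)^{2j-1+2s}` bounded below, and
the upper bound enters through `s ≤ -1`.

The outcome is the pointwise bound `pw` by the sum `Bf` of four kernels.  Three of them carry a
frequency weight `q` at one of the three frequencies, where `q ≥ (1 + |·|)⁻¹` is square integrable and
has an integrable singularity at `0` which pays for small frequencies; its lattice sums are bounded
uniformly in `λ` (`qL_sum`).  These kernels are handled by Young's inequality in `τ` and
Cauchy–Schwarz in the frequencies (`qred`).  The remaining kernel has no frequency weight.  It is
supported where `|k₁| ≥ 1`, and is handled by a Schur-type argument: after the `τ`-integration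
(`tau_int`) what remains is the sum over `k` of `⟨T - (k^n - (k - k₁)^n)⟩^{-2/3}`, which is bounded
uniformly in `λ`, `k₁` and `T` since the phase moves away from any level at least quadratically
(`ph_level`, `freq_sum`).
-/
open MeasureTheory
open scoped ENNReal

noncomputable section

/-- Japanese bracket `⟨x⟩ = (1+x²)^{1/2}`. -/
def jap (x : ℝ) : ℝ := Real.sqrt (1 + x ^ 2)

/-- Modulation `σ = τ − k^{2j+1}` at the frequency `k = m/λ ∈ Ż_λ`. -/
def sigL (j : ℕ) (lam : ℝ) (m : ℤ) (τ : ℝ) : ℝ := τ - ((m : ℝ) / lam) ^ (2 * j + 1)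

/-- Convolution on `Ż_λ × ℝ` (frequencies indexed by `m ∈ ℤ∖{0}`, `k = m/λ`):
`(f∗g)(k,τ) = (1/λ)Σ_{k₁≠0, k−k₁≠0} ∫ f(k₁,τ₁) g(k−k₁,τ−τ₁) dτ₁`. -/
def convL (lam : ℝ) (f g : ℤ → ℝ → ℝ≥0∞) (m : ℤ) (τ : ℝ) : ℝ≥0∞ :=
  ENNReal.ofReal (1 / lam) *
    ∑' m₁ : ℤ, if m₁ ≠ 0 ∧ m - m₁ ≠ 0 then ∫⁻ τ₁, f m₁ τ₁ * g (m - m₁) (τ - τ₁) else 0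

/-- `L²_λ` norm: `((1/λ) Σ_k ∫ f(k,τ)² dτ)^{1/2}`. -/
def L2L (lam : ℝ) (f : ℤ → ℝ → ℝ≥0∞) : ℝ≥0∞ :=
  (ENNReal.ofReal (1 / lam) * ∑' m : ℤ, ∫⁻ τ, (f m τ) ^ 2) ^ (1 / 2 : ℝ)

/-- `X^{s,b}` norm: the `L²_λ` norm of `⟨k⟩^s ⟨σ⟩^b f(k,τ)`. -/
def Xn (j : ℕ) (lam s b : ℝ) (f : ℤ → ℝ → ℝ≥0∞) : ℝ≥0∞ :=
  L2L lam (fun m τ =>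
    ENNReal.ofReal (jap ((m : ℝ) / lam) ^ s * jap (sigL j lam m τ) ^ b) * f m τ)

/-- `Y^s` norm: `((1/λ) Σ_k ⟨k⟩^{2s} (∫ f(k,τ) dτ)²)^{1/2}`. -/
def Yn (lam s : ℝ) (f : ℤ → ℝ → ℝ≥0∞) : ℝ≥0∞ :=
  (ENNReal.ofReal (1 / lam) *
    ∑' m : ℤ, ENNReal.ofReal (jap ((m : ℝ) / lam) ^ (2 * s)) * (∫⁻ τ, f m τ) ^ 2) ^
    (1 / 2 : ℝ)

/-- `D₁ = {(k,τ): |k| ≥ 1, |σ| ≤ (2(2j+1)/3)|k|^{2j}}`. -/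
def D1 (j : ℕ) (lam : ℝ) : Set (ℤ × ℝ) :=
  {p | 1 ≤ |(p.1 : ℝ) / lam| ∧
    |sigL j lam p.1 p.2| ≤ 2 * (2 * (j : ℝ) + 1) / 3 * |(p.1 : ℝ) / lam| ^ (2 * j)}

/-- `D₂ = {(k,τ): |k| ≥ 1, (2(2j+1)/3)|k|^{2j} < |σ| ≤ 2(2j+1)|k|^{2j+1}}`. -/
def D2 (j : ℕ) (lam : ℝ) : Set (ℤ × ℝ) :=
  {p | 1 ≤ |(p.1 : ℝ) / lam| ∧
    2 * (2 * (j : ℝ) + 1) / 3 * |(p.1 : ℝ) / lam| ^ (2 * j) < |sigL j lam p.1 p.2| ∧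
    |sigL j lam p.1 p.2| ≤ 2 * (2 * (j : ℝ) + 1) * |(p.1 : ℝ) / lam| ^ (2 * j + 1)}

/-- `D₃ = {(k,τ): |k| ≥ 1, |σ| > 2(2j+1)|k|^{2j+1}}`. -/
def D3 (j : ℕ) (lam : ℝ) : Set (ℤ × ℝ) :=
  {p | 1 ≤ |(p.1 : ℝ) / lam| ∧
    2 * (2 * (j : ℝ) + 1) * |(p.1 : ℝ) / lam| ^ (2 * j + 1) < |sigL j lam p.1 p.2|}

/-- `D₄ = {(k,τ): 1/λ ≤ |k| ≤ 1, |σ| > 2(2j+1)|k|^{2j+1}}`. -/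
def D4 (j : ℕ) (lam : ℝ) : Set (ℤ × ℝ) :=
  {p | 1 / lam ≤ |(p.1 : ℝ) / lam| ∧ |(p.1 : ℝ) / lam| ≤ 1 ∧
    2 * (2 * (j : ℝ) + 1) * |(p.1 : ℝ) / lam| ^ (2 * j + 1) < |sigL j lam p.1 p.2|}

/-- `D₅ = {(k,τ): 1/λ ≤ |k| ≤ 1, |σ| ≤ 2(2j+1)|k|^{2j+1}}`. -/
def D5 (j : ℕ) (lam : ℝ) : Set (ℤ × ℝ) :=
  {p | 1 / lam ≤ |(p.1 : ℝ) / lam| ∧ |(p.1 : ℝ) / lam| ≤ 1 ∧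
    |sigL j lam p.1 p.2| ≤ 2 * (2 * (j : ℝ) + 1) * |(p.1 : ℝ) / lam| ^ (2 * j + 1)}

/-- Restriction `1_D f` of `f` to a region `D`. -/
def restr (D : Set (ℤ × ℝ)) (f : ℤ → ℝ → ℝ≥0∞) : ℤ → ℝ → ℝ≥0∞ :=
  fun m τ => Set.indicator D (fun p => f p.1 p.2) (m, τ)

/-- `X^s` norm: `‖1_{D₁∪D₅}f‖_{X^{s,(2j−1)/(2j)}} + ‖1_{D₂}f‖_{X^{(1−2j)s−1,s+1}}
  + ‖1_{D₃∪D₄}f‖_{X^{−s/j−1,s/j+1}}`. -/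
def XSn (j : ℕ) (lam s : ℝ) (f : ℤ → ℝ → ℝ≥0∞) : ℝ≥0∞ :=
  Xn j lam s ((2 * (j : ℝ) - 1) / (2 * (j : ℝ))) (restr (D1 j lam ∪ D5 j lam) f)
  + Xn j lam ((1 - 2 * (j : ℝ)) * s - 1) (s + 1) (restr (D2 j lam) f)
  + Xn j lam (-s / (j : ℝ) - 1) (s / (j : ℝ) + 1) (restr (D3 j lam ∪ D4 j lam) f)

/-- `Z^s` norm: `X^s` norm plus `Y^s` norm. -/
def Zn (j : ℕ) (lam s : ℝ) (f : ℤ → ℝ → ℝ≥0∞) : ℝ≥0∞ :=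
  XSn j lam s f + Yn lam s f

/-! ### The resonance function -/

/-- The frequency weight `q(x) = |x|^{-1/4} (1+|x|)^{-3/4}`.  It is square integrable on `ℝ`, it
dominates `(1+|x|)⁻¹`, and its singularity at `0` gives a gain at small frequencies. -/
noncomputable def qr (x : ℝ) : ℝ := |x| ^ (-(1 / 4) : ℝ) * (1 + |x|) ^ (-(3 / 4) : ℝ)

/-- The size information on a frequency triple `k = k₁ + k₂` that the estimates use.  Here
`x, y, z = |k|, |k₁|, |k₂|`, `M` bounds all three (in practice it is the largest), and
`H = |k^{2j+1} - k₁^{2j+1} - k₂^{2j+1}|`.  At least two of the frequencies are `≥ M/2`, and whenever two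
of them are, the third one times `M^{2j}` is at most `2H`.  The bound `ux` is the one upper bound needed. -/
structure Cfg (j : ℕ) (x y z M H : ℝ) : Prop where
  x0 : 0 < x
  y0 : 0 < y
  z0 : 0 < z
  xM : x ≤ M
  yM : y ≤ M
  zM : z ≤ M
  xy : M ≤ 2 * x ∨ M ≤ 2 * y
  xz : M ≤ 2 * x ∨ M ≤ 2 * z
  yz : M ≤ 2 * y ∨ M ≤ 2 * z
  H0 : 0 ≤ H
  lx : M ≤ 2 * y → M ≤ 2 * z → x * M ^ (2 * j) ≤ 2 * H
  ly : M ≤ 2 * x → M ≤ 2 * z → y * M ^ (2 * j) ≤ 2 * H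
  lz : M ≤ 2 * x → M ≤ 2 * y → z * M ^ (2 * j) ≤ 2 * H
  ux : H ≤ (2 * j + 1) * x * M ^ (2 * j)

/-- Lower bound for the resonance function of two positive frequencies, from
`(a+b)^{n+2} = (a+b)^n (a² + 2ab + b²)` and `a^n, b^n ≤ (a+b)^n`. -/
lemma Hlow {a b : ℝ} (ha : 0 < a) (hb : 0 < b) {j : ℕ} (hj : 1 ≤ j) :
    2 * (a * b * (a + b) ^ (2 * j - 1)) ≤ (a + b) ^ (2 * j + 1) - a ^ (2 * j + 1) - b ^ (2 * j + 1) := by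
  obtain ⟨i, rfl⟩ := Nat.exists_eq_add_of_le hj
  have e1 : 2 * (1 + i) - 1 = 2 * i + 1 := by omega
  have e2 : 2 * (1 + i) + 1 = (2 * i + 1) + 2 := by omega
  rw [e1, e2, pow_add (a + b) (2 * i + 1) 2, pow_add a (2 * i + 1) 2, pow_add b (2 * i + 1) 2]
  have h1 : a ^ (2 * i + 1) ≤ (a + b) ^ (2 * i + 1) := by gcongr; linarith
  have h2 : b ^ (2 * i + 1) ≤ (a + b) ^ (2 * i + 1) := by gcongr; linarith
  nlinarith [mul_le_mul_of_nonneg_right h1 (sq_nonneg a), mul_le_mul_of_nonneg_right h2 (sq_nonneg b)]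

lemma powdiff {a b : ℝ} (ha : 0 < a) (hb : 0 < b) (n : ℕ) :
    (a + b) ^ (n + 1) - a ^ (n + 1) ≤ (n + 1) * b * (a + b) ^ n := by
  induction n with
  | zero => simp
  | succ n ih =>
    have h1 : a ^ (n + 1) ≤ (a + b) ^ (n + 1) := by gcongr; linarith
    have h2 := mul_le_mul_of_nonneg_left ih (by positivity : 0 ≤ a + b)
    rw [pow_succ _ (n + 1), pow_succ a (n + 1)]
    push_cast
    have : (a + b) * ((n + 1) * b * (a + b) ^ n) = (n + 1) * b * (a + b) ^ (n + 1) := by ring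
    nlinarith [mul_le_mul_of_nonneg_left h1 hb.le]

/-- Mean value type upper bound for the resonance function; the roles of `a` and `b` can be exchanged. -/
lemma Hup {a b : ℝ} (ha : 0 < a) (hb : 0 < b) (j : ℕ) :
    (a + b) ^ (2 * j + 1) - a ^ (2 * j + 1) - b ^ (2 * j + 1) ≤ (2 * j + 1) * b * (a + b) ^ (2 * j) := by
  have := powdiff ha hb (2 * j)
  push_cast at this
  have : 0 < b ^ (2 * j + 1) := by positivity
  linarith

/-- The case in which the largest frequency `a + b` is that of an input: up to signs, the
output is `a` and the other input is `b`. -/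
lemma cfg_core {a b : ℝ} (ha : 0 < a) (hb : 0 < b) {j : ℕ} (hj : 1 ≤ j) :
    Cfg j a b (a + b) (a + b) |(a + b) ^ (2 * j + 1) - a ^ (2 * j + 1) - b ^ (2 * j + 1)| := by
  have h1 := Hlow ha hb hj
  have h0 : 0 ≤ 2 * (a * b * (a + b) ^ (2 * j - 1)) := by positivity
  have h2 := Hup ha hb j
  have h3 := Hup hb ha j
  rw [abs_of_nonneg (h0.trans h1)]
  have e : (a + b) ^ (2 * j) = (a + b) ^ (2 * j - 1) * (a + b) := by
    rw [← pow_succ]; congr 1; omega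
  set P := (a + b) ^ (2 * j - 1)
  have hP : 0 < P := by positivity
  refine ⟨ha, hb, by positivity, by linarith, by linarith, le_rfl, ?_, ?_, ?_, h0.trans h1, ?_, ?_, ?_, ?_⟩
  · by_contra! h; linarith [h.1, h.2]
  · right; linarith
  · right; linarith
  · intro h _; rw [e]; nlinarith [mul_le_mul_of_nonneg_left h (by positivity : 0 ≤ a * P)]
  · intro h _; rw [e]; nlinarith [mul_le_mul_of_nonneg_left h (by positivity : 0 ≤ b * P)]
  · intro h h'; rw [e]
    have : (a + b) * (a + b) ≤ 4 * (a * b) := by nlinarith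
    nlinarith [mul_le_mul_of_nonneg_left this hP.le]
  · rw [add_comm b a] at h3; linarith

lemma Cfg.swap12 {j : ℕ} {x y z M H : ℝ} (h : Cfg j x y z M H) (hu : H ≤ (2 * j + 1) * y * M ^ (2 * j)) :
    Cfg j y x z M H :=
  ⟨h.y0, h.x0, h.z0, h.yM, h.xM, h.zM, h.xy.symm, h.yz, h.xz, h.H0, h.ly, h.lx,
    fun a b => h.lz b a, hu⟩

lemma Cfg.swap23 {j : ℕ} {x y z M H : ℝ} (h : Cfg j x y z M H) : Cfg j x z y M H :=
  ⟨h.x0, h.z0, h.y0, h.xM, h.zM, h.yM, h.xz, h.xy, h.yz.symm, h.H0, fun a b => h.lx b a, h.lz, h.ly, h.ux⟩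

/-- The case in which the largest frequency `a + b` is that of the output. -/
lemma cfg_core3 {a b : ℝ} (ha : 0 < a) (hb : 0 < b) {j : ℕ} (hj : 1 ≤ j) :
    Cfg j (a + b) a b (a + b) |(a + b) ^ (2 * j + 1) - a ^ (2 * j + 1) - b ^ (2 * j + 1)| := by
  have h := (cfg_core ha hb hj)
  refine (h.swap23.swap12 (h.ux.trans ?_))
  gcongr; linarith

lemma exists_cfg {k₁ k₂ : ℝ} {j : ℕ} (hj : 1 ≤ j) (h1 : k₁ ≠ 0) (h2 : k₂ ≠ 0) (h : k₁ + k₂ ≠ 0) :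
    ∃ M, Cfg j |k₁ + k₂| |k₁| |k₂| M |(k₁ + k₂) ^ (2 * j + 1) - k₁ ^ (2 * j + 1) - k₂ ^ (2 * j + 1)| := by
  have odd : Odd (2 * j + 1) := ⟨j, rfl⟩
  -- reduce to `k₁ + k₂ > 0`
  wlog hpos : 0 < k₁ + k₂ generalizing k₁ k₂
  · obtain ⟨M, hM⟩ := this (k₁ := -k₁) (k₂ := -k₂) (by simpa) (by simpa)
      (by intro h'; apply h; linarith)
      (by rcases lt_or_gt_of_ne h with h' | h' <;> [linarith; exact absurd h' hpos])
    refine ⟨M, ?_⟩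
    rw [← neg_add, abs_neg, abs_neg, abs_neg, odd.neg_pow, odd.neg_pow, odd.neg_pow] at hM
    convert hM using 1
    rw [← abs_neg]
    congr 1; ring
  wlog h12 : k₁ ≤ k₂ generalizing k₁ k₂
  · obtain ⟨M, hM⟩ := this h2 h1 (by rwa [add_comm]) (by rwa [add_comm]) (by linarith)
    refine ⟨M, ?_⟩
    have := hM.swap23
    rw [add_comm k₂ k₁] at this
    convert this using 2
    ring
  have k2 : 0 < k₂ := by linarith
  rcases lt_or_gt_of_ne h1 with n1 | p1
  · have c := cfg_core hpos (neg_pos.2 n1) hj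
    have e : k₁ + k₂ + -k₁ = k₂ := by ring
    rw [e] at c
    refine ⟨k₂, ?_⟩
    rw [abs_of_pos hpos, abs_of_neg n1, abs_of_pos k2]
    convert c using 1
    rw [odd.neg_pow, ← abs_neg]
    congr 1; ring
  · refine ⟨k₁ + k₂, ?_⟩
    rw [abs_of_pos hpos, abs_of_pos p1, abs_of_pos k2]
    exact cfg_core3 p1 k2 hj

/-! ### Powers of brackets, and the gain from a dominant output modulation -/

lemma rp_ge_pos {c N X e : ℝ} (hc : 0 < c) (hN : 0 < N) (h : c * N ≤ X) (he : 0 ≤ e) :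
    c ^ e * N ^ e ≤ X ^ e := by
  rw [← Real.mul_rpow hc.le hN.le]
  exact Real.rpow_le_rpow (by positivity) h he

lemma rp_ge_neg {c N X e : ℝ} (hc : 0 < c) (hN : 0 < N) (hX : 0 < X) (h : X ≤ c * N) (he : e ≤ 0) :
    c ^ e * N ^ e ≤ X ^ e := by
  rw [← Real.mul_rpow hc.le hN.le]
  exact Real.rpow_le_rpow_of_nonpos hX h he

lemma rp_le_neg {c N X e : ℝ} (hc : 0 < c) (hN : 0 < N) (h : c * N ≤ X) (he : e ≤ 0) :
    X ^ e ≤ c ^ e * N ^ e := by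
  rw [← Real.mul_rpow hc.le hN.le]
  exact Real.rpow_le_rpow_of_nonpos (by positivity) h he

lemma rp_le_pos {c N X e : ℝ} (hc : 0 < c) (hN : 0 < N) (hX : 0 ≤ X) (h : X ≤ c * N) (he : 0 ≤ e) :
    X ^ e ≤ c ^ e * N ^ e := by
  rw [← Real.mul_rpow hc.le hN.le]
  exact Real.rpow_le_rpow hX h he

/-- The last step of most case distinctions: `L ≲ A ≤ B ≲ R` gives `L ≲ R`.  Typically `A` and `B`
are powers of `1 + M` with comparable exponents. -/
lemma fin_chain {L R a b A B : ℝ} (hL : L ≤ a * A) (hA : A ≤ B) (hR : b * B ≤ R) (ha : 0 ≤ a)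
    (hb : 0 < b) : L ≤ (a / b) * R := by
  calc L ≤ a * A := hL
    _ ≤ a * B := by gcongr
    _ = (a / b) * (b * B) := by field_simp
    _ ≤ _ := by gcongr

/-- `X` lies between `max 1 x` and `1 + x`.  For `x ≥ 0` this is all that is used about the
Japanese bracket `X = ⟨x⟩`. -/
structure Br (x X : ℝ) : Prop where
  one : 1 ≤ X
  ge : x ≤ X
  le : X ≤ 1 + x

lemma Br.pos {x X : ℝ} (h : Br x X) : 0 < X := by linarith [h.one]

lemma qr_pos {a : ℝ} (ha : 0 < a) : 0 < qr a := by
  unfold qr; rw [abs_of_pos ha]; positivity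

lemma qr_ge {a : ℝ} (ha : 0 < a) : (1 + a)⁻¹ ≤ qr a := by
  unfold qr; rw [abs_of_pos ha]
  have : (1 + a) ^ (-(1 / 4) : ℝ) ≤ a ^ (-(1 / 4) : ℝ) :=
    Real.rpow_le_rpow_of_nonpos ha (by linarith) (by norm_num)
  calc (1 + a)⁻¹ = (1 + a) ^ (-(1 / 4) : ℝ) * (1 + a) ^ (-(3 / 4) : ℝ) := by
        rw [← Real.rpow_add (by positivity), ← Real.rpow_neg_one]; norm_num
    _ ≤ _ := by gcongr

lemma qr_ge' {a C : ℝ} (ha : 0 < a) (h : a ≤ C) :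
    (1 + C) ^ (-(3 / 4) : ℝ) * a ^ (-(1 / 4) : ℝ) ≤ qr a := by
  unfold qr; rw [abs_of_pos ha]
  have : (1 + C) ^ (-(3 / 4) : ℝ) ≤ (1 + a) ^ (-(3 / 4) : ℝ) :=
    Real.rpow_le_rpow_of_nonpos (by positivity) (by linarith) (by norm_num)
  rw [mul_comm]
  gcongr

/-- The lower bound for the resonance in terms of brackets: if the modulation bracket `U`
dominates `H`, then `x (1+M)^{2j} ≲ U`.  For `M < 1` this holds because `U ≥ 1`. -/
lemma key_low {j : ℕ} {x M H U : ℝ} (x0 : 0 < x) (xM : x ≤ M) (h : x * M ^ (2 * j) ≤ 2 * H)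
    (hU : H ≤ 4 * U) (h1 : 1 ≤ U) : x * (1 + M) ^ (2 * j) ≤ 8 * 4 ^ j * U := by
  have e4 : (2 : ℝ) ^ (2 * j) = 4 ^ j := by rw [pow_mul]; norm_num
  by_cases hM : 1 ≤ M
  · have : (1 + M) ^ (2 * j) ≤ 4 ^ j * M ^ (2 * j) := by
      rw [← e4, ← mul_pow]; gcongr; linarith
    calc x * (1 + M) ^ (2 * j) ≤ x * (4 ^ j * M ^ (2 * j)) := by gcongr
      _ = 4 ^ j * (x * M ^ (2 * j)) := by ring
      _ ≤ 4 ^ j * (8 * U) := mul_le_mul_of_nonneg_left (by linarith) (by positivity)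
      _ = _ := by ring
  · push Not at hM
    have : (1 + M) ^ (2 * j) ≤ 4 ^ j := by
      rw [← e4]
      exact pow_le_pow_left₀ (by linarith) (by linarith) _
    calc x * (1 + M) ^ (2 * j) ≤ 1 * 4 ^ j :=
          mul_le_mul (by linarith) this (pow_nonneg (by linarith) _) zero_le_one
      _ ≤ 8 * 4 ^ j * U := by nlinarith [pow_pos (by norm_num : (0:ℝ) < 4) j]

lemma pow2j (N : ℝ) (j : ℕ) : N ^ (2 * j) = N ^ (2 * (j : ℝ)) := by
  rw [← Real.rpow_natCast]; push_cast; rfl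

section
variable {j : ℕ} {s : ℝ}

/-- The output modulation dominates and is at least the output frequency `x` times `(1+M)^{2j}`.
With `q ≥ (1+M)⁻¹` the surplus is `(1+M)^{2j-1+2s} ≥ 1`. -/
lemma A1 (hs₁ : -(j : ℝ) + 1 / 2 ≤ s) (s0 : s ≤ 0) {x y z M X Y Z U Q : ℝ} {K : ℝ} (hK : 0 < K)
    (x0 : 0 < x) (y0 : 0 < y) (yM : y ≤ M) (zM : z ≤ M) (bX : Br x X) (bY : Br y Y) (bZ : Br z Z)
    (hQ : qr y ≤ Q) (hU : x * (1 + M) ^ (2 * j) ≤ K * U) :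
    x * X ^ s ≤ K * (Q * U * Y ^ s * Z ^ s) := by
  have N1 : 1 ≤ 1 + M := by linarith
  set N := 1 + M
  have hQN : N⁻¹ ≤ Q := le_trans (by gcongr; linarith) ((qr_ge y0).trans hQ)
  have hY : N ^ s ≤ Y ^ s := Real.rpow_le_rpow_of_nonpos bY.pos (bY.le.trans (by linarith)) s0
  have hZ : N ^ s ≤ Z ^ s := Real.rpow_le_rpow_of_nonpos bZ.pos (bZ.le.trans (by linarith)) s0
  have hX : X ^ s ≤ 1 := Real.rpow_le_one_of_one_le_of_nonpos bX.one s0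
  have N0 : 0 < N := by linarith
  have hU' : K⁻¹ * (x * N ^ (2 * (j : ℝ))) ≤ U := by
    rw [pow2j] at hU; rw [inv_mul_le_iff₀ hK]; exact hU
  have e : N⁻¹ * (K⁻¹ * (x * N ^ (2 * (j : ℝ)))) * N ^ s * N ^ s
      = K⁻¹ * x * N ^ (2 * (j : ℝ) - 1 + s + s) := by
    rw [Real.rpow_add N0, Real.rpow_add N0, Real.rpow_sub N0, Real.rpow_one]; field_simp
  have Q0 : 0 < Q := (qr_pos y0).trans_le hQ
  have Y0 := bY.pos
  have U0 : 0 ≤ U := le_trans (by positivity) hU'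
  have l : N⁻¹ * (K⁻¹ * (x * N ^ (2 * (j : ℝ)))) * N ^ s * N ^ s ≤ Q * U * Y ^ s * Z ^ s := by
    gcongr
  have one : 1 ≤ N ^ (2 * (j : ℝ) - 1 + s + s) := Real.one_le_rpow N1 (by linarith)
  calc x * X ^ s ≤ x * 1 := by gcongr
    _ ≤ x * N ^ (2 * (j : ℝ) - 1 + s + s) := by gcongr
    _ = K * (K⁻¹ * x * N ^ (2 * (j : ℝ) - 1 + s + s)) := by field_simp
    _ ≤ _ := by rw [← e]; gcongr

/-- The output modulation dominates and is at least the input frequency `y` times `(1+M)^{2j}`, while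
the output frequency is comparable to the largest one.  For `y ≥ 1` the bound `q ≥ (1+M)⁻¹` suffices; for
`y < 1` the singularity of `q` at `0` is needed. -/
lemma A2 (hj : 2 ≤ j) (hs₁ : -(j : ℝ) + 1 / 2 ≤ s) (s0 : s ≤ -1) (K : ℝ) (hK : 0 < K) :
    ∃ C : ℝ, 0 < C ∧ ∀ x y z M X Y Z U Q : ℝ, 0 < x → 0 < y → y ≤ M → z ≤ M → x ≤ M → M ≤ 2 * x →
    Br x X → Br y Y → Br z Z → qr y ≤ Q → 1 ≤ U → y * (1 + M) ^ (2 * j) ≤ K * U →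
    x * X ^ s ≤ C * (Q * U * Y ^ s * Z ^ s) := by
  have hj' : (2 : ℝ) ≤ j := by exact_mod_cast hj
  refine ⟨(1 / 4) ^ s / ((2 * K)⁻¹ * 2 ^ s) + (1 / 4) ^ s / ((2 : ℝ) ^ (-(3 / 4) : ℝ) * (K ^ (-(1 / 4) : ℝ)) * 2 ^ s),
    by positivity, ?_⟩
  intro x y z M X Y Z U Q x0 y0 yM zM xM hx bX bY bZ hQ U1 hU
  have N1 : 1 ≤ 1 + M := by linarith
  set N := 1 + M
  have N0 : 0 < N := by linarith
  have hQN : N⁻¹ ≤ Q := le_trans (by gcongr; linarith) ((qr_ge y0).trans hQ)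
  have Q0 : 0 < Q := (qr_pos y0).trans_le hQ
  have hZ : N ^ s ≤ Z ^ s := Real.rpow_le_rpow_of_nonpos bZ.pos (bZ.le.trans (by linarith)) (by linarith)
  have hX : X ^ s ≤ (1 / 4) ^ s * N ^ s :=
    rp_le_neg (by norm_num) N0 (by linarith [bX.one, bX.ge]) (by linarith)
  have hL : x * X ^ s ≤ (1 / 4) ^ s * N ^ (1 + s) := by
    rw [Real.rpow_add N0, Real.rpow_one]
    calc x * X ^ s ≤ N * ((1 / 4) ^ s * N ^ s) :=
          mul_le_mul (by linarith) hX (Real.rpow_nonneg bX.pos.le _) N0.le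
      _ = _ := by ring
  have Y0 := bY.pos
  have Z0 := bZ.pos
  rw [pow2j] at hU
  have R0 : 0 ≤ Q * U * Y ^ s * Z ^ s := by positivity
  rw [add_mul]
  by_cases y1 : 1 ≤ y
  · have hY : Y ≤ 2 * y := by linarith [bY.le]
    have hYN : Y ≤ N := by linarith [bY.le]
    have hU' : (2 * K)⁻¹ * (Y * N ^ (2 * (j : ℝ))) ≤ U := by
      rw [inv_mul_le_iff₀ (by positivity)]
      nlinarith [mul_le_mul_of_nonneg_right hY (by positivity : 0 ≤ N ^ (2 * (j : ℝ)))]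
    have hY1 : N ^ (1 + s) ≤ Y ^ (1 + s) := Real.rpow_le_rpow_of_nonpos Y0 hYN (by linarith)
    have := fin_chain (b := (2 * K)⁻¹ * 2 ^ s) (B := N ^ (2 * j + 2 * s)) hL
      (Real.rpow_le_rpow_of_exponent_le N1 (by linarith)) (R := Q * U * Y ^ s * Z ^ s) ?_
      (by positivity) (by positivity)
    · refine this.trans (le_add_of_nonneg_right (by positivity))
    · have two : (2 : ℝ) ^ s ≤ 1 := Real.rpow_le_one_of_one_le_of_nonpos (by norm_num) (by linarith)
      calc (2 * K)⁻¹ * 2 ^ s * N ^ (2 * j + 2 * s) ≤ (2 * K)⁻¹ * 1 * N ^ (2 * j + 2 * s) := by gcongr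
        _ = N⁻¹ * ((2 * K)⁻¹ * N ^ (2 * (j : ℝ))) * N ^ (1 + s) * N ^ s := by
          rw [show 2 * (j : ℝ) + 2 * s = 2 * (j : ℝ) + (1 + s) + s - 1 by ring, Real.rpow_sub N0,
            Real.rpow_add N0, Real.rpow_add N0, Real.rpow_one]; field_simp
        _ ≤ N⁻¹ * ((2 * K)⁻¹ * N ^ (2 * (j : ℝ))) * Y ^ (1 + s) * N ^ s := by gcongr
        _ = N⁻¹ * ((2 * K)⁻¹ * (Y * N ^ (2 * (j : ℝ)))) * Y ^ s * N ^ s := by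
          rw [Real.rpow_add Y0, Real.rpow_one]; ring
        _ ≤ _ := by gcongr
  · push Not at y1
    have hY : (2 : ℝ) ^ s ≤ Y ^ s := Real.rpow_le_rpow_of_nonpos Y0 (by linarith [bY.le]) (by linarith)
    have hq := (qr_ge' y0 y1.le).trans hQ
    norm_num only [one_add_one_eq_two] at hq
    have hU' : K ^ (-(1 / 4) : ℝ) * (y ^ (1 / 4 : ℝ) * N ^ ((1 / 2 : ℝ) * j)) ≤ U := by
      have h1 : K⁻¹ * (y * N ^ (2 * (j : ℝ))) ≤ U := by rw [inv_mul_le_iff₀ hK]; exact hU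
      have h2 : (K⁻¹ * (y * N ^ (2 * (j : ℝ)))) ^ (1 / 4 : ℝ) ≤ U ^ (1 / 4 : ℝ) := by gcongr
      have h3 : U ^ (1 / 4 : ℝ) ≤ U := by
        conv_rhs => rw [← Real.rpow_one U]
        exact Real.rpow_le_rpow_of_exponent_le U1 (by norm_num)
      refine le_trans (le_of_eq ?_) (h2.trans h3)
      rw [Real.mul_rpow (by positivity) (by positivity), Real.mul_rpow (by positivity) (by positivity),
        ← Real.rpow_mul N0.le, Real.inv_rpow hK.le, Real.rpow_neg hK.le]
      congr 3; ring
    have := fin_chain (b := (2 : ℝ) ^ (-(3 / 4) : ℝ) * (K ^ (-(1 / 4) : ℝ)) * 2 ^ s)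
      (B := N ^ ((1 / 2 : ℝ) * j + s)) hL
      (Real.rpow_le_rpow_of_exponent_le N1 (by linarith)) (R := Q * U * Y ^ s * Z ^ s) ?_
      (by positivity) (by positivity)
    · refine this.trans (le_add_of_nonneg_left (by positivity))
    · have ey : y ^ (-(1 / 4) : ℝ) * y ^ (1 / 4 : ℝ) = 1 := by
        rw [← Real.rpow_add y0]; norm_num
      calc (2 : ℝ) ^ (-(3 / 4) : ℝ) * (K ^ (-(1 / 4) : ℝ)) * 2 ^ s * N ^ ((1 / 2 : ℝ) * j + s)
          = (2 : ℝ) ^ (-(3 / 4) : ℝ) * (K ^ (-(1 / 4) : ℝ)) * 2 ^ s * (y ^ (-(1 / 4) : ℝ) * y ^ (1 / 4 : ℝ)) * N ^ ((1 / 2 : ℝ) * j + s) := by rw [ey]; ring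
        _ = ((2 : ℝ) ^ (-(3 / 4) : ℝ) * y ^ (-(1 / 4) : ℝ)) * (K ^ (-(1 / 4) : ℝ) * (y ^ (1 / 4 : ℝ) * N ^ ((1 / 2 : ℝ) * j))) * 2 ^ s * N ^ s := by
          rw [Real.rpow_add N0]; ring
        _ ≤ _ := by
          gcongr
end

/-! ### Dominant input modulation in `D₁`, `D₅`, `D₄` -/

section
variable {j : ℕ} {s : ℝ}

lemma xX_le (s0 : s ≤ 0) {c x X M : ℝ} (hc : 0 < c) (x0 : 0 < x) (xM : x ≤ M) (bX : Br x X) (h : c * (1 + M) ≤ X) :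
    x * X ^ s ≤ c ^ s * (1 + M) ^ (1 + s) := by
  have N0 : 0 < 1 + M := by linarith
  have hX : X ^ s ≤ c ^ s * (1 + M) ^ s := rp_le_neg hc N0 h s0
  rw [Real.rpow_add N0, Real.rpow_one]
  calc x * X ^ s ≤ (1 + M) * (c ^ s * (1 + M) ^ s) :=
        mul_le_mul (by linarith) hX (Real.rpow_nonneg bX.pos.le _) N0.le
    _ = _ := by ring

lemma Br.quarter {x X M : ℝ} (h : Br x X) (hM : M ≤ 2 * x) : 1 / 4 * (1 + M) ≤ X := by
  linarith [h.one, h.ge]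

lemma xX_le_one (s0 : s ≤ -1) {x X : ℝ} (bX : Br x X) : x * X ^ s ≤ 1 := by
  have X0 := bX.pos
  calc x * X ^ s ≤ X * X ^ s := by gcongr; exact bX.ge
    _ = X ^ (1 + s) := by rw [Real.rpow_add X0, Real.rpow_one]
    _ ≤ 1 := Real.rpow_le_one_of_one_le_of_nonpos bX.one (by linarith)

lemma Ns_le (s0 : s ≤ 0) {z Z M : ℝ} (bZ : Br z Z) (zM : z ≤ M) : (1 + M) ^ s ≤ Z ^ s :=
  Real.rpow_le_rpow_of_nonpos bZ.pos (bZ.le.trans (by linarith)) s0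

/-- When all frequencies are bounded, so are all frequency weights from both sides. -/
lemma bdd_case (s0 : s ≤ -1) (C₁ : ℝ) (hC₁ : 1 ≤ C₁) :
    ∃ C : ℝ, 0 < C ∧ ∀ x y z M X Y Z Q : ℝ, 0 < y → y ≤ M → z ≤ M → 1 + M ≤ C₁ →
    Br x X → Br y Y → Br z Z → qr y ≤ Q → x * X ^ s ≤ C * (Q * (Y ^ s * Z ^ s)) := by
  refine ⟨1 / (C₁⁻¹ * (C₁ ^ s * C₁ ^ s)), by positivity, ?_⟩
  intro x y z M X Y Z Q y0 yM zM hC bX bY bZ hQ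
  have N0 : 0 < 1 + M := by linarith
  have hQ' : C₁⁻¹ ≤ Q := le_trans (by gcongr; linarith) ((qr_ge y0).trans hQ)
  have h : C₁ ^ s ≤ (1 + M) ^ s := Real.rpow_le_rpow_of_nonpos N0 hC (by linarith)
  have hY := h.trans (Ns_le (by linarith) bY yM)
  have hZ := h.trans (Ns_le (by linarith) bZ zM)
  have := xX_le_one s0 bX
  rw [div_mul_eq_mul_div, le_div_iff₀ (by positivity), one_mul]
  have Q0 : 0 < Q := (qr_pos y0).trans_le hQ
  have Y0 := bY.pos
  calc x * X ^ s * (C₁⁻¹ * (C₁ ^ s * C₁ ^ s)) ≤ 1 * (C₁⁻¹ * (C₁ ^ s * C₁ ^ s)) := by gcongr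
    _ = C₁⁻¹ * (C₁ ^ s * C₁ ^ s) := one_mul _
    _ ≤ _ := by gcongr

/-- A bounded frequency `a` with a large modulation `V ≳ a (1+M)^{2j}`: since `q(a)` is of size at
least `a^{-1/4}`, a power `V^p` with `p ≥ 1/(2j)` recovers a full factor `1 + M`. -/
lemma N_le (hj : 2 ≤ j) (p : ℝ) (hp : 1 / (2 * (j : ℝ)) ≤ p) (C₁ K : ℝ) (hC₁ : 0 < C₁) (hK : 0 < K) :
    ∃ C : ℝ, 0 < C ∧ ∀ a M V Q : ℝ, 0 < a → a ≤ M → a ≤ C₁ → 1 ≤ V → qr a ≤ Q →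
      a * (1 + M) ^ (2 * j) ≤ K * V → 1 + M ≤ C * (Q * V ^ p) := by
  have hj' : (2 : ℝ) ≤ j := by exact_mod_cast hj
  have hr : 1 / (2 * (j : ℝ)) ≤ 1 / 4 := by
    rw [div_le_div_iff₀ (by positivity) (by norm_num)]; linarith
  set r := 1 / (2 * (j : ℝ)) with hrd
  have r0 : 0 < r := by positivity
  refine ⟨1 / ((1 + C₁) ^ (-(3 / 4) : ℝ) * C₁ ^ (r - 1 / 4) * K⁻¹ ^ r), by positivity, ?_⟩
  intro a M V Q a0 aM aC V1 hQ h
  have N0 : 0 < 1 + M := by linarith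
  rw [pow2j] at h
  have h1 : K⁻¹ * (a * (1 + M) ^ (2 * (j : ℝ))) ≤ V := by rw [inv_mul_le_iff₀ hK]; exact h
  have h2 : (K⁻¹ * (a * (1 + M) ^ (2 * (j : ℝ)))) ^ r ≤ V ^ p :=
    (Real.rpow_le_rpow (by positivity) h1 r0.le).trans (Real.rpow_le_rpow_of_exponent_le V1 hp)
  rw [Real.mul_rpow (by positivity) (by positivity), Real.mul_rpow (by positivity) (by positivity),
        ← Real.rpow_mul N0.le, show 2 * (j : ℝ) * r = 1 by rw [hrd]; field_simp, Real.rpow_one] at h2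
  have h3 := (qr_ge' a0 aC).trans hQ
  have h4 : C₁ ^ (r - 1 / 4) ≤ a ^ (r - 1 / 4) :=
    Real.rpow_le_rpow_of_nonpos a0 aC (by linarith)
  have h5 : a ^ (r - 1 / 4) = a ^ (-(1 / 4) : ℝ) * a ^ r := by
    rw [← Real.rpow_add a0]; congr 1; ring
  have Q0 : 0 < Q := (qr_pos a0).trans_le hQ
  rw [div_mul_eq_mul_div, le_div_iff₀ (by positivity), one_mul]
  calc (1 + M) * ((1 + C₁) ^ (-(3 / 4) : ℝ) * C₁ ^ (r - 1 / 4) * K⁻¹ ^ r)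
      ≤ (1 + M) * ((1 + C₁) ^ (-(3 / 4) : ℝ) * a ^ (r - 1 / 4) * K⁻¹ ^ r) := by gcongr
    _ = ((1 + C₁) ^ (-(3 / 4) : ℝ) * a ^ (-(1 / 4) : ℝ)) * (K⁻¹ ^ r * (a ^ r * (1 + M))) := by
      rw [h5]; ring
    _ ≤ _ := by gcongr

/-- The output modulation `u` dominates the resonance. -/
lemma caseA (hj : 2 ≤ j) (hs₁ : -(j : ℝ) + 1 / 2 ≤ s) (s0 : s ≤ -1) :
    ∃ C : ℝ, 0 < C ∧ ∀ x y z M H X Y Z u U Q : ℝ, Cfg j x y z M H →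
    Br x X → Br y Y → Br z Z → Br u U → H ≤ 4 * u → qr x ≤ Q → qr y ≤ Q → qr z ≤ Q →
    x * X ^ s ≤ C * (Q * U * Y ^ s * Z ^ s) := by
  obtain ⟨C, hC, h⟩ := A2 hj hs₁ s0 (8 * 4 ^ j) (by positivity)
  refine ⟨8 * 4 ^ j + C, by positivity, ?_⟩
  intro x y z M H X Y Z u U Q c bX bY bZ bU hu qx qy qz
  have hU : H ≤ 4 * U := by linarith [bU.ge]
  have Q0 : 0 < Q := (qr_pos c.y0).trans_le qy
  have := bY.pos
  have := bZ.pos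
  have := bU.pos
  have R0 : 0 ≤ Q * U * Y ^ s * Z ^ s := by positivity
  rw [add_mul]
  by_cases hx : M ≤ 2 * x
  · refine le_trans ?_ (le_add_of_nonneg_left (by positivity))
    rcases c.yz with hy | hz
    · have := h x z y M X Z Y U Q c.x0 c.z0 c.zM c.yM c.xM hx bX bZ bY qz bU.one
        (key_low c.z0 c.zM (c.lz hx hy) hU bU.one)
      rw [show Q * U * Y ^ s * Z ^ s = Q * U * Z ^ s * Y ^ s by ring]; exact this
    · exact h x y z M X Y Z U Q c.x0 c.y0 c.yM c.zM c.xM hx bX bY bZ qy bU.one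
        (key_low c.y0 c.yM (c.ly hx hz) hU bU.one)
  · have hy := c.xy.resolve_left hx
    have hz := c.xz.resolve_left hx
    refine le_trans ?_ (le_add_of_nonneg_right (by positivity))
    exact A1 hs₁ (by linarith) (by positivity) c.x0 c.y0 c.yM c.zM bX bY bZ qy
      (key_low c.x0 c.xM (c.lx hy hz) hU bU.one)

/-- The modulation `v` of the first input dominates the resonance, and this input lies in `D₁`.
Then `V ≲ y^{2j}`, so the frequency that is multiplied by `M^{2j}` in the resonance is bounded. -/
lemma caseS1 (hj : 2 ≤ j) (hs₁ : -(j : ℝ) + 1 / 2 ≤ s) (s0 : s ≤ -1) :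
    ∃ C : ℝ, 0 < C ∧ ∀ x y z M H X Y Z v V Q : ℝ, Cfg j x y z M H →
    Br x X → Br y Y → Br z Z → Br v V → H ≤ 4 * v → qr x ≤ Q → qr y ≤ Q → qr z ≤ Q →
    1 ≤ y → v ≤ 2 * (2 * (j : ℝ) + 1) / 3 * y ^ (2 * j) →
    x * X ^ s ≤ C * (Q * (Y ^ s * V ^ ((2 * (j : ℝ) - 1) / (2 * (j : ℝ)))) * Z ^ s) := by
  have hj' : (2 : ℝ) ≤ j := by exact_mod_cast hj
  set b := (2 * (j : ℝ) - 1) / (2 * (j : ℝ)) with hb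
  have b1 : 1 / (2 * (j : ℝ)) ≤ b := by
    rw [hb]; gcongr; linarith
  have b2 : b = 1 - 1 / (2 * (j : ℝ)) := by rw [hb]; field_simp
  have b0 : 0 < b := lt_of_lt_of_le (by positivity) b1
  have b3 : 0 ≤ 1 - b := by rw [b2]; simp
  have b4 : 2 * (j : ℝ) * b = 2 * j - 1 := by rw [hb]; field_simp
  set K : ℝ := 8 * 4 ^ j with hK
  set C₁ : ℝ := K * (1 + 2 * (2 * (j : ℝ) + 1)) with hC₁
  have K1 : 1 ≤ K := by
    have : (1 : ℝ) ≤ 4 ^ j := one_le_pow₀ (by norm_num)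
    rw [hK]; linarith
  have C1 : 1 ≤ C₁ := by
    rw [hC₁]; nlinarith
  obtain ⟨Ca, hCa, ha⟩ := bdd_case (s := s) s0 (C₁ * C₁ ^ (2 * j)) (by
    have : 1 ≤ C₁ ^ (2 * j) := one_le_pow₀ C1
    nlinarith)
  obtain ⟨Cb, hCb, hb⟩ := N_le hj b b1 C₁ K (by linarith) (by linarith)
  -- One constant for each sub-case: the small frequency is `y` (all frequencies are then bounded), `z`, or `x`.
  refine ⟨Ca + (1 / 4) ^ s * Cb / (1 + C₁) ^ s + C₁ ^ (1 - b) / ((1 + C₁)⁻¹ * K⁻¹ ^ b), by positivity, ?_⟩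
  intro x y z M H X Y Z v V Q c bX bY bZ bV hv qx qy qz y1 hvy
  have hV : H ≤ 4 * V := by linarith [bV.ge]
  have Q0 : 0 < Q := (qr_pos c.y0).trans_le qy
  have Y0 := bY.pos
  have Z0 := bZ.pos
  have V0 := bV.pos
  have y0 := c.y0
  have x0 := c.x0
  have N1 : 1 ≤ 1 + M := by linarith [c.yM]
  have N0 : 0 < 1 + M := by linarith
  have R0 : 0 ≤ Q * (Y ^ s * V ^ b) * Z ^ s := by positivity
  have V1 : 1 ≤ V ^ b := Real.one_le_rpow bV.one b0.le
  have hVy : K * V ≤ C₁ * y ^ (2 * j) := by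
    have : 1 ≤ y ^ (2 * j) := one_le_pow₀ y1
    have h2 := bV.le
    have h3 : V ≤ (1 + 2 * (2 * (j : ℝ) + 1)) * y ^ (2 * j) := by nlinarith
    have h4 := mul_le_mul_of_nonneg_left h3 (by linarith : 0 ≤ K)
    rw [hC₁]
    exact h4.trans_eq (mul_assoc _ _ _).symm
  have hyN : y ^ (2 * j) ≤ (1 + M) ^ (2 * j) := by
    gcongr; linarith [c.yM]
  -- A frequency `a` whose product with `(1+M)^{2j}` is bounded by the modulation is itself bounded, as `V ≲ y^{2j}` in `D₁`.
  have small : ∀ a, a * (1 + M) ^ (2 * j) ≤ K * V → a ≤ C₁ := by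
    intro a h
    have : a * (1 + M) ^ (2 * j) ≤ C₁ * (1 + M) ^ (2 * j) := by
      refine (h.trans hVy).trans ?_
      gcongr
    exact le_of_mul_le_mul_right this (by positivity)
  rw [add_mul, add_mul]
  by_cases hx : M ≤ 2 * x
  · by_cases hy : M ≤ 2 * y
    · have kz := key_low c.z0 c.zM (c.lz hx hy) hV bV.one
      have hz := small z kz
      have h1 := hb z M V Q c.z0 c.zM hz bV.one qz kz
      have h2 := xX_le (s := s) (by linarith) (by norm_num) c.x0 c.xM bX (bX.quarter hx)
      have h3 := Ns_le (s := s) (by linarith) bY c.yM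
      have h4 : (1 + C₁) ^ s ≤ Z ^ s := Ns_le (s := s) (by linarith) bZ hz
      have : x * X ^ s ≤ (1 / 4) ^ s * Cb / (1 + C₁) ^ s * (Q * (Y ^ s * V ^ b) * Z ^ s) := by
        rw [Real.rpow_add N0, Real.rpow_one] at h2
        calc x * X ^ s ≤ (1 / 4) ^ s * ((1 + M) * (1 + M) ^ s) := h2
          _ ≤ (1 / 4) ^ s * ((Cb * (Q * V ^ b)) * Y ^ s) := by gcongr
          _ = (1 / 4) ^ s * Cb / (1 + C₁) ^ s * (Q * (Y ^ s * V ^ b) * (1 + C₁) ^ s) := by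
            field_simp
          _ ≤ _ := by gcongr
      have p1 : 0 ≤ Ca * (Q * (Y ^ s * V ^ b) * Z ^ s) := by positivity
      have p2 : 0 ≤ C₁ ^ (1 - b) / ((1 + C₁)⁻¹ * K⁻¹ ^ b) * (Q * (Y ^ s * V ^ b) * Z ^ s) := by positivity
      linarith
    · have hz := c.yz.resolve_left hy
      have ky := key_low c.y0 c.yM (c.ly hx hz) hV bV.one
      have hyC := small y ky
      have hN : 1 + M ≤ C₁ * C₁ ^ (2 * j) := by
        have h1 : (1 + M) ^ (2 * j) ≤ C₁ * y ^ (2 * j) := by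
          refine le_trans ?_ (ky.trans hVy)
          exact le_mul_of_one_le_left (by positivity) y1
        have h2 : y ^ (2 * j) ≤ C₁ ^ (2 * j) := by gcongr
        have h3 : 1 + M ≤ (1 + M) ^ (2 * j) := le_self_pow₀ N1 (by omega)
        nlinarith
      have h1 := ha x y z M X Y Z Q c.y0 c.yM c.zM hN bX bY bZ qy
      have : Q * (Y ^ s * Z ^ s) ≤ Q * (Y ^ s * V ^ b) * Z ^ s := by
        calc Q * (Y ^ s * Z ^ s) = Q * (Y ^ s * 1) * Z ^ s := by ring
          _ ≤ _ := by gcongr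
      have p1 : Ca * (Q * (Y ^ s * Z ^ s)) ≤ Ca * (Q * (Y ^ s * V ^ b) * Z ^ s) := by gcongr
      have p2 : 0 ≤ C₁ ^ (1 - b) / ((1 + C₁)⁻¹ * K⁻¹ ^ b) * (Q * (Y ^ s * V ^ b) * Z ^ s) := by positivity
      have p3 : 0 ≤ (1 / 4) ^ s * Cb / (1 + C₁) ^ s * (Q * (Y ^ s * V ^ b) * Z ^ s) := by positivity
      linarith
  · have hy := c.xy.resolve_left hx
    have hz := c.xz.resolve_left hx
    have kx := key_low c.x0 c.xM (c.lx hy hz) hV bV.one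
    have hxC := small x kx
    have hQ : (1 + C₁)⁻¹ ≤ Q := le_trans (by gcongr) ((qr_ge c.x0).trans qx)
    have hYs := Ns_le (s := s) (by linarith) bY c.yM
    have hZs := Ns_le (s := s) (by linarith) bZ c.zM
    rw [pow2j] at kx
    have kV : K⁻¹ * (x * (1 + M) ^ (2 * (j : ℝ))) ≤ V := by
      rw [inv_mul_le_iff₀ (by positivity)]; exact kx
    have kVb : K⁻¹ ^ b * (x ^ b * (1 + M) ^ (2 * (j : ℝ) - 1)) ≤ V ^ b := by
      have := Real.rpow_le_rpow (by positivity) kV b0.le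
      rwa [Real.mul_rpow (by positivity) (by positivity), Real.mul_rpow (by positivity) (by positivity),
        ← Real.rpow_mul N0.le, b4] at this
    have hX : X ^ s ≤ 1 := Real.rpow_le_one_of_one_le_of_nonpos bX.one (by linarith)
    have ex : x = x ^ (1 - b) * x ^ b := by
      rw [← Real.rpow_add c.x0]; simp
    have hL : x * X ^ s ≤ C₁ ^ (1 - b) * x ^ b := by
      calc x * X ^ s ≤ x * 1 := by gcongr
        _ = x ^ (1 - b) * x ^ b := by rw [mul_one]; exact ex
        _ ≤ _ := by gcongr
    have one : 1 ≤ (1 + M) ^ (2 * (j : ℝ) - 1 + s + s) := Real.one_le_rpow N1 (by linarith)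
    have := fin_chain (b := (1 + C₁)⁻¹ * K⁻¹ ^ b) (R := Q * (Y ^ s * V ^ b) * Z ^ s)
      (B := x ^ b * (1 + M) ^ (2 * (j : ℝ) - 1 + s + s)) hL
      (le_mul_of_one_le_right (by positivity) one) ?_ (by positivity) (by positivity)
    · have p1 : 0 ≤ Ca * (Q * (Y ^ s * V ^ b) * Z ^ s) := by positivity
      have p3 : 0 ≤ (1 / 4) ^ s * Cb / (1 + C₁) ^ s * (Q * (Y ^ s * V ^ b) * Z ^ s) := by positivity
      linarith
    · calc (1 + C₁)⁻¹ * K⁻¹ ^ b * (x ^ b * (1 + M) ^ (2 * (j : ℝ) - 1 + s + s))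
          = (1 + C₁)⁻¹ * ((1 + M) ^ s * (K⁻¹ ^ b * (x ^ b * (1 + M) ^ (2 * (j : ℝ) - 1)))) * (1 + M) ^ s := by
            rw [Real.rpow_add N0, Real.rpow_add N0]; ring
        _ ≤ _ := by gcongr

/-- The modulation of the first input dominates, and this input lies in `D₅`; then all
frequencies are bounded. -/
lemma caseS5 (hj : 2 ≤ j) (s0 : s ≤ -1) :
    ∃ C : ℝ, 0 < C ∧ ∀ x y z M H X Y Z v V Q : ℝ, Cfg j x y z M H →
    Br x X → Br y Y → Br z Z → Br v V → H ≤ 4 * v → qr y ≤ Q →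
    y ≤ 1 → v ≤ 2 * (2 * (j : ℝ) + 1) * y ^ (2 * j + 1) →
    x * X ^ s ≤ C * (Q * (Y ^ s * V ^ ((2 * (j : ℝ) - 1) / (2 * (j : ℝ)))) * Z ^ s) := by
  have hj' : (2 : ℝ) ≤ j := by exact_mod_cast hj
  set b := (2 * (j : ℝ) - 1) / (2 * (j : ℝ)) with hb
  have b0 : 0 < b := by rw [hb]; apply div_pos <;> linarith
  set C₁ : ℝ := 3 + 16 * (2 * (j : ℝ) + 1) with hC₁
  have C1 : 1 ≤ C₁ := by rw [hC₁]; linarith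
  obtain ⟨Ca, hCa, ha⟩ := bdd_case (s := s) s0 C₁ C1
  refine ⟨Ca, hCa, ?_⟩
  intro x y z M H X Y Z v V Q c bX bY bZ bV hv qy y1 hvy
  have y0 := c.y0
  have hN : 1 + M ≤ C₁ := by
    by_cases hy : M ≤ 2 * y
    · rw [hC₁]; linarith
    · have hx := c.xy.resolve_right hy
      have hz := c.yz.resolve_left hy
      have := c.ly hx hz
      have h1 : y * M ^ (2 * j) ≤ y * (16 * (2 * (j : ℝ) + 1)) := by
        have : y ^ (2 * j + 1) ≤ y := pow_le_of_le_one y0.le y1 (by omega)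
        nlinarith
      have h2 := le_of_mul_le_mul_left h1 y0
      by_cases hM : 1 ≤ M
      · have : M ≤ M ^ (2 * j) := le_self_pow₀ hM (by omega)
        rw [hC₁]; linarith
      · rw [hC₁]; linarith
  have h1 := ha x y z M X Y Z Q c.y0 c.yM c.zM hN bX bY bZ qy
  have Q0 : 0 < Q := (qr_pos c.y0).trans_le qy
  have Y0 := bY.pos
  have Z0 := bZ.pos
  have V1 : 1 ≤ V ^ b := Real.one_le_rpow bV.one b0.le
  refine h1.trans ?_
  gcongr Ca * ?_
  calc Q * (Y ^ s * Z ^ s) = Q * (Y ^ s * 1) * Z ^ s := by ring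
          _ ≤ _ := by gcongr

/-- The modulation of the first input dominates, and this input lies in `D₄`.  Either all
frequencies are bounded, or `y` is the small one and `N_le` applies. -/
lemma caseS4 (hj : 2 ≤ j) (hs₁ : -(j : ℝ) + 1 / 2 ≤ s) (s0 : s ≤ -1) :
    ∃ C : ℝ, 0 < C ∧ ∀ x y z M H X Y Z v V Q : ℝ, Cfg j x y z M H →
    Br x X → Br y Y → Br z Z → Br v V → H ≤ 4 * v → qr y ≤ Q → y ≤ 1 →
    x * X ^ s ≤ C * (Q * (Y ^ (-s / (j : ℝ) - 1) * V ^ (s / (j : ℝ) + 1)) * Z ^ s) := by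
  have hj' : (2 : ℝ) ≤ j := by exact_mod_cast hj
  have hp : 1 / (2 * (j : ℝ)) ≤ s / (j : ℝ) + 1 := by
    rw [div_add_one (by positivity), div_le_div_iff₀ (by positivity) (by positivity)]
    nlinarith
  set p := s / (j : ℝ) + 1 with hpd
  have p0 : 0 < p := lt_of_lt_of_le (by positivity) hp
  have ep : -s / (j : ℝ) - 1 = -p := by rw [hpd]; ring
  rw [ep]
  obtain ⟨Ca, hCa, ha⟩ := bdd_case (s := s) s0 3 (by norm_num)
  obtain ⟨Cb, hCb, hb⟩ := N_le hj p hp 1 (8 * 4 ^ j) (by norm_num) (by positivity)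
  refine ⟨Ca / 2 ^ (-p) + (1 / 4) ^ s * Cb / 2 ^ (-p), by positivity, ?_⟩
  intro x y z M H X Y Z v V Q c bX bY bZ bV hv qy y1
  have hV : H ≤ 4 * V := by linarith [bV.ge]
  have Q0 : 0 < Q := (qr_pos c.y0).trans_le qy
  have Y0 := bY.pos
  have Z0 := bZ.pos
  have V0 := bV.pos
  have N0 : 0 < 1 + M := by linarith [c.yM, c.y0]
  have V1 : 1 ≤ V ^ p := Real.one_le_rpow bV.one p0.le
  have hY : (2 : ℝ) ^ (-p) ≤ Y ^ (-p) :=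
    Real.rpow_le_rpow_of_nonpos Y0 (by linarith [bY.le]) (by linarith)
  have R0 : 0 ≤ Q * (Y ^ (-p) * V ^ p) * Z ^ s := by positivity
  rw [add_mul]
  by_cases hy : M ≤ 2 * y
  · refine le_trans ?_ (le_add_of_nonneg_right (by positivity))
    have h1 := ha x y z M X Y Z Q c.y0 c.yM c.zM (by linarith) bX bY bZ qy
    have hYs : Y ^ s ≤ 1 := Real.rpow_le_one_of_one_le_of_nonpos bY.one (by linarith)
    calc x * X ^ s ≤ Ca * (Q * (Y ^ s * Z ^ s)) := h1
      _ ≤ Ca * (Q * (1 * Z ^ s)) := by gcongr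
      _ = Ca / 2 ^ (-p) * (Q * (2 ^ (-p) * 1) * Z ^ s) := by field_simp
      _ ≤ _ := by gcongr
  · have hx := c.xy.resolve_right hy
    have hz := c.yz.resolve_left hy
    refine le_trans ?_ (le_add_of_nonneg_left (by positivity))
    have ky := key_low c.y0 c.yM (c.ly hx hz) hV bV.one
    have h1 := hb y M V Q c.y0 c.yM y1 bV.one qy ky
    have h2 := xX_le (s := s) (by linarith) (by norm_num) c.x0 c.xM bX (bX.quarter hx)
    have h3 := Ns_le (s := s) (by linarith) bZ c.zM
    rw [Real.rpow_add N0, Real.rpow_one] at h2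
    calc x * X ^ s ≤ (1 / 4) ^ s * ((1 + M) * (1 + M) ^ s) := h2
      _ ≤ (1 / 4) ^ s * ((Cb * (Q * V ^ p)) * Z ^ s) := by gcongr
      _ = (1 / 4) ^ s * Cb / 2 ^ (-p) * (Q * (2 ^ (-p) * V ^ p) * Z ^ s) := by
        field_simp
      _ ≤ _ := by gcongr
end

/-! ### Dominant input modulation in `D₂`, `D₃` -/

section
variable {j : ℕ} {s : ℝ}

/-- If the modulation of the first input dominates and this input lies in `D₂`, then its frequency
is comparable to `1 + M`.  (The lower bound on the modulation in `D₂` plays no role.) -/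
lemma D2_y (hj : 2 ≤ j) : ∃ K : ℝ, 1 ≤ K ∧ ∀ x y z M H v V : ℝ, Cfg j x y z M H → Br v V → H ≤ 4 * v →
    1 ≤ y → v ≤ 2 * (2 * (j : ℝ) + 1) * y ^ (2 * j + 1) → 1 + M ≤ K * y := by
  have h4 : (1 : ℝ) ≤ 4 ^ j := one_le_pow₀ (by norm_num)
  set K : ℝ := 8 * 4 ^ j * (1 + 2 * (2 * (j : ℝ) + 1)) with hK
  have j0 : (0 : ℝ) ≤ j := Nat.cast_nonneg j
  have K8 : 8 ≤ K := by rw [hK]; nlinarith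
  clear_value K
  refine ⟨K, by linarith, ?_⟩
  intro x y z M H v V c bV hv y1 hvy
  by_cases hy : M ≤ 2 * y
  · nlinarith
  · have hx := c.xy.resolve_right hy
    have hz := c.yz.resolve_left hy
    have hV : H ≤ 4 * V := by linarith [bV.ge]
    have ky := key_low c.y0 c.yM (c.ly hx hz) hV bV.one
    have h1 : 1 ≤ y ^ (2 * j + 1) := one_le_pow₀ y1
    have h2 : V ≤ (1 + 2 * (2 * (j : ℝ) + 1)) * y ^ (2 * j + 1) := by nlinarith [bV.le]
    have h3 : y * (1 + M) ^ (2 * j) ≤ y * (K * y ^ (2 * j)) := by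
      calc _ ≤ 8 * 4 ^ j * V := ky
        _ ≤ 8 * 4 ^ j * ((1 + 2 * (2 * (j : ℝ) + 1)) * y ^ (2 * j + 1)) := by gcongr
        _ = _ := by rw [hK]; ring
    have h5 := le_of_mul_le_mul_left h3 c.y0
    have h6 : (1 + M) ^ (2 * j) ≤ (K * y) ^ (2 * j) := by
      rw [mul_pow]
      refine h5.trans ?_
      have : K ≤ K ^ (2 * j) := le_self_pow₀ (by linarith) (by omega)
      have := c.y0
      gcongr
    exact le_of_pow_le_pow_left₀ (by omega) (by have := c.y0; positivity) h6

/-- The first input has dominant modulation and lies in `D₂`, and the second modulation is at most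
of size `(1+M)^{2j}`.  No frequency weight `Q` is required.  As `s + 1 ≤ 0`, an upper bound on `V` is needed;
this is where the assumption on `w` enters. -/
lemma caseB2 (hj : 2 ≤ j) (hs₁ : -(j : ℝ) + 1 / 2 ≤ s) (s0 : s ≤ -1) :
    ∃ C : ℝ, 0 < C ∧ ∀ x y z M H X Y Z v w V : ℝ, Cfg j x y z M H →
    Br x X → Br y Y → Br z Z → Br v V → H ≤ 4 * v → v ≤ 5 / 4 * H + w →
    w ≤ 2 * (2 * (j : ℝ) + 1) * (1 + M) ^ (2 * j) →
    1 ≤ y → v ≤ 2 * (2 * (j : ℝ) + 1) * y ^ (2 * j + 1) →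
    x * X ^ s ≤ C * (Y ^ ((1 - 2 * (j : ℝ)) * s - 1) * V ^ (s + 1) * Z ^ s) := by
  have hj' : (2 : ℝ) ≤ j := by exact_mod_cast hj
  obtain ⟨K, K1, hK⟩ := D2_y hj
  set e := (1 - 2 * (j : ℝ)) * s - 1 with he
  have e0 : 0 ≤ e := by rw [he]; nlinarith
  set n := 2 * (j : ℝ) + 1 with hn
  have n0 : 0 < n := by positivity
  refine ⟨(1 / 4) ^ s / (K⁻¹ ^ e * (1 + 2 * n) ^ (s + 1)) + 1 / (K⁻¹ ^ e * (1 + 4 * n) ^ (s + 1)),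
    by positivity, ?_⟩
  intro x y z M H X Y Z v w V c bX bY bZ bV hv hv2 hw y1 hvy
  have y0 := c.y0
  have hyN := hK x y z M H v V c bV hv y1 hvy
  have N0 : 0 < 1 + M := by linarith [c.yM]
  have N1 : 1 ≤ 1 + M := by linarith [c.yM]
  have Y0 := bY.pos
  have Z0 := bZ.pos
  have V0 := bV.pos
  have X0 := bX.pos
  have hYe : K⁻¹ ^ e * (1 + M) ^ e ≤ Y ^ e := by
    refine rp_ge_pos (by positivity) N0 ?_ e0
    rw [inv_mul_le_iff₀ (by positivity)]
    exact hyN.trans (by have := bY.ge; gcongr)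
  have hZs := Ns_le (s := s) (by linarith) bZ c.zM
  rw [add_mul]
  by_cases hx : M ≤ 2 * x
  · refine le_trans ?_ (le_add_of_nonneg_right (by positivity))
    have hV : V ≤ (1 + 2 * n) * (1 + M) ^ (2 * j + 1) := by
      have h1 : y ^ (2 * j + 1) ≤ (1 + M) ^ (2 * j + 1) := by gcongr; linarith [c.yM]
      have h2 : 1 ≤ (1 + M) ^ (2 * j + 1) := one_le_pow₀ N1
      nlinarith [bV.le]
    have hVs : (1 + 2 * n) ^ (s + 1) * ((1 + M) ^ (2 * j + 1)) ^ (s + 1) ≤ V ^ (s + 1) :=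
      rp_ge_neg (by positivity) (by positivity) V0 hV (by linarith)
    have e1 : ((1 + M) ^ (2 * j + 1)) ^ (s + 1) = (1 + M) ^ (n * (s + 1)) := by
      rw [Real.rpow_mul N0.le, hn, ← Real.rpow_natCast]; push_cast; rfl
    rw [e1] at hVs
    have h2 := xX_le (s := s) (by linarith) (by norm_num) c.x0 c.xM bX (bX.quarter hx)
    refine fin_chain h2 (Real.rpow_le_rpow_of_exponent_le N1 (by linarith : 1 + s ≤ e + n * (s + 1) + s))
      ?_ (by positivity) (by positivity)
    calc _ = (K⁻¹ ^ e * (1 + M) ^ e) * ((1 + 2 * n) ^ (s + 1) * (1 + M) ^ (n * (s + 1))) * (1 + M) ^ s := by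
          rw [Real.rpow_add N0, Real.rpow_add N0]; ring
      _ ≤ _ := by gcongr
  · refine le_trans ?_ (le_add_of_nonneg_left (by positivity))
    have hV : V ≤ (1 + 4 * n) * (X * (1 + M) ^ (2 * j)) := by
      have h2 : 1 ≤ (1 + M) ^ (2 * j) := one_le_pow₀ N1
      have h3 : M ^ (2 * j) ≤ (1 + M) ^ (2 * j) := by
        have := c.yM
        gcongr
        · linarith
        · linarith
      have h4 : (1 + M) ^ (2 * j) ≤ X * (1 + M) ^ (2 * j) := le_mul_of_one_le_left (by positivity) bX.one
      have h5 : H ≤ n * (X * (1 + M) ^ (2 * j)) := by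
        refine c.ux.trans ?_
        rw [mul_assoc]
        have := bX.ge
        have := c.x0
        have : 0 < M := by linarith [c.xM]
        gcongr
      have h6 := mul_le_mul_of_nonneg_left h4 n0.le
      linarith [bV.le]
    have hVs : (1 + 4 * n) ^ (s + 1) * (X ^ (s + 1) * (1 + M) ^ (2 * j * (s + 1))) ≤ V ^ (s + 1) := by
      have := rp_ge_neg (e := s + 1) (by positivity) (by positivity) V0 hV (by linarith)
      rwa [Real.mul_rpow X0.le (by positivity), pow2j, ← Real.rpow_mul N0.le] at this
    have hL : x * X ^ s ≤ 1 * X ^ (s + 1) := by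
      rw [Real.rpow_add X0, Real.rpow_one, one_mul, mul_comm]
      have := bX.ge
      gcongr
    have one : 1 ≤ (1 + M) ^ (e + 2 * j * (s + 1) + s) := Real.one_le_rpow N1 (by rw [he]; linarith)
    refine fin_chain hL (le_mul_of_one_le_right (by positivity) one) ?_ (by positivity) (by positivity)
    calc _ = (K⁻¹ ^ e * (1 + M) ^ e) * ((1 + 4 * n) ^ (s + 1) * (X ^ (s + 1) * (1 + M) ^ (2 * j * (s + 1)))) * (1 + M) ^ s := by
          rw [Real.rpow_add N0, Real.rpow_add N0]; ring
      _ ≤ _ := by gcongr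

/-- In `D₃`, the weight of an input with dominant modulation is at least `(1+M)^{2s+2j}`,
because its modulation is at least `⟨k₁⟩ (1+M)^{2j}` up to a constant. -/
lemma W13 (hj : 2 ≤ j) (hs₁ : -(j : ℝ) + 1 / 2 ≤ s) :
    ∃ b : ℝ, 0 < b ∧ ∀ x y z M H Y v V : ℝ, Cfg j x y z M H → Br y Y → Br v V → H ≤ 4 * v →
    1 ≤ y → 2 * (2 * (j : ℝ) + 1) * y ^ (2 * j + 1) < v →
    b * (1 + M) ^ (2 * s + 2 * j) ≤ Y ^ (-s / (j : ℝ) - 1) * V ^ (s / (j : ℝ) + 1) := by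
  have hj' : (2 : ℝ) ≤ j := by exact_mod_cast hj
  have ep : -s / (j : ℝ) - 1 = -(s / (j : ℝ) + 1) := by ring
  have e2 : 2 * s + 2 * (j : ℝ) = 2 * j * (s / (j : ℝ) + 1) := by field_simp
  rw [ep, e2]
  have p0 : 0 ≤ s / (j : ℝ) + 1 := by
    rw [div_add_one (by positivity)]; apply div_nonneg <;> linarith
  set p := s / (j : ℝ) + 1
  have h9 : (1 : ℝ) ≤ 9 ^ j := one_le_pow₀ (by norm_num)
  have h49 : (4 : ℝ) ^ j ≤ 9 ^ j := by gcongr; norm_num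
  set K : ℝ := 16 * 9 ^ j with hK
  refine ⟨K⁻¹ ^ p, by positivity, ?_⟩
  intro x y z M H Y v V c bY bV hv y1 hvy
  have y0 := c.y0
  have N0 : 0 < 1 + M := by linarith [c.yM]
  have Y0 := bY.pos
  have Y2 : Y ≤ 2 * y := by linarith [bY.le]
  have V0 := bV.pos
  have key : Y * (1 + M) ^ (2 * j) ≤ K * V := by
    by_cases hy : M ≤ 2 * y
    · have h1 : (1 + M) ^ (2 * j) ≤ 9 ^ j * y ^ (2 * j) := by
        have : (9 : ℝ) ^ j = 3 ^ (2 * j) := by rw [pow_mul]; norm_num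
        rw [this, ← mul_pow]; gcongr; linarith
      have h2 : y ^ (2 * j + 1) ≤ V := by
        have : 0 < y ^ (2 * j + 1) := by positivity
        nlinarith [bV.ge]
      calc Y * (1 + M) ^ (2 * j) ≤ (2 * y) * (9 ^ j * y ^ (2 * j)) := by gcongr
        _ = 2 * 9 ^ j * y ^ (2 * j + 1) := by ring
        _ ≤ 2 * 9 ^ j * V := by gcongr
        _ ≤ _ := by rw [hK]; gcongr; norm_num
    · have hx := c.xy.resolve_right hy
      have hz := c.yz.resolve_left hy
      have hV : H ≤ 4 * V := by linarith [bV.ge]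
      have ky := key_low c.y0 c.yM (c.ly hx hz) hV bV.one
      calc Y * (1 + M) ^ (2 * j) ≤ (2 * y) * (1 + M) ^ (2 * j) := by gcongr
        _ = 2 * (y * (1 + M) ^ (2 * j)) := by ring
        _ ≤ 2 * (8 * 4 ^ j * V) := by gcongr
        _ ≤ 2 * (8 * 9 ^ j * V) := by gcongr
        _ = K * V := by rw [hK]; ring
  have h1 : K⁻¹ * (Y * (1 + M) ^ (2 * j)) ≤ V := by
    rw [inv_mul_le_iff₀ (by positivity)]; exact key
  have h2 := Real.rpow_le_rpow (by positivity) h1 p0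
  rw [Real.mul_rpow (by positivity) (by positivity), Real.mul_rpow (by positivity) (by positivity),
    pow2j, ← Real.rpow_mul N0.le] at h2
  calc K⁻¹ ^ p * (1 + M) ^ (2 * (j : ℝ) * p)
      = Y ^ (-p) * (K⁻¹ ^ p * (Y ^ p * (1 + M) ^ (2 * (j : ℝ) * p))) := by
        rw [Real.rpow_neg Y0.le]; field_simp
    _ ≤ _ := by gcongr

/-- As `caseB2`, with the first input in `D₃`.  Here the output frequency is comparable to the
largest one, since otherwise the resonance could not reach the size `y^{2j+1}`. -/
lemma caseB3 (hj : 2 ≤ j) (hs₁ : -(j : ℝ) + 1 / 2 ≤ s) (s0 : s ≤ -1) :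
    ∃ C : ℝ, 0 < C ∧ ∀ x y z M H X Y Z v w V : ℝ, Cfg j x y z M H →
    Br x X → Br y Y → Br z Z → Br v V → H ≤ 4 * v → v ≤ 5 / 4 * H + w →
    w ≤ 2 * (2 * (j : ℝ) + 1) * (1 + M) ^ (2 * j) →
    1 ≤ y → 2 * (2 * (j : ℝ) + 1) * y ^ (2 * j + 1) < v →
    x * X ^ s ≤ C * (Y ^ (-s / (j : ℝ) - 1) * V ^ (s / (j : ℝ) + 1) * Z ^ s) := by
  have hj' : (2 : ℝ) ≤ j := by exact_mod_cast hj
  obtain ⟨b, hb, hW⟩ := W13 hj hs₁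
  set n := 2 * (j : ℝ) + 1 with hn
  have n0 : 0 < n := by positivity
  set K : ℝ := 4 * 3 ^ (2 * j + 1) with hK
  have h3 : (1 : ℝ) ≤ 3 ^ (2 * j + 1) := one_le_pow₀ (by norm_num)
  refine ⟨K⁻¹ ^ s / b, by positivity, ?_⟩
  intro x y z M H X Y Z v w V c bX bY bZ bV hv hv2 hw y1 hvy
  have y0 := c.y0
  have x0 := c.x0
  have N0 : 0 < 1 + M := by linarith [c.yM]
  have N1 : 1 ≤ 1 + M := by linarith [c.yM]
  have X0 := bX.pos
  have Y0 := bY.pos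
  have V0 := bV.pos
  have Z0 := bZ.pos
  have hXN : K⁻¹ * (1 + M) ≤ X := by
    rw [inv_mul_le_iff₀ (by positivity)]
    by_cases hx : M ≤ 2 * x
    · have := bX.quarter hx
      rw [hK]; nlinarith
    · have hy := c.xy.resolve_left hx
      have h3 : M ^ (2 * j) ≤ (1 + M) ^ (2 * j) := by
        have := c.yM
        gcongr
        · linarith
        · linarith
      have h4 : (1 + M) ^ (2 * j) ≤ X * (1 + M) ^ (2 * j) := le_mul_of_one_le_left (by positivity) bX.one
      have h5 : H ≤ n * (X * (1 + M) ^ (2 * j)) := by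
        refine c.ux.trans ?_
        rw [mul_assoc]
        have := bX.ge
        have : 0 < M := by linarith [c.xM]
        gcongr
      have h6 := mul_le_mul_of_nonneg_left h4 n0.le
      have h7 : n * y ^ (2 * j + 1) ≤ n * (2 * (X * (1 + M) ^ (2 * j))) := by
        nlinarith [mul_pos n0 (mul_pos X0 (pow_pos N0 (2 * j)))]
      have h8 := le_of_mul_le_mul_left h7 n0
      have h9 : (1 + M) ^ (2 * j + 1) ≤ 3 ^ (2 * j + 1) * y ^ (2 * j + 1) := by
        rw [← mul_pow]; gcongr; linarith
      have h10 : (1 + M) * (1 + M) ^ (2 * j) ≤ (K * X) * (1 + M) ^ (2 * j) := by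
        calc (1 + M) * (1 + M) ^ (2 * j) = (1 + M) ^ (2 * j + 1) := by ring
          _ ≤ 3 ^ (2 * j + 1) * y ^ (2 * j + 1) := h9
          _ ≤ 3 ^ (2 * j + 1) * (2 * (X * (1 + M) ^ (2 * j))) := by gcongr
          _ = 2 * (3 ^ (2 * j + 1)) * X * (1 + M) ^ (2 * j) := by ring
          _ ≤ _ := by rw [hK]; gcongr; norm_num
      exact le_of_mul_le_mul_right h10 (by positivity)
  have hL := xX_le (s := s) (by linarith) (by positivity) c.x0 c.xM bX hXN
  have hZs := Ns_le (s := s) (by linarith) bZ c.zM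
  have hW' := hW x y z M H Y v V c bY bV hv y1 hvy
  refine fin_chain hL (Real.rpow_le_rpow_of_exponent_le N1 (by linarith : 1 + s ≤ 2 * s + 2 * j + s))
      ?_ (by positivity) (by positivity)
  calc _ = (b * (1 + M) ^ (2 * s + 2 * j)) * (1 + M) ^ s := by
        rw [Real.rpow_add N0 (2 * s + 2 * j)]; ring
    _ ≤ _ := by gcongr

/-- Without dominance, the weight in `D₂` is at least `⟨k⟩^{2s+2j}` up to a constant. -/
lemma W2 (s0 : s ≤ -1) :
    ∃ b : ℝ, 0 < b ∧ ∀ y Y v V : ℝ, Br y Y → Br v V →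
    1 ≤ y → v ≤ 2 * (2 * (j : ℝ) + 1) * y ^ (2 * j + 1) →
    b * Y ^ (2 * s + 2 * j) ≤ Y ^ ((1 - 2 * (j : ℝ)) * s - 1) * V ^ (s + 1) := by
  set n := 2 * (j : ℝ) + 1 with hn
  have n0 : 0 < n := by positivity
  refine ⟨(1 + 2 * n) ^ (s + 1), by positivity, ?_⟩
  intro y Y v V bY bV y1 hvy
  have Y0 := bY.pos
  have V0 := bV.pos
  have hV : V ≤ (1 + 2 * n) * Y ^ (2 * j + 1) := by
    have h1 : y ^ (2 * j + 1) ≤ Y ^ (2 * j + 1) := by gcongr; exact bY.ge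
    have h2 : 1 ≤ Y ^ (2 * j + 1) := one_le_pow₀ bY.one
    nlinarith [bV.le]
  have hVs : (1 + 2 * n) ^ (s + 1) * (Y ^ (2 * j + 1)) ^ (s + 1) ≤ V ^ (s + 1) :=
    rp_ge_neg (by positivity) (by positivity) V0 hV (by linarith)
  have e1 : (Y ^ (2 * j + 1)) ^ (s + 1) = Y ^ (n * (s + 1)) := by
    rw [Real.rpow_mul Y0.le, hn, ← Real.rpow_natCast]; push_cast; rfl
  rw [e1] at hVs
  calc _ = Y ^ ((1 - 2 * (j : ℝ)) * s - 1) * ((1 + 2 * n) ^ (s + 1) * Y ^ (n * (s + 1))) := by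
        rw [show 2 * s + 2 * (j : ℝ) = ((1 - 2 * (j : ℝ)) * s - 1) + n * (s + 1) by rw [hn]; ring,
          Real.rpow_add Y0]; ring
    _ ≤ _ := by gcongr

/-- Without dominance, the weight in `D₃ ∪ D₄` is at least `⟨k⟩^{2s+2j}` up to a constant. -/
lemma W34 (hj : 2 ≤ j) (hs₁ : -(j : ℝ) + 1 / 2 ≤ s) :
    ∃ b : ℝ, 0 < b ∧ ∀ y Y v V : ℝ, 0 < y → Br y Y → Br v V →
    2 * (2 * (j : ℝ) + 1) * y ^ (2 * j + 1) < v →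
    b * Y ^ (2 * s + 2 * j) ≤ Y ^ (-s / (j : ℝ) - 1) * V ^ (s / (j : ℝ) + 1) := by
  have hj' : (2 : ℝ) ≤ j := by exact_mod_cast hj
  have ep : -s / (j : ℝ) - 1 = -(s / (j : ℝ) + 1) := by ring
  have e2 : 2 * s + 2 * (j : ℝ) = 2 * j * (s / (j : ℝ) + 1) := by field_simp
  rw [ep, e2]
  have p0 : 0 ≤ s / (j : ℝ) + 1 := by
    rw [div_add_one (by positivity)]; apply div_nonneg <;> linarith
  set p := s / (j : ℝ) + 1
  set K : ℝ := 2 ^ (2 * j + 1) with hK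
  refine ⟨K⁻¹ ^ p, by positivity, ?_⟩
  intro y Y v V y0 bY bV hvy
  have Y0 := bY.pos
  have V0 := bV.pos
  have key : Y * Y ^ (2 * j) ≤ K * V := by
    rw [← pow_succ']
    by_cases y1 : 1 ≤ y
    · have h1 : Y ^ (2 * j + 1) ≤ K * y ^ (2 * j + 1) := by
        rw [hK, ← mul_pow]; gcongr; linarith [bY.le]
      refine h1.trans ?_
      have : 0 < y ^ (2 * j + 1) := by positivity
      gcongr
      nlinarith [bV.ge]
    · have h1 : Y ^ (2 * j + 1) ≤ K := by
        rw [hK]; gcongr; linarith [bY.le]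
      exact h1.trans (le_mul_of_one_le_right (by positivity) bV.one)
  have h1 : K⁻¹ * (Y * Y ^ (2 * j)) ≤ V := by
    rw [inv_mul_le_iff₀ (by positivity)]; exact key
  have h2 := Real.rpow_le_rpow (by positivity) h1 p0
  rw [Real.mul_rpow (by positivity) (by positivity), Real.mul_rpow (by positivity) (by positivity),
    pow2j, ← Real.rpow_mul Y0.le] at h2
  calc K⁻¹ ^ p * Y ^ (2 * (j : ℝ) * p)
      = Y ^ (-p) * (K⁻¹ ^ p * (Y ^ p * Y ^ (2 * (j : ℝ) * p))) := by
        rw [Real.rpow_neg Y0.le]; field_simp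
    _ ≤ _ := by gcongr

/-- Both inputs have weights growing like `⟨·⟩^{2s+2j}`.  This leaves room for a factor `Q` and for the
power `1/(2(2j+1))` of the output modulation, which is at most `(1+M)^{1/2}` because `U ≲ (1+M)^{2j+1}`. -/
lemma caseL (hj : 2 ≤ j) (hs₁ : -(j : ℝ) + 1 / 2 ≤ s) (s0 : s ≤ -1) (b₁ b₂ : ℝ) (hb₁ : 0 < b₁)
    (hb₂ : 0 < b₂) :
    ∃ C : ℝ, 0 < C ∧ ∀ x y z M H X Z u U Q W₁ W₂ : ℝ, Cfg j x y z M H →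
    Br x X → Br z Z → Br u U → u ≤ H / 4 → qr y ≤ Q →
    b₁ * (1 + M) ^ (2 * s + 2 * j) ≤ W₁ → b₂ * Z ^ (2 * s + 2 * j) ≤ W₂ →
    x * X ^ s * U ^ (1 / (2 * (2 * (j : ℝ) + 1))) ≤ C * (Q * W₁ * W₂) := by
  have hj' : (2 : ℝ) ≤ j := by exact_mod_cast hj
  set n := 2 * (j : ℝ) + 1 with hn
  have n0 : 0 < n := by positivity
  set ε := 1 / (2 * n) with hε
  have ε0 : 0 < ε := by positivity
  set r := 2 * s + 2 * (j : ℝ) with hr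
  have r1 : 1 ≤ r := by rw [hr]; linarith
  refine ⟨(1 / 4) ^ s * (1 + n) ^ ε / (b₁ * b₂) + (1 + n) ^ ε / (b₁ * (b₂ * (1 / 4) ^ r)), by positivity, ?_⟩
  intro x y z M H X Z u U Q W₁ W₂ c bX bZ bU hu hQ hW₁ hW₂
  have y0 := c.y0
  have x0 := c.x0
  have N0 : 0 < 1 + M := by linarith [c.yM]
  have N1 : 1 ≤ 1 + M := by linarith [c.yM]
  have X0 := bX.pos
  have Z0 := bZ.pos
  have U0 := bU.pos
  have hQN : (1 + M)⁻¹ ≤ Q := le_trans (by gcongr; exact c.yM) ((qr_ge y0).trans hQ)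
  have Q0 : 0 < Q := (qr_pos y0).trans_le hQ
  have W₁0 : 0 < W₁ := lt_of_lt_of_le (by positivity) hW₁
  have W₂0 : 0 < W₂ := lt_of_lt_of_le (by positivity) hW₂
  have hU : U ≤ (1 + n) * (1 + M) ^ (2 * j + 1) := by
    have h1 : M ^ (2 * j + 1) ≤ (1 + M) ^ (2 * j + 1) := by
      have := c.yM
      gcongr
      · linarith
      · linarith
    have h2 : 1 ≤ (1 + M) ^ (2 * j + 1) := one_le_pow₀ N1
    have h3 : H ≤ n * M ^ (2 * j + 1) := by
      refine c.ux.trans ?_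
      rw [pow_succ', ← mul_assoc]
      have := c.xM
      have : 0 < M := by linarith
      gcongr
    have h4 := c.H0
    have h5 := bU.le
    nlinarith
  have hUε : U ^ ε ≤ (1 + n) ^ ε * (1 + M) ^ (1 / 2 : ℝ) := by
    have := rp_le_pos (e := ε) (by positivity) (by positivity) U0.le hU ε0.le
    have e1 : ((1 + M) ^ (2 * j + 1)) ^ ε = (1 + M) ^ (1 / 2 : ℝ) := by
      rw [← Real.rpow_natCast, ← Real.rpow_mul N0.le]
      congr 1; rw [hε, hn]; push_cast; field_simp
    rwa [e1] at this
  rw [add_mul]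
  by_cases hx : M ≤ 2 * x
  · refine le_trans ?_ (le_add_of_nonneg_right (by positivity))
    have h2 := xX_le (s := s) (by linarith) (by norm_num) c.x0 c.xM bX (bX.quarter hx)
    have hL : x * X ^ s * U ^ ε ≤ ((1 / 4) ^ s * (1 + n) ^ ε) * (1 + M) ^ (1 + s + 1 / 2) := by
      calc _ ≤ ((1 / 4) ^ s * (1 + M) ^ (1 + s)) * ((1 + n) ^ ε * (1 + M) ^ (1 / 2 : ℝ)) := by gcongr
        _ = _ := by rw [Real.rpow_add N0 (1 + s)]; ring
    refine fin_chain hL (Real.rpow_le_rpow_of_exponent_le N1 (by rw [hr]; linarith : 1 + s + 1 / 2 ≤ r - 1))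
      ?_ (by positivity) (by positivity)
    have hZ1 : 1 ≤ Z ^ r := Real.one_le_rpow bZ.one (by linarith)
    calc _ = (1 + M)⁻¹ * (b₁ * (1 + M) ^ r) * (b₂ * 1) := by
          rw [Real.rpow_sub N0, Real.rpow_one]; ring
      _ ≤ (1 + M)⁻¹ * (b₁ * (1 + M) ^ r) * (b₂ * Z ^ r) := by gcongr
      _ ≤ _ := by gcongr
  · have hz := c.xz.resolve_left hx
    refine le_trans ?_ (le_add_of_nonneg_left (by positivity))
    have hL : x * X ^ s * U ^ ε ≤ (1 + n) ^ ε * (1 + M) ^ (1 / 2 : ℝ) := by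
      calc _ ≤ 1 * ((1 + n) ^ ε * (1 + M) ^ (1 / 2 : ℝ)) := by
            have := xX_le_one s0 bX
            gcongr
        _ = _ := one_mul _
    refine fin_chain hL (Real.rpow_le_rpow_of_exponent_le N1 (by linarith : (1 : ℝ) / 2 ≤ r + r - 1))
      ?_ (by positivity) (by positivity)
    have hZ1 : (1 / 4) ^ r * (1 + M) ^ r ≤ Z ^ r :=
      rp_ge_pos (by norm_num) N0 (bZ.quarter hz) (by linarith)
    calc _ = (1 + M)⁻¹ * (b₁ * (1 + M) ^ r) * (b₂ * ((1 / 4) ^ r * (1 + M) ^ r)) := by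
          rw [Real.rpow_sub N0, Real.rpow_one, Real.rpow_add N0]; ring
      _ ≤ (1 + M)⁻¹ * (b₁ * (1 + M) ^ r) * (b₂ * Z ^ r) := by gcongr
      _ ≤ _ := by gcongr
end

/-! ### The combined estimate in real variables -/

/-- `(y, v) = (|k|, |σ|)` lies in one of the three regions `D₁ ∪ D₅`, `D₂`, `D₃ ∪ D₄`, and `W` is
the weight of the `X^s` norm there (`Y, V` are the brackets of `y, v`). -/
def InW (j : ℕ) (s y Y v V W : ℝ) : Prop :=
  (((1 ≤ y ∧ v ≤ 2 * (2 * (j : ℝ) + 1) / 3 * y ^ (2 * j)) ∨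
      (y ≤ 1 ∧ v ≤ 2 * (2 * (j : ℝ) + 1) * y ^ (2 * j + 1))) ∧
    W = Y ^ s * V ^ ((2 * (j : ℝ) - 1) / (2 * (j : ℝ)))) ∨
  ((1 ≤ y ∧ 2 * (2 * (j : ℝ) + 1) / 3 * y ^ (2 * j) < v ∧
      v ≤ 2 * (2 * (j : ℝ) + 1) * y ^ (2 * j + 1)) ∧
    W = Y ^ ((1 - 2 * (j : ℝ)) * s - 1) * V ^ (s + 1)) ∨
  ((2 * (2 * (j : ℝ) + 1) * y ^ (2 * j + 1) < v) ∧
    W = Y ^ (-s / (j : ℝ) - 1) * V ^ (s / (j : ℝ) + 1))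

lemma InW.pos {j : ℕ} {s y Y v V W : ℝ} (h : InW j s y Y v V W) (Y0 : 0 < Y) (V0 : 0 < V) :
    0 < W := by
  rcases h with ⟨-, rfl⟩ | ⟨-, rfl⟩ | ⟨-, rfl⟩ <;> positivity

section
variable {j : ℕ} {s : ℝ}

lemma mul_inv_le_of {L U R : ℝ} (hU : 0 < U) (h : L ≤ R) : L * U⁻¹ ≤ R * U⁻¹ :=
  mul_le_mul_of_nonneg_right h (inv_nonneg.mpr hU.le)

/-- The pointwise estimate in real variables when the second modulation `w` is at most the first one
`v`.  The four alternatives correspond to the four summands of `Bf`. -/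
lemma real_all (hj : 2 ≤ j) (hs₁ : -(j : ℝ) + 1 / 2 ≤ s) (s0 : s ≤ -1) :
    ∃ C : ℝ, 0 < C ∧ ∀ x y z M H X Y Z u v w U V W Q W₁ W₂ : ℝ, Cfg j x y z M H →
    Br x X → Br y Y → Br z Z → Br u U → Br v V → Br w W → qr x ≤ Q → qr y ≤ Q → qr z ≤ Q →
    H ≤ u + v + w → v ≤ u + w + H → w ≤ v →
    InW j s y Y v V W₁ → InW j s z Z w W W₂ →
    x * X ^ s * U⁻¹ ≤ C * (Q * (Y ^ s * Z ^ s)) ∨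
    x * X ^ s * U⁻¹ ≤ C * (Q * U⁻¹ * (W₁ * Z ^ s)) ∨
    (1 ≤ y ∧ x * X ^ s * U⁻¹ ≤ C * (U⁻¹ * W ^ (-(3 / 4) : ℝ) * (W₁ * W₂))) ∨
    x * X ^ s * U⁻¹ ≤ C * (Q * U ^ (-1 - 1 / (2 * (2 * (j : ℝ) + 1))) * (W₁ * W₂)) := by
  have hj' : (2 : ℝ) ≤ j := by exact_mod_cast hj
  obtain ⟨Ca, hCa, ha⟩ := caseA hj hs₁ s0
  obtain ⟨C1, hC1, h1⟩ := caseS1 hj hs₁ s0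
  obtain ⟨C5, hC5, h5⟩ := caseS5 hj s0
  obtain ⟨C4, hC4, h4⟩ := caseS4 hj hs₁ s0
  obtain ⟨C2, hC2, h2⟩ := caseB2 hj hs₁ s0
  obtain ⟨C3, hC3, h3⟩ := caseB3 hj hs₁ s0
  obtain ⟨K, K1, hK⟩ := D2_y hj
  obtain ⟨b₂, hb₂, hW2⟩ := W2 (j := j) s0
  obtain ⟨b₃, hb₃, hW3⟩ := W34 hj hs₁
  obtain ⟨b₁, hb₁, hW1⟩ := W13 hj hs₁
  set r := 2 * s + 2 * (j : ℝ) with hr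
  have r0 : 0 ≤ r := by rw [hr]; linarith
  obtain ⟨Cl, hCl, hl⟩ := caseL hj hs₁ s0 (min (b₂ * K⁻¹ ^ r) b₁) (min b₂ b₃) (by positivity) (by positivity)
  refine ⟨Ca + C1 + C5 + C4 + C2 + C3 + Cl, by positivity, ?_⟩
  set C := Ca + C1 + C5 + C4 + C2 + C3 + Cl with hC
  intro x y z M H X Y Z u v w U V W Q W₁ W₂ c bX bY bZ bU bV bW qx qy qz hH hv hwv i₁ i₂
  have Q0 : 0 < Q := (qr_pos c.y0).trans_le qy
  have X0 := bX.pos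
  have Y0 := bY.pos
  have Z0 := bZ.pos
  have U0 := bU.pos
  have V0 := bV.pos
  have W0 := bW.pos
  have W10 := i₁.pos Y0 V0
  have W20 := i₂.pos Z0 W0
  by_cases hu : H ≤ 4 * u
  · left
    have := mul_inv_le_of U0 (ha x y z M H X Y Z u U Q c bX bY bZ bU hu qx qy qz)
    refine this.trans ?_
    calc Ca * (Q * U * Y ^ s * Z ^ s) * U⁻¹ = Ca * (Q * (Y ^ s * Z ^ s)) := by field_simp
      _ ≤ _ := by gcongr; linarith
  push Not at hu
  have hv4 : H ≤ 4 * v := by linarith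
  have hv5 : v ≤ 5 / 4 * H + w := by linarith
  -- The cases of a dominant first input in `D₁`, `D₅` and `D₄` all give the second alternative.
  have second : ∀ C' : ℝ, C' ≤ C → x * X ^ s ≤ C' * (Q * W₁ * Z ^ s) →
      x * X ^ s * U⁻¹ ≤ C * (Q * U⁻¹ * (W₁ * Z ^ s)) := by
    intro C' hC' h
    refine (mul_inv_le_of U0 h).trans ?_
    calc C' * (Q * W₁ * Z ^ s) * U⁻¹ = C' * (Q * U⁻¹ * (W₁ * Z ^ s)) := by ring
      _ ≤ _ := by gcongr
  have final : 1 ≤ y → (v ≤ 2 * (2 * (j : ℝ) + 1) * y ^ (2 * j + 1) ∧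
        W₁ = Y ^ ((1 - 2 * (j : ℝ)) * s - 1) * V ^ (s + 1) ∨
        2 * (2 * (j : ℝ) + 1) * y ^ (2 * j + 1) < v ∧
        W₁ = Y ^ (-s / (j : ℝ) - 1) * V ^ (s / (j : ℝ) + 1)) →
      (1 ≤ y ∧ x * X ^ s * U⁻¹ ≤ C * (U⁻¹ * W ^ (-(3 / 4) : ℝ) * (W₁ * W₂))) ∨
      x * X ^ s * U⁻¹ ≤ C * (Q * U ^ (-1 - 1 / (2 * (2 * (j : ℝ) + 1))) * (W₁ * W₂)) := by
    intro y1 i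
    have small : w ≤ 2 * (2 * (j : ℝ) + 1) * (1 + M) ^ (2 * j) →
        W₂ = Z ^ s * W ^ ((2 * (j : ℝ) - 1) / (2 * (j : ℝ))) →
        x * X ^ s * U⁻¹ ≤ C * (U⁻¹ * W ^ (-(3 / 4) : ℝ) * (W₁ * W₂)) := by
      intro hw e
      have hW : Z ^ s ≤ W ^ (-(3 / 4) : ℝ) * W₂ := by
        have : 1 ≤ W ^ (-(3 / 4) : ℝ) * W ^ ((2 * (j : ℝ) - 1) / (2 * (j : ℝ))) := by
          rw [← Real.rpow_add W0]
          refine Real.one_le_rpow bW.one ?_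
          have : 3 / 4 ≤ (2 * (j : ℝ) - 1) / (2 * (j : ℝ)) := by
            rw [div_le_div_iff₀ (by positivity) (by positivity)]; linarith
          linarith
        calc Z ^ s = Z ^ s * 1 := (mul_one _).symm
          _ ≤ Z ^ s * (W ^ (-(3 / 4) : ℝ) * W ^ ((2 * (j : ℝ) - 1) / (2 * (j : ℝ)))) := by gcongr
          _ = _ := by rw [e]; ring
      have hh : x * X ^ s ≤ C * (W₁ * Z ^ s) := by
        rcases i with ⟨hvy, rfl⟩ | ⟨hvy, rfl⟩
        · refine (h2 x y z M H X Y Z v w V c bX bY bZ bV hv4 hv5 hw y1 hvy).trans ?_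
          gcongr; linarith
        · refine (h3 x y z M H X Y Z v w V c bX bY bZ bV hv4 hv5 hw y1 hvy).trans ?_
          gcongr; linarith
      refine (mul_inv_le_of U0 hh).trans ?_
      calc C * (W₁ * Z ^ s) * U⁻¹ ≤ C * (W₁ * (W ^ (-(3 / 4) : ℝ) * W₂)) * U⁻¹ := by gcongr
        _ = _ := by ring
    have large : b₂ * Z ^ r ≤ W₂ ∨ b₃ * Z ^ r ≤ W₂ →
        x * X ^ s * U⁻¹ ≤ C * (Q * U ^ (-1 - 1 / (2 * (2 * (j : ℝ) + 1))) * (W₁ * W₂)) := by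
      intro h
      have hW₂ : min b₂ b₃ * Z ^ r ≤ W₂ := by
        rcases h with h | h
        · exact le_trans (by gcongr; exact min_le_left _ _) h
        · exact le_trans (by gcongr; exact min_le_right _ _) h
      have N0 : 0 < 1 + M := by linarith [c.yM, c.y0]
      have hW₁ : min (b₂ * K⁻¹ ^ r) b₁ * (1 + M) ^ r ≤ W₁ := by
        rcases i with ⟨hvy, rfl⟩ | ⟨hvy, rfl⟩
        · refine le_trans ?_ (hW2 y Y v V bY bV y1 hvy)
          have : K⁻¹ ^ r * (1 + M) ^ r ≤ Y ^ r := by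
            refine rp_ge_pos (by positivity) N0 ?_ r0
            rw [inv_mul_le_iff₀ (by positivity)]
            refine (hK x y z M H v V c bV hv4 y1 hvy).trans ?_
            gcongr; exact bY.ge
          calc _ ≤ (b₂ * K⁻¹ ^ r) * (1 + M) ^ r := by gcongr; exact min_le_left _ _
            _ = b₂ * (K⁻¹ ^ r * (1 + M) ^ r) := by ring
            _ ≤ _ := by gcongr
        · refine le_trans ?_ (hW1 x y z M H Y v V c bY bV hv4 y1 hvy)
          gcongr; exact min_le_right _ _
      have := hl x y z M H X Z u U Q W₁ W₂ c bX bZ bU (by linarith) qy hW₁ hW₂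
      set ε := 1 / (2 * (2 * (j : ℝ) + 1))
      have e : U⁻¹ = U ^ ε * U ^ (-1 - ε) := by
        rw [← Real.rpow_add U0, ← Real.rpow_neg_one]; congr 1; ring
      calc x * X ^ s * U⁻¹ = (x * X ^ s * U ^ ε) * U ^ (-1 - ε) := by rw [e]; ring
        _ ≤ (Cl * (Q * W₁ * W₂)) * U ^ (-1 - ε) := by gcongr
        _ = Cl * (Q * U ^ (-1 - ε) * (W₁ * W₂)) := by ring
        _ ≤ _ := by gcongr; linarith
    have z0 := c.z0
    have zN : z ≤ 1 + M := by linarith [c.zM]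
    have j0 : 0 < 2 * (j : ℝ) + 1 := by positivity
    rcases i₂ with ⟨h, e⟩ | ⟨⟨z1, -, hh⟩, e⟩ | ⟨hh, e⟩
    · left
      refine ⟨y1, small ?_ e⟩
      have : z ^ (2 * j) ≤ (1 + M) ^ (2 * j) := by gcongr
      rcases h with ⟨z1, hh⟩ | ⟨z1, hh⟩
      · have := mul_le_mul_of_nonneg_left this j0.le
        have : 0 ≤ (2 * (j : ℝ) + 1) * z ^ (2 * j) := by positivity
        linarith
      · have h7 : z ^ (2 * j + 1) ≤ (1 + M) ^ (2 * j) := by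
          refine le_trans ?_ this
          exact pow_le_pow_of_le_one z0.le z1 (by omega)
        have := mul_le_mul_of_nonneg_left h7 j0.le
        linarith
    · right
      exact large (Or.inl (by rw [e]; exact hW2 z Z w W bZ bW z1 hh))
    · right
      exact large (Or.inr (by rw [e]; exact hW3 z Z w W z0 bZ bW hh))
  right
  rcases i₁ with ⟨⟨y1, hh⟩ | ⟨y1, hh⟩, e⟩ | ⟨⟨y1, -, hh⟩, e⟩ | ⟨hh, e⟩
  · left
    refine second C1 (by linarith) ?_
    rw [e]
    exact h1 x y z M H X Y Z v V Q c bX bY bZ bV hv4 qx qy qz y1 hh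
  · left
    refine second C5 (by linarith) ?_
    rw [e]
    exact h5 x y z M H X Y Z v V Q c bX bY bZ bV hv4 qy y1 hh
  · right
    exact final y1 (Or.inl ⟨hh, e⟩)
  · by_cases y1 : 1 ≤ y
    · right
      exact final y1 (Or.inr ⟨hh, e⟩)
    · left
      refine second C4 (by linarith) ?_
      rw [e]
      exact h4 x y z M H X Y Z v V Q c bX bY bZ bV hv4 qy (by linarith) 
end

/-! ### `L²` duality and a Schur-type bound -/

/-- The `L²` norm of a nonnegative function. -/
noncomputable def n2 {α : Type*} [MeasurableSpace α] (μ : Measure α) (f : α → ℝ≥0∞) : ℝ≥0∞ :=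
  (∫⁻ a, f a ^ 2 ∂μ) ^ (1 / 2 : ℝ)

section generic
variable {α : Type*} [MeasurableSpace α] {μ : Measure α}

lemma n2_sq (f : α → ℝ≥0∞) : n2 μ f ^ 2 = ∫⁻ a, f a ^ 2 ∂μ := by
  rw [n2, ← ENNReal.rpow_natCast, ← ENNReal.rpow_mul]; norm_num

lemma sqrt_sq (a : ℝ≥0∞) : (a ^ 2) ^ (1 / 2 : ℝ) = a := by
  rw [← ENNReal.rpow_natCast, ← ENNReal.rpow_mul]; norm_num

lemma le_of_sq {a b : ℝ≥0∞} (h : a ^ 2 ≤ b ^ 2) : a ≤ b := by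
  rw [← sqrt_sq a, ← sqrt_sq b]
  exact ENNReal.rpow_le_rpow h (by norm_num)

lemma n2_mono {f g : α → ℝ≥0∞} (h : ∀ a, f a ≤ g a) : n2 μ f ≤ n2 μ g := by
  unfold n2
  refine ENNReal.rpow_le_rpow (lintegral_mono fun a => ?_) (by norm_num)
  gcongr; exact h a

/-- Cauchy–Schwarz. -/
lemma cs {f g : α → ℝ≥0∞} (hf : Measurable f) (hg : Measurable g) :
    ∫⁻ a, f a * g a ∂μ ≤ n2 μ f * n2 μ g := by
  have := ENNReal.lintegral_mul_le_Lp_mul_Lq μ (p := 2) (q := 2)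
    (by constructor <;> norm_num) hf.aemeasurable hg.aemeasurable
  simpa [n2] using this

lemma n2_add {f g : α → ℝ≥0∞} (hf : Measurable f) (hg : Measurable g) :
    n2 μ (fun a => f a + g a) ≤ n2 μ f + n2 μ g := by
  have := ENNReal.lintegral_Lp_add_le (μ := μ) (p := 2) hf.aemeasurable hg.aemeasurable
    (by norm_num)
  simpa [n2] using this

end generic

section dual
variable {μ : Measure ℤ}

/-- Duality for `L²(ℤ, μ)` with `μ` finite on finite sets.  Testing on truncations of `J` covers
the case in which the norm of `J` is infinite. -/
lemma n2_dual (hμ : ∀ S : Finset ℤ, μ S ≠ ⊤) (J : ℤ → ℝ≥0∞) (A : ℝ≥0∞)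
    (h : ∀ g : ℤ → ℝ≥0∞, ∫⁻ m, g m * J m ∂μ ≤ A * n2 μ g) : n2 μ J ≤ A := by
  set g : ℕ → ℤ → ℝ≥0∞ := fun N m => if m.natAbs ≤ N then min (J m) N else 0 with hg
  have mono : Monotone g := by
    intro N N' hN m
    simp only [hg]
    split_ifs with h1 h2
    · exact min_le_min le_rfl (by exact_mod_cast hN)
    · omega
    · simp
    · simp
  have sup : ∀ m, ⨆ N, g N m ^ 2 = J m ^ 2 := by
    intro m
    apply le_antisymm
    · refine iSup_le fun N => ?_
      simp only [hg]
      split_ifs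
      · gcongr; exact min_le_left _ _
      · simp
    · by_cases hJ : J m = ⊤
      · rw [hJ]
        have : ∀ N : ℕ, ((N : ℝ≥0∞)) ≤ ⨆ N, g N m ^ 2 := by
          intro N
          refine le_trans ?_ (le_iSup _ (max N m.natAbs))
          simp only [hg]
          rw [if_pos (le_max_right _ _), hJ, min_eq_right le_top]
          have : N ≤ (max N m.natAbs) ^ 2 := (le_max_left _ _).trans (Nat.le_self_pow (by norm_num) _)
          exact_mod_cast this
        refine le_top.trans_eq (Eq.symm ?_)
        · exact ENNReal.eq_top_of_forall_nnreal_le fun r => by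
            obtain ⟨N, hN⟩ := exists_nat_ge r
            exact le_trans (by exact_mod_cast hN) (this N)
      · obtain ⟨N, hN⟩ := ENNReal.exists_nat_gt hJ
        refine le_trans ?_ (le_iSup _ (max N m.natAbs))
        simp only [hg]
        rw [if_pos (le_max_right _ _), min_eq_left]
        exact hN.le.trans (by exact_mod_cast le_max_left _ _)
  have bound : ∀ N, ∫⁻ m, g N m ^ 2 ∂μ ≤ A ^ 2 := by
    intro N
    have fin : ∫⁻ m, g N m ^ 2 ∂μ ≠ ⊤ := by
      have : ∫⁻ m, g N m ^ 2 ∂μ ≤ ∫⁻ m, (Set.indicator ((Finset.Icc (-(N:ℤ)) N : Finset ℤ) : Set ℤ) (fun _ => (N : ℝ≥0∞) ^ 2)) m ∂μ := by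
        refine lintegral_mono fun m => ?_
        simp only [hg]
        split_ifs with h1
        · rw [Set.indicator_of_mem]
          · gcongr; exact min_le_right _ _
          · simp; omega
        · simp
      refine ne_top_of_le_ne_top ?_ this
      rw [lintegral_indicator_const .of_discrete]
      exact ENNReal.mul_ne_top (by simp) (hμ _)
    have h1 : ∫⁻ m, g N m ^ 2 ∂μ ≤ A * n2 μ (g N) := by
      refine le_trans (lintegral_mono fun m => ?_) (h (g N))
      rw [sq]; gcongr
      simp only [hg]; split_ifs
      · exact min_le_left _ _
      · simp
    rw [← n2_sq] at h1 fin ⊢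
    have fin' : n2 μ (g N) ≠ ⊤ := fun h => fin (by rw [h]; simp)
    by_cases h0 : n2 μ (g N) = 0
    · rw [h0]; simp
    · rw [sq, ENNReal.mul_le_mul_iff_left h0 fin'] at h1
      gcongr
  have : ∫⁻ m, J m ^ 2 ∂μ ≤ A ^ 2 := by
    calc ∫⁻ m, J m ^ 2 ∂μ = ∫⁻ m, ⨆ N, g N m ^ 2 ∂μ := by simp_rw [sup]
      _ = ⨆ N, ∫⁻ m, g N m ^ 2 ∂μ := lintegral_iSup (fun _ => .of_discrete)
          (fun N N' hN m => by have := mono hN m; dsimp only; gcongr)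
      _ ≤ _ := iSup_le bound
  rw [← n2_sq] at this
  exact le_of_sq this
end dual

section schur
variable {G : Type*} [MeasurableSpace G] [AddCommGroup G] [MeasurableAdd₂ G] [MeasurableNeg G]
  {P : Measure G} [SFinite P] [P.IsAddLeftInvariant] [P.IsNegInvariant]

/-- A trilinear Schur-type bound: if the kernel is square integrable in `p`, uniformly in `p₁`, then
the form is bounded by the three `L²` norms. -/
lemma schur {K : G → G → ℝ≥0∞} {H F₁ F₂ : G → ℝ≥0∞} {C : ℝ≥0∞} (hK : Measurable (Function.uncurry K))
    (hH : Measurable H) (h₁ : Measurable F₁) (h₂ : Measurable F₂)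
    (hC : ∀ p₁, ∫⁻ p, K p p₁ ^ 2 ∂P ≤ C) :
    ∫⁻ p, ∫⁻ p₁, K p p₁ * H p * F₁ p₁ * F₂ (p - p₁) ∂P ∂P
      ≤ C ^ (1 / 2 : ℝ) * (n2 P H * n2 P F₁ * n2 P F₂) := by
  have hK' : ∀ p₁, Measurable fun p => K p p₁ := fun p₁ =>
    hK.comp (measurable_id.prodMk measurable_const)
  have hKu : Measurable fun x : G × G => K x.1 x.2 := hK
  have hKs : Measurable fun x : G × G => K x.2 x.1 := hK.comp measurable_swap
  have hsub : ∀ p₁ : G, Measurable fun p => F₂ (p - p₁) := fun p₁ => by fun_prop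
  rw [lintegral_lintegral_swap (by apply Measurable.aemeasurable; unfold Function.uncurry; fun_prop)]
  have step : ∀ p₁, ∫⁻ p, K p p₁ * H p * F₁ p₁ * F₂ (p - p₁) ∂P ≤
      C ^ (1 / 2 : ℝ) * (F₁ p₁ * n2 P (fun p => H p * F₂ (p - p₁))) := by
    intro p₁
    calc _ = ∫⁻ p, F₁ p₁ * (K p p₁ * (H p * F₂ (p - p₁))) ∂P := by
            congr 1; ext p; ring
      _ = F₁ p₁ * ∫⁻ p, (K p p₁ * (H p * F₂ (p - p₁))) ∂P := by
          rw [lintegral_const_mul]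
          exact (hK' p₁).mul (hH.mul (hsub p₁))
      _ ≤ F₁ p₁ * (n2 P (fun p => K p p₁) * n2 P (fun p => H p * F₂ (p - p₁))) := by
          gcongr; exact cs (hK' p₁) (hH.mul (hsub p₁))
      _ ≤ F₁ p₁ * (C ^ (1 / 2 : ℝ) * n2 P (fun p => H p * F₂ (p - p₁))) := by
          gcongr
          exact ENNReal.rpow_le_rpow (hC p₁) (by norm_num)
      _ = _ := by ring
  have hm2 : Measurable fun p₁ => n2 P (fun p => H p * F₂ (p - p₁)) := by
    unfold n2
    refine Measurable.pow_const ?_ _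
    have : Measurable (Function.uncurry fun p₁ p => (H p * F₂ (p - p₁)) ^ 2) := by
      unfold Function.uncurry; fun_prop
    exact this.lintegral_prod_right
  calc _ ≤ ∫⁻ p₁, C ^ (1 / 2 : ℝ) * (F₁ p₁ * n2 P (fun p => H p * F₂ (p - p₁))) ∂P := lintegral_mono step
    _ = C ^ (1 / 2 : ℝ) * ∫⁻ p₁, F₁ p₁ * n2 P (fun p => H p * F₂ (p - p₁)) ∂P :=
        lintegral_const_mul _ (h₁.mul hm2)
    _ ≤ C ^ (1 / 2 : ℝ) * (n2 P F₁ * n2 P (fun p₁ => n2 P (fun p => H p * F₂ (p - p₁)))) := by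
        gcongr; exact cs h₁ hm2
    _ = _ := by
        have : n2 P (fun p₁ => n2 P (fun p => H p * F₂ (p - p₁))) = n2 P H * n2 P F₂ := by
          rw [n2]
          simp_rw [n2_sq]
          rw [lintegral_lintegral_swap (by apply Measurable.aemeasurable; unfold Function.uncurry; fun_prop)]
          have e : ∀ p, ∫⁻ p₁, (H p * F₂ (p - p₁)) ^ 2 ∂P = H p ^ 2 * ∫⁻ p₁, F₂ p₁ ^ 2 ∂P := by
            intro p
            simp_rw [mul_pow]
            rw [lintegral_const_mul _ (by fun_prop), lintegral_sub_left_eq_self (fun q => F₂ q ^ 2)]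
          simp_rw [e]
          rw [lintegral_mul_const _ (by fun_prop), ENNReal.mul_rpow_of_nonneg _ _ (by norm_num)]
          rfl
        rw [this]; ring
end schur

/-! ### Lattice sums uniform in `λ` -/

/-- The measure `λ⁻¹ ∑_m δ_m` on `ℤ`, that is, the one on `Ż_λ` with the frequency `0` added; the
functions integrated against it are not affected by the additional point or are only made larger by it. -/
noncomputable def muL (lam : ℝ) : Measure ℤ := ENNReal.ofReal (1 / lam) • Measure.count

lemma lintegral_muL (lam : ℝ) (f : ℤ → ℝ≥0∞) :
    ∫⁻ m, f m ∂(muL lam) = ENNReal.ofReal (1 / lam) * ∑' m, f m := by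
  rw [muL, lintegral_smul_measure, lintegral_count, smul_eq_mul]

lemma jap_br (x : ℝ) : Br |x| (jap x) := by
  have h : 0 ≤ |x| := abs_nonneg x
  refine ⟨?_, ?_, ?_⟩
  · exact Real.one_le_sqrt.mpr (by nlinarith)
  · rw [← Real.sqrt_sq_eq_abs]; exact Real.sqrt_le_sqrt (by linarith)
  · rw [jap, Real.sqrt_le_left (by linarith), ← sq_abs x]; nlinarith

lemma jap_pos (x : ℝ) : 0 < jap x := (jap_br x).pos

lemma jap_neg (x : ℝ) : jap (-x) = jap x := by simp [jap]

lemma jap_sub_comm (x y : ℝ) : jap (x - y) = jap (y - x) := by rw [← jap_neg]; congr 1; ring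

lemma jap_mono {x y : ℝ} (h : |x| ≤ |y|) : jap x ≤ jap y := by
  unfold jap
  exact Real.sqrt_le_sqrt (by have := sq_le_sq.mpr h; linarith)

lemma jap_sq (x : ℝ) : jap x ^ 2 = 1 + x ^ 2 := Real.sq_sqrt (by positivity)

lemma jap_half (x : ℝ) : jap x ≤ 2 * jap (x / 2) := by
  have := jap_sq x
  have := jap_sq (x / 2)
  have := jap_pos x
  have := jap_pos (x / 2)
  nlinarith

@[fun_prop] lemma jap_cont : Continuous jap := by unfold jap; fun_prop

@[fun_prop] lemma jap_meas : Measurable jap := jap_cont.measurable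

lemma jap_near {x y : ℝ} (h : |x - y| ≤ 1) : jap x ≤ 2 * jap y := by
  have h1 := jap_sq x
  have h2 := jap_sq y
  have := jap_pos x
  have := jap_pos y
  have h3 : (x - y) ^ 2 ≤ 1 := by rw [← sq_abs]; nlinarith [abs_nonneg (x - y)]
  nlinarith [sq_nonneg (x - 2 * y)]

lemma jap_int {a : ℝ} (ha : 1 < a) : ∫⁻ t, ENNReal.ofReal (jap t ^ (-a)) ≠ ⊤ := by
  have h : Integrable (fun t : ℝ => jap t ^ (-a)) volume := by
    have := integrable_rpow_neg_one_add_norm_sq (E := ℝ) (μ := volume) (r := a) (by simpa using ha)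
    refine this.congr (ae_of_all _ fun t => ?_)
    simp only [jap, Real.norm_eq_abs, sq_abs]
    rw [Real.sqrt_eq_rpow, ← Real.rpow_mul (by positivity)]
    congr 1; ring
  exact h.lintegral_lt_top.ne

/-- Comparison of a lattice sum with an integral. -/
lemma sum_le_int {lam : ℝ} (c : ℝ) (f : ℤ → ℝ≥0∞) (φ : ℝ → ℝ≥0∞)
    (h : ∀ m : ℤ, ∀ y ∈ Set.Ioo ((m : ℝ) / lam - c) (((m : ℝ) + 1) / lam - c), f m ≤ φ y) :
    ∫⁻ m, f m ∂(muL lam) ≤ ∫⁻ t, φ t := by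
  rw [lintegral_muL, ← ENNReal.tsum_mul_left]
  set I : ℤ → Set ℝ := fun m => Set.Ioo ((m : ℝ) / lam - c) (((m : ℝ) + 1) / lam - c) with hI
  have hd : Pairwise (Function.onFun Disjoint I) := by
    intro m m' hne
    have := Set.pairwise_disjoint_Ioo_add_zsmul (-c) (1 / lam) hne
    have e : ∀ m : ℤ, Set.Ioo (-c + m • (1 / lam)) (-c + (m + 1) • (1 / lam)) = I m := by
      intro m
      simp only [hI, zsmul_eq_mul]
      congr 1 <;> push_cast <;> ring
    simpa only [Function.onFun, e] using this
  calc _ ≤ ∑' m, ∫⁻ t in I m, φ t := by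
        refine ENNReal.tsum_le_tsum fun m => ?_
        calc ENNReal.ofReal (1 / lam) * f m = ∫⁻ t in I m, f m := by
              rw [setLIntegral_const, hI, Real.volume_Ioo, mul_comm]
              congr 2; ring
          _ ≤ _ := setLIntegral_mono' measurableSet_Ioo fun y hy => h m y hy
    _ = ∫⁻ t in ⋃ m, I m, φ t := (lintegral_iUnion (fun m => measurableSet_Ioo) hd _).symm
    _ ≤ _ := setLIntegral_le_lintegral _ _

/-- The bound is uniform in `λ` and in the translation because the lattice spacing is at most `1`. -/
lemma jap_sum {a : ℝ} (ha : 1 < a) : ∃ C : ℝ≥0∞, C ≠ ⊤ ∧ ∀ lam : ℝ, 1 ≤ lam → ∀ c : ℝ,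
    ∫⁻ m, ENNReal.ofReal (jap ((m : ℝ) / lam - c) ^ (-a)) ∂(muL lam) ≤ C := by
  refine ⟨∫⁻ t, ENNReal.ofReal (2 ^ a) * ENNReal.ofReal (jap t ^ (-a)), ?_, ?_⟩
  · rw [lintegral_const_mul _ (by fun_prop)]
    exact ENNReal.mul_ne_top (by simp) (jap_int ha)
  · intro lam hl c
    refine sum_le_int c _ _ fun m y hy => ?_
    rw [← ENNReal.ofReal_mul (by positivity)]
    apply ENNReal.ofReal_le_ofReal
    have h1 : jap y ≤ 2 * jap ((m : ℝ) / lam - c) := by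
      apply jap_near
      rw [abs_le]
      have : 1 / lam ≤ 1 := by rw [div_le_one (by linarith)]; exact hl
      have h2 := hy.1
      have h3 := hy.2
      rw [add_div] at h3
      constructor <;> linarith
    have hp := jap_pos ((m : ℝ) / lam - c)
    have := Real.rpow_le_rpow_of_nonpos (jap_pos y) h1 (by linarith : -a ≤ 0)
    rw [Real.mul_rpow (by norm_num) hp.le] at this
    calc _ = 2 ^ a * (2 ^ (-a) * jap ((m : ℝ) / lam - c) ^ (-a)) := by
          rw [← mul_assoc, ← Real.rpow_add (by norm_num)]; simp
      _ ≤ _ := by gcongr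

/-- This comparison lets `q(m/λ)` be bounded on a lattice cell adjacent to `m/λ`. -/
lemma qr_half {x y : ℝ} (hy : y ≠ 0) (h : |y| ≤ 2 * |x|) : qr x ≤ 2 * qr y := by
  unfold qr
  have y0 : 0 < |y| := abs_pos.mpr hy
  have x0 : 0 < |x| := by linarith
  have h1 : (2 * |x|) ^ (-(1 / 4) : ℝ) ≤ |y| ^ (-(1 / 4) : ℝ) :=
    Real.rpow_le_rpow_of_nonpos y0 h (by norm_num)
  have h2 : (2 * (1 + |x|)) ^ (-(3 / 4) : ℝ) ≤ (1 + |y|) ^ (-(3 / 4) : ℝ) :=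
    Real.rpow_le_rpow_of_nonpos (by positivity) (by linarith) (by norm_num)
  rw [Real.mul_rpow (by positivity) (by positivity)] at h1 h2
  have e : (2 : ℝ) * ((2 : ℝ) ^ (-(1 / 4) : ℝ) * (2 : ℝ) ^ (-(3 / 4) : ℝ)) = 1 := by
    rw [← Real.rpow_add (by norm_num)]; norm_num [Real.rpow_neg_one]
  calc |x| ^ (-(1 / 4) : ℝ) * (1 + |x|) ^ (-(3 / 4) : ℝ)
      = (2 * ((2 : ℝ) ^ (-(1 / 4) : ℝ) * (2 : ℝ) ^ (-(3 / 4) : ℝ))) * (|x| ^ (-(1 / 4) : ℝ) * (1 + |x|) ^ (-(3 / 4) : ℝ)) := by rw [e, one_mul]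
    _ = 2 * ((2 ^ (-(1 / 4) : ℝ) * |x| ^ (-(1 / 4) : ℝ)) * (2 ^ (-(3 / 4) : ℝ) * (1 + |x|) ^ (-(3 / 4) : ℝ))) := by ring
    _ ≤ _ := by gcongr

lemma qr_nonneg (x : ℝ) : 0 ≤ qr x := by unfold qr; positivity

@[fun_prop] lemma qr_meas : Measurable qr := by unfold qr; fun_prop

lemma qr_int : ∫⁻ t, ENNReal.ofReal (qr t ^ 2) ≠ ⊤ := by
  have hI : IntegrableOn (fun x : ℝ => |x| ^ (-(1 / 2) : ℝ)) (Set.Ioc (-1) 1) volume := by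
    have h1 : IntegrableOn (fun x : ℝ => |x| ^ (-(1 / 2) : ℝ)) (Set.Ioc 0 1) volume := by
      have := (intervalIntegral.intervalIntegrable_rpow' (a := 0) (b := 1) (r := -(1 / 2)) (by norm_num))
      rw [intervalIntegrable_iff_integrableOn_Ioc_of_le zero_le_one] at this
      refine this.congr_fun (fun x hx => ?_) measurableSet_Ioc
      simp only [abs_of_pos hx.1]
    have h2 : IntegrableOn (fun x : ℝ => |x| ^ (-(1 / 2) : ℝ)) (Set.Ioc (-1) 0) volume := by
      rw [← intervalIntegrable_iff_integrableOn_Ioc_of_le zero_le_one] at h1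
      rw [← intervalIntegrable_iff_integrableOn_Ioc_of_le (by norm_num)]
      have := ((IntervalIntegrable.iff_comp_neg (by simp)).mp h1).symm
      simpa using this
    rw [← Set.Ioc_union_Ioc_eq_Ioc (by norm_num : (-1 : ℝ) ≤ 0) zero_le_one]
    exact h2.union h1
  have hJ : Integrable (fun x : ℝ => 2 * (1 + ‖x‖) ^ (-(2 : ℝ))) volume :=
    (integrable_one_add_norm (by simp)).const_mul 2
  have hs : Integrable (fun x => Set.indicator (Set.Ioc (-1 : ℝ) 1) (fun x : ℝ => |x| ^ (-(1 / 2) : ℝ)) x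
      + 2 * (1 + ‖x‖) ^ (-(2 : ℝ))) volume :=
    ((integrable_indicator_iff measurableSet_Ioc).mpr hI).add hJ
  refine ne_top_of_le_ne_top hs.lintegral_lt_top.ne (lintegral_mono fun x => ENNReal.ofReal_le_ofReal ?_)
  have e1 : qr x ^ 2 = |x| ^ (-(1 / 2) : ℝ) * (1 + |x|) ^ (-(3 / 2) : ℝ) := by
    rw [qr, mul_pow, ← Real.rpow_mul_natCast (by positivity), ← Real.rpow_mul_natCast (by positivity)]
    norm_num
  rw [e1]
  have p : 0 ≤ (1 + ‖x‖) ^ (-(2 : ℝ)) := by positivity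
  by_cases hx : x ∈ Set.Ioc (-1 : ℝ) 1
  · rw [Set.indicator_of_mem hx]
    have : (1 + |x|) ^ (-(3 / 2) : ℝ) ≤ 1 :=
      Real.rpow_le_one_of_one_le_of_nonpos (by linarith [abs_nonneg x]) (by norm_num)
    have h0 : 0 ≤ |x| ^ (-(1 / 2) : ℝ) := by positivity
    nlinarith
  · rw [Set.indicator_of_notMem hx, zero_add]
    have hx1 : 1 ≤ |x| := by
      by_contra! h
      rw [abs_lt] at h
      exact hx ⟨h.1, h.2.le⟩
    have h1 : |x| ^ (-(1 / 2) : ℝ) ≤ ((1 / 2) * (1 + |x|)) ^ (-(1 / 2) : ℝ) :=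
      Real.rpow_le_rpow_of_nonpos (by positivity) (by linarith) (by norm_num)
    rw [Real.mul_rpow (by norm_num) (by positivity)] at h1
    have h2 : (1 / 2 : ℝ) ^ (-(1 / 2) : ℝ) ≤ 2 := by
      calc (1 / 2 : ℝ) ^ (-(1 / 2) : ℝ) ≤ (1 / 2 : ℝ) ^ (-1 : ℝ) :=
            Real.rpow_le_rpow_of_exponent_ge (by norm_num) (by norm_num) (by norm_num)
        _ = 2 := by rw [Real.rpow_neg_one]; norm_num
    calc |x| ^ (-(1 / 2) : ℝ) * (1 + |x|) ^ (-(3 / 2) : ℝ)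
        ≤ (2 * (1 + |x|) ^ (-(1 / 2) : ℝ)) * (1 + |x|) ^ (-(3 / 2) : ℝ) := by
          gcongr
          exact h1.trans (by gcongr)
      _ = 2 * (1 + ‖x‖) ^ (-(2 : ℝ)) := by
          rw [mul_assoc, ← Real.rpow_add (by positivity)]; norm_num

/-- The weight `q(k)` at `k = m/λ`, set to `0` at the frequency `0`, where `q` is of no use. -/
noncomputable def qL (lam : ℝ) (m : ℤ) : ℝ≥0∞ := if m = 0 then 0 else ENNReal.ofReal (qr ((m : ℝ) / lam))

/-- Square summability of `q` on the lattice, uniformly in `λ`. -/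
lemma qL_sum : ∃ C : ℝ≥0∞, C ≠ ⊤ ∧ ∀ lam : ℝ, 1 ≤ lam → ∫⁻ m, qL lam m ^ 2 ∂(muL lam) ≤ C := by
  refine ⟨∫⁻ t, ENNReal.ofReal 4 * ENNReal.ofReal (qr t ^ 2), ?_, ?_⟩
  · rw [lintegral_const_mul _ (by fun_prop)]
    exact ENNReal.mul_ne_top (by simp) qr_int
  · intro lam hl
    have l0 : 0 < lam := by linarith
    refine sum_le_int 0 _ _ fun m y hy => ?_
    rw [qL]
    split_ifs with hm
    · simp
    rw [sub_zero, sub_zero, Set.mem_Ioo, div_lt_iff₀ l0, lt_div_iff₀ l0] at hy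
    rw [← ENNReal.ofReal_mul (by positivity), ← ENNReal.ofReal_pow (qr_nonneg _)]
    apply ENNReal.ofReal_le_ofReal
    have hq : qr ((m : ℝ) / lam) ≤ 2 * qr y := by
      have key : y * lam ≠ 0 ∧ |y * lam| ≤ 2 * |(m : ℝ)| := by
        rcases lt_or_gt_of_ne hm with h | h
        · have h' : (m : ℝ) ≤ -1 := by exact_mod_cast Int.le_sub_one_of_lt h
          refine ⟨by linarith, ?_⟩
          rw [abs_of_neg (by linarith : y * lam < 0), abs_of_neg (by linarith : (m : ℝ) < 0)]
          linarith
        · have h' : (1 : ℝ) ≤ m := by exact_mod_cast h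
          refine ⟨by linarith, ?_⟩
          rw [abs_of_pos (by linarith : 0 < y * lam), abs_of_pos (by linarith : 0 < (m : ℝ))]
          linarith
      refine qr_half (left_ne_zero_of_mul key.1) ?_
      rw [abs_div, abs_of_pos l0, ← mul_div_assoc, le_div_iff₀ l0]
      have := key.2
      rwa [abs_mul, abs_of_pos l0] at this
    have := qr_nonneg ((m : ℝ) / lam)
    nlinarith

/-! ### Convolution in `τ` and level sets of the phase -/

/-- The convolution in `τ` of `⟨·⟩^{-2/3}` with the integrable `⟨·⟩^{-3/2}` decays like the slower
factor. -/
lemma tau_int : ∃ C : ℝ≥0∞, C ≠ ⊤ ∧ ∀ a b : ℝ,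
    ∫⁻ τ, ENNReal.ofReal (jap (τ - a) ^ (-(2 / 3) : ℝ) * jap (τ - b) ^ (-(3 / 2) : ℝ)) ≤
      C * ENNReal.ofReal (jap (a - b) ^ (-(2 / 3) : ℝ)) := by
  set I := ∫⁻ t, ENNReal.ofReal (jap t ^ (-(3 / 2) : ℝ)) with hI
  have hIf : I ≠ ⊤ := jap_int (by norm_num)
  refine ⟨ENNReal.ofReal (2 ^ (2 / 3 : ℝ)) * (I + I), ENNReal.mul_ne_top (by simp) (by simp [hIf]), ?_⟩
  intro a b
  have pt : ∀ τ, jap (τ - a) ^ (-(2 / 3) : ℝ) * jap (τ - b) ^ (-(3 / 2) : ℝ) ≤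
      2 ^ (2 / 3 : ℝ) * jap (a - b) ^ (-(2 / 3) : ℝ) *
        (jap (τ - a) ^ (-(3 / 2) : ℝ) + jap (τ - b) ^ (-(3 / 2) : ℝ)) := by
    intro τ
    have p0 := jap_pos (a - b)
    have p1 := jap_pos (τ - a)
    have p2 := jap_pos (τ - b)
    have key : ∀ x : ℝ, jap (a - b) ≤ 2 * jap x →
        jap x ^ (-(2 / 3) : ℝ) ≤ 2 ^ (2 / 3 : ℝ) * jap (a - b) ^ (-(2 / 3) : ℝ) := by
      intro x hx
      have px := jap_pos x
      have := Real.rpow_le_rpow_of_nonpos p0 hx (by norm_num : (-(2 / 3) : ℝ) ≤ 0)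
      rw [Real.mul_rpow (by norm_num) px.le] at this
      calc _ = 2 ^ (2 / 3 : ℝ) * (2 ^ (-(2 / 3) : ℝ) * jap x ^ (-(2 / 3) : ℝ)) := by
            rw [← mul_assoc, ← Real.rpow_add (by norm_num)]; simp
        _ ≤ _ := by gcongr
    have q1 : 0 ≤ jap (τ - a) ^ (-(3 / 2) : ℝ) := by positivity
    have q2 : 0 ≤ jap (τ - b) ^ (-(3 / 2) : ℝ) := by positivity
    have half := jap_half (a - b)
    -- The larger of `|τ - a|` and `|τ - b|` is at least `|a - b| / 2`.
    rcases le_total |τ - b| |τ - a| with h | h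
    · have h1 : |(a - b) / 2| ≤ |τ - a| := by
        rw [abs_div, abs_two]
        have := abs_sub (τ - b) (τ - a)
        rw [show τ - b - (τ - a) = a - b by ring] at this
        linarith
      have h2 := key (τ - a) (half.trans (by have := jap_mono h1; linarith))
      calc _ ≤ 2 ^ (2 / 3 : ℝ) * jap (a - b) ^ (-(2 / 3) : ℝ) * jap (τ - b) ^ (-(3 / 2) : ℝ) := by gcongr
        _ ≤ _ := by gcongr; linarith
    · have h1 : |(a - b) / 2| ≤ |τ - b| := by
        rw [abs_div, abs_two]
        have := abs_sub (τ - b) (τ - a)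
        rw [show τ - b - (τ - a) = a - b by ring] at this
        linarith
      have h2 := key (τ - b) (half.trans (by have := jap_mono h1; linarith))
      have h3 : jap (τ - b) ^ (-(5 / 6) : ℝ) ≤ jap (τ - a) ^ (-(5 / 6) : ℝ) :=
        Real.rpow_le_rpow_of_nonpos p1 (jap_mono h) (by norm_num)
      calc _ = jap (τ - a) ^ (-(2 / 3) : ℝ) * (jap (τ - b) ^ (-(2 / 3) : ℝ) * jap (τ - b) ^ (-(5 / 6) : ℝ)) := by
            rw [← Real.rpow_add p2]; norm_num
        _ ≤ jap (τ - a) ^ (-(2 / 3) : ℝ) * (2 ^ (2 / 3 : ℝ) * jap (a - b) ^ (-(2 / 3) : ℝ) * jap (τ - a) ^ (-(5 / 6) : ℝ)) := by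
            gcongr
        _ = 2 ^ (2 / 3 : ℝ) * jap (a - b) ^ (-(2 / 3) : ℝ) * (jap (τ - a) ^ (-(2 / 3) : ℝ) * jap (τ - a) ^ (-(5 / 6) : ℝ)) := by ring
        _ = 2 ^ (2 / 3 : ℝ) * jap (a - b) ^ (-(2 / 3) : ℝ) * jap (τ - a) ^ (-(3 / 2) : ℝ) := by
            rw [← Real.rpow_add p1]; norm_num
        _ ≤ _ := by gcongr; linarith
  calc _ ≤ ∫⁻ τ, ENNReal.ofReal (2 ^ (2 / 3 : ℝ) * jap (a - b) ^ (-(2 / 3) : ℝ)) *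
        (ENNReal.ofReal (jap (τ - a) ^ (-(3 / 2) : ℝ)) + ENNReal.ofReal (jap (τ - b) ^ (-(3 / 2) : ℝ))) := by
        refine lintegral_mono fun τ => ?_
        have p0 := jap_pos (a - b)
        have p1 := jap_pos (τ - a)
        have p2 := jap_pos (τ - b)
        rw [← ENNReal.ofReal_add (by positivity) (by positivity), ← ENNReal.ofReal_mul (by positivity)]
        exact ENNReal.ofReal_le_ofReal (pt τ)
    _ = ENNReal.ofReal (2 ^ (2 / 3 : ℝ) * jap (a - b) ^ (-(2 / 3) : ℝ)) * (I + I) := by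
        rw [lintegral_const_mul _ (by fun_prop), lintegral_add_left (by fun_prop),
          lintegral_sub_right_eq_self (fun t => ENNReal.ofReal (jap t ^ (-(3 / 2) : ℝ))),
          lintegral_sub_right_eq_self (fun t => ENNReal.ofReal (jap t ^ (-(3 / 2) : ℝ)))]
    _ = _ := by
        rw [ENNReal.ofReal_mul (by positivity)]; ring

/-- The phase `k^{2j+1} - (k-k₁)^{2j+1}` as a function of the centred variable `X = k - k₁/2`, with
`a = k₁/2`. -/
def phA (j : ℕ) (a X : ℝ) : ℝ := (X + a) ^ (2 * j + 1) - (X - a) ^ (2 * j + 1)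

/-- A companion of `phA`: the pair `(phA, phB)` satisfies a recursion in `j` whose coefficients are
nonnegative and nondecreasing in `X ≥ 0` when `a ≥ 0`. -/
def phB (j : ℕ) (a X : ℝ) : ℝ := X * ((X + a) ^ (2 * j + 1) + (X - a) ^ (2 * j + 1))

lemma phA_succ (j : ℕ) (a X : ℝ) : phA (j + 1) a X = (X ^ 2 + a ^ 2) * phA j a X + 2 * a * phB j a X := by
  simp only [phA, phB, show 2 * (j + 1) + 1 = (2 * j + 1) + 2 by ring, pow_add _ (2 * j + 1) 2]; ring

lemma phB_succ (j : ℕ) (a X : ℝ) : phB (j + 1) a X = (X ^ 2 + a ^ 2) * phB j a X + 2 * a * X ^ 2 * phA j a X := by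
  simp only [phA, phB, show 2 * (j + 1) + 1 = (2 * j + 1) + 2 by ring, pow_add _ (2 * j + 1) 2]; ring

/-- Lower bounds and monotonicity in `X ≥ 0`, by the joint recursion for `phA` and `phB`. -/
lemma ph_mono {a X Y : ℝ} (ha : 1 / 2 ≤ a) (hY : 0 ≤ Y) (hXY : Y ≤ X) (j : ℕ) :
    (1 / 4 : ℝ) ^ j ≤ phA j a Y ∧ phA j a Y ≤ phA j a X ∧ 0 ≤ phB j a Y ∧ phB j a Y ≤ phB j a X := by
  have hsq : Y ^ 2 ≤ X ^ 2 := by gcongr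
  induction j with
  | zero => simp [phA, phB]; refine ⟨by linarith, by nlinarith, by nlinarith⟩
  | succ j ih =>
    obtain ⟨h1, h2, h3, h4⟩ := ih
    have h0 : 0 < (1 / 4 : ℝ) ^ j := by positivity
    have hA : 0 ≤ phA j a Y := h0.le.trans h1
    have ha2 : 1 / 4 ≤ a ^ 2 := by nlinarith
    have hc : 0 ≤ 2 * a := by linarith
    simp only [phA_succ, phB_succ]
    refine ⟨?_, ?_, ?_, ?_⟩
    · rw [pow_succ]
      have : (1 / 4 : ℝ) ^ j * (1 / 4) ≤ phA j a Y * (Y ^ 2 + a ^ 2) := by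
        gcongr; nlinarith [sq_nonneg Y]
      nlinarith [mul_nonneg hc h3]
    · gcongr
    · positivity
    · gcongr

/-- The phase increases at least quadratically on `X ≥ 0`. -/
lemma ph_gap {a X Y : ℝ} (ha : 1 / 2 ≤ a) (hY : 0 ≤ Y) (hXY : Y ≤ X) (j : ℕ) :
    (1 / 4 : ℝ) ^ j * (X - Y) ^ 2 ≤ phA (j + 1) a X - phA (j + 1) a Y := by
  obtain ⟨h1, h2, h3, h4⟩ := ph_mono ha hY hXY j
  rw [phA_succ, phA_succ]
  have e : (X - Y) ^ 2 ≤ X ^ 2 - Y ^ 2 := by nlinarith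
  have i1 : (1 / 4 : ℝ) ^ j * (X - Y) ^ 2 ≤ phA j a X * (X ^ 2 - Y ^ 2) :=
    mul_le_mul (h1.trans h2) e (sq_nonneg _) ((by positivity : (0:ℝ) ≤ (1 / 4 : ℝ) ^ j).trans (h1.trans h2))
  have i2 : 2 * a * phB j a Y ≤ 2 * a * phB j a X := by gcongr
  have i3 : (Y ^ 2 + a ^ 2) * phA j a Y ≤ (Y ^ 2 + a ^ 2) * phA j a X := by gcongr
  nlinarith

lemma ph_even (j : ℕ) (a X : ℝ) : phA j a |X| = phA j a X := by
  rcases abs_choice X with h | h <;> rw [h]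
  have ho : Odd (2 * j + 1) := ⟨j, rfl⟩
  simp only [phA]
  rw [show -X + a = -(X - a) by ring, show -X - a = -(X + a) by ring, ho.neg_pow, ho.neg_pow]; ring

/-- The phase is quadratically far from any level `T`, outside two points `±Y`. -/
lemma ph_level {a : ℝ} (ha : 1 / 2 ≤ a) (j : ℕ) (T : ℝ) :
    ∃ Y : ℝ, ∀ X : ℝ, (1 / 4 : ℝ) ^ j * (|X| - Y) ^ 2 ≤ |T - phA (j + 1) a X| := by
  set c := (1 / 4 : ℝ) ^ j with hc
  have c0 : 0 < c := by positivity
  by_cases hT : T ≤ phA (j + 1) a 0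
  · refine ⟨0, fun X => ?_⟩
    have := ph_gap ha le_rfl (abs_nonneg X) j
    rw [ph_even] at this
    rw [abs_sub_comm]
    exact (this.trans (by linarith)).trans (le_abs_self _)
  · push Not at hT
    set R := 1 + (T - phA (j + 1) a 0) / c with hR
    have R1 : 1 ≤ R := by
      have : 0 ≤ (T - phA (j + 1) a 0) / c := div_nonneg (by linarith) c0.le
      linarith
    have hbig : T ≤ phA (j + 1) a R := by
      have h := ph_gap ha le_rfl (by linarith : (0:ℝ) ≤ R) j
      have h2 : c * R = c + (T - phA (j + 1) a 0) := by rw [hR]; field_simp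
      rw [← hc] at h
      nlinarith
    have cont : ContinuousOn (phA (j + 1) a) (Set.Icc 0 R) := by unfold phA; fun_prop
    obtain ⟨Y, hY, hYT⟩ := intermediate_value_Icc (by linarith : (0:ℝ) ≤ R) cont ⟨hT.le, hbig⟩
    refine ⟨Y, fun X => ?_⟩
    rw [← hYT, ← ph_even (j + 1) a X]
    rcases le_total Y |X| with h | h
    · rw [abs_sub_comm]
      exact (ph_gap ha hY.1 h j).trans (le_abs_self _)
    · rw [show (|X| - Y) ^ 2 = (Y - |X|) ^ 2 by ring]
      exact (ph_gap ha (abs_nonneg X) h j).trans (le_abs_self _)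

lemma ph_level' {a : ℝ} (ha : 1 / 2 ≤ |a|) (j : ℕ) (T : ℝ) :
    ∃ Y : ℝ, ∀ X : ℝ, (1 / 4 : ℝ) ^ j * (|X| - Y) ^ 2 ≤ |T - phA (j + 1) a X| := by
  rcases abs_choice a with h | h <;> rw [h] at ha
  · exact ph_level ha j T
  · obtain ⟨Y, hY⟩ := ph_level ha j (-T)
    refine ⟨Y, fun X => (hY X).trans_eq ?_⟩
    rw [← abs_neg]
    congr 1
    simp only [phA]
    ring

/-- The sum over `k` of `⟨T - phase⟩^{-2/3}` is bounded uniformly in `λ`, `k₁` and `T`: by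
`ph_level` it is controlled by two translates of the summable `⟨k⟩^{-4/3}`.  For `k₁` close to `0` the phase is
flat, so `|k₁| ≥ 1` cannot be dropped. -/
lemma freq_sum (j : ℕ) (hj : 1 ≤ j) : ∃ C : ℝ≥0∞, C ≠ ⊤ ∧ ∀ lam : ℝ, 1 ≤ lam → ∀ k₁ : ℝ, 1 ≤ |k₁| →
    ∀ T : ℝ, ∫⁻ m : ℤ, ENNReal.ofReal (jap (T - (((m : ℝ) / lam) ^ (2 * j + 1) -
      ((m : ℝ) / lam - k₁) ^ (2 * j + 1))) ^ (-(2 / 3) : ℝ)) ∂(muL lam) ≤ C := by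
  obtain ⟨C, hC, h⟩ := jap_sum (a := 4 / 3) (by norm_num)
  obtain ⟨i, rfl⟩ := Nat.exists_eq_add_of_le' hj
  set c := (1 / 4 : ℝ) ^ i with hc
  have c0 : 0 < c := by positivity
  have c1 : c ≤ 1 := pow_le_one₀ (by norm_num) (by norm_num)
  refine ⟨ENNReal.ofReal ((c / 2) ^ (-(2 / 3) : ℝ)) * (C + C), ENNReal.mul_ne_top (by simp) (by simp [hC]), ?_⟩
  intro lam hl k₁ hk T
  have hl0 : 0 < lam := by linarith
  obtain ⟨Y, hY⟩ := ph_level' (a := k₁ / 2) (by rw [abs_div, abs_two]; linarith) i T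
  have pt : ∀ k : ℝ, jap (T - (k ^ (2 * (i + 1) + 1) - (k - k₁) ^ (2 * (i + 1) + 1))) ^ (-(2 / 3) : ℝ) ≤
      (c / 2) ^ (-(2 / 3) : ℝ) * (jap (k - (k₁ / 2 + Y)) ^ (-(4 / 3) : ℝ) + jap (k - (k₁ / 2 - Y)) ^ (-(4 / 3) : ℝ)) := by
    intro k
    have h1 := hY (k - k₁ / 2)
    have e : phA (i + 1) (k₁ / 2) (k - k₁ / 2) = k ^ (2 * (i + 1) + 1) - (k - k₁) ^ (2 * (i + 1) + 1) := by
      rw [phA]; congr 2 <;> ring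
    rw [e] at h1
    set θ := T - (k ^ (2 * (i + 1) + 1) - (k - k₁) ^ (2 * (i + 1) + 1))
    set d := |k - k₁ / 2| - Y with hd
    have b := jap_br θ
    have h2 : c / 2 * jap d ^ 2 ≤ jap θ := by
      rw [jap_sq]
      have := b.one
      have := b.ge
      nlinarith
    have pd := jap_pos d
    have h3 : jap θ ^ (-(2 / 3) : ℝ) ≤ (c / 2) ^ (-(2 / 3) : ℝ) * jap d ^ (-(4 / 3) : ℝ) := by
      refine (Real.rpow_le_rpow_of_nonpos (by positivity) h2 (by norm_num)).trans_eq ?_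
      rw [Real.mul_rpow (by positivity) (by positivity), ← Real.rpow_natCast_mul pd.le]
      norm_num
    refine h3.trans ?_
    have p1 := jap_pos (k - (k₁ / 2 + Y))
    have p2 := jap_pos (k - (k₁ / 2 - Y))
    have q1 : 0 ≤ jap (k - (k₁ / 2 + Y)) ^ (-(4 / 3) : ℝ) := by positivity
    have q2 : 0 ≤ jap (k - (k₁ / 2 - Y)) ^ (-(4 / 3) : ℝ) := by positivity
    gcongr
    rcases abs_choice (k - k₁ / 2) with hh | hh
    · rw [hd, hh, show k - k₁ / 2 - Y = k - (k₁ / 2 + Y) by ring]; linarith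
    · rw [hd, hh, show -(k - k₁ / 2) - Y = -(k - (k₁ / 2 - Y)) by ring, jap_neg]; linarith
  calc _ ≤ ∫⁻ m : ℤ, ENNReal.ofReal ((c / 2) ^ (-(2 / 3) : ℝ)) *
        (ENNReal.ofReal (jap ((m : ℝ) / lam - (k₁ / 2 + Y)) ^ (-(4 / 3) : ℝ)) +
          ENNReal.ofReal (jap ((m : ℝ) / lam - (k₁ / 2 - Y)) ^ (-(4 / 3) : ℝ))) ∂(muL lam) := by
        refine lintegral_mono fun m => ?_
        have p1 := jap_pos ((m : ℝ) / lam - (k₁ / 2 + Y))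
        have p2 := jap_pos ((m : ℝ) / lam - (k₁ / 2 - Y))
        rw [← ENNReal.ofReal_add (by positivity) (by positivity), ← ENNReal.ofReal_mul (by positivity)]
        exact ENNReal.ofReal_le_ofReal (pt _)
    _ ≤ _ := by
        rw [lintegral_const_mul _ .of_discrete, lintegral_add_left .of_discrete]
        gcongr
        · exact h lam hl _
        · exact h lam hl _

/-- `λ⁻¹ ∑_k ∫ dτ` as a measure on `ℤ × ℝ`. -/
noncomputable def PL (lam : ℝ) : Measure (ℤ × ℝ) := (muL lam).prod volume

instance (lam : ℝ) : SFinite (muL lam) := by unfold muL; infer_instance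
instance (lam : ℝ) : (muL lam).IsAddLeftInvariant := by unfold muL; infer_instance
instance (lam : ℝ) : SFinite (PL lam) := by unfold PL; infer_instance
instance (lam : ℝ) : (PL lam).IsAddLeftInvariant := by unfold PL; infer_instance

instance (lam : ℝ) : (muL lam).IsNegInvariant where
  neg_eq_self := by
    rw [Measure.neg_def]
    ext S hS
    rw [Measure.map_apply (by fun_prop) hS]
    simp only [muL, Measure.smul_apply, smul_eq_mul]
    congr 1
    have := (Equiv.neg ℤ).injective
    rw [show (Neg.neg ⁻¹' S : Set ℤ) = (Equiv.neg ℤ) ⁻¹' S from rfl,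
      Measure.count_apply (Set.to_countable _).measurableSet, Measure.count_apply hS]
    rw [Set.encard_preimage_of_injective_subset_range this (by simp)]

instance (lam : ℝ) : (PL lam).IsNegInvariant where
  neg_eq_self := by
    have h1 : MeasurePreserving (Neg.neg : ℤ → ℤ) (muL lam) (muL lam) := Measure.measurePreserving_neg _
    have h2 : MeasurePreserving (Neg.neg : ℝ → ℝ) volume volume := Measure.measurePreserving_neg _
    exact (h1.prod h2).map_eq

lemma lintegral_PL (lam : ℝ) {f : ℤ × ℝ → ℝ≥0∞} (hf : Measurable f) :
    ∫⁻ p, f p ∂(PL lam) = ∫⁻ m, (∫⁻ τ, f (m, τ)) ∂(muL lam) := lintegral_prod _ hf.aemeasurable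

/-! ### The pointwise bound by four kernels -/

section ptwise
variable (j : ℕ) (lam s : ℝ)

/-- The bracket `⟨σ⟩` of the modulation at a point of `ℤ × ℝ`. -/
noncomputable def jsg (p : ℤ × ℝ) : ℝ := jap (sigL j lam p.1 p.2)

/-- The bracket `⟨k⟩` of the frequency. -/
noncomputable def jk (m : ℤ) : ℝ := jap ((m : ℝ) / lam)

/-- The function `f` multiplied by the weights of the `X^s` norm on the three regions.  Where the
regions overlap the weighted copies are added. -/
noncomputable def wf (f : ℤ → ℝ → ℝ≥0∞) (p : ℤ × ℝ) : ℝ≥0∞ :=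
  ENNReal.ofReal (jk lam p.1 ^ s * jsg j lam p ^ ((2 * (j : ℝ) - 1) / (2 * (j : ℝ)))) *
      restr (D1 j lam ∪ D5 j lam) f p.1 p.2 +
    ENNReal.ofReal (jk lam p.1 ^ ((1 - 2 * (j : ℝ)) * s - 1) * jsg j lam p ^ (s + 1)) *
      restr (D2 j lam) f p.1 p.2 +
    ENNReal.ofReal (jk lam p.1 ^ (-s / (j : ℝ) - 1) * jsg j lam p ^ (s / (j : ℝ) + 1)) *
      restr (D3 j lam ∪ D4 j lam) f p.1 p.2

/-- `⟨k⟩^s f`. -/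
noncomputable def gf (f : ℤ → ℝ → ℝ≥0∞) (p : ℤ × ℝ) : ℝ≥0∞ :=
  ENNReal.ofReal (jk lam p.1 ^ s) * f p.1 p.2

/-- Sum of the frequency weights at the three frequencies. -/
noncomputable def Q3 (m m₁ m₂ : ℤ) : ℝ≥0∞ := qL lam m + qL lam m₁ + qL lam m₂

/-- The indicator of `|k| ≥ 1`. -/
noncomputable def chi (m : ℤ) : ℝ≥0∞ := if 1 ≤ |(m : ℝ) / lam| then 1 else 0

/-- The four kernels that bound the integrand when `|σ₂| ≤ |σ₁|`:
* the output modulation dominates;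
* `σ₁` dominates and the first input lies in `D₁`, `D₅` or `D₄`;
* `σ₁` dominates, the first input lies in `D₂ ∪ D₃` and the second one in `D₁ ∪ D₅`; this kernel has no
  frequency weight;
* `σ₁` dominates, the first input lies in `D₂ ∪ D₃` and the second one in `D₂ ∪ D₃ ∪ D₄`. -/
noncomputable def Bf (f₁ f₂ : ℤ → ℝ → ℝ≥0∞) (p p₁ p₂ : ℤ × ℝ) : ℝ≥0∞ :=
  Q3 lam p.1 p₁.1 p₂.1 * (gf lam s f₁ p₁ * gf lam s f₂ p₂) +
  Q3 lam p.1 p₁.1 p₂.1 * (ENNReal.ofReal ((jsg j lam p)⁻¹) * (wf j lam s f₁ p₁ * gf lam s f₂ p₂)) +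
  chi lam p₁.1 * (ENNReal.ofReal ((jsg j lam p)⁻¹ * jsg j lam p₂ ^ (-(3 / 4) : ℝ)) *
    (wf j lam s f₁ p₁ * wf j lam s f₂ p₂)) +
  Q3 lam p.1 p₁.1 p₂.1 * (ENNReal.ofReal (jsg j lam p ^ (-1 - 1 / (2 * (2 * (j : ℝ) + 1)))) *
    (wf j lam s f₁ p₁ * wf j lam s f₂ p₂))

variable {j lam s}

lemma jsg_pos (p : ℤ × ℝ) : 0 < jsg j lam p := jap_pos _
lemma jk_pos (m : ℤ) : 0 < jk lam m := jap_pos _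

/-- The regions cover all points with nonzero frequency, so `wf` is at least `f` times one of the
three weights. -/
lemma wf_ge (hl : 1 ≤ lam) (f : ℤ → ℝ → ℝ≥0∞) {p : ℤ × ℝ} (hp : p.1 ≠ 0) :
    ∃ W, InW j s |(p.1 : ℝ) / lam| (jk lam p.1) |sigL j lam p.1 p.2| (jsg j lam p) W ∧
      ENNReal.ofReal W * f p.1 p.2 ≤ wf j lam s f p := by
  have l0 : 0 < lam := by linarith
  have hk : 1 / lam ≤ |(p.1 : ℝ) / lam| := by
    rw [abs_div, abs_of_pos l0]
    gcongr
    exact_mod_cast Int.one_le_abs hp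
  by_cases h1 : p ∈ D1 j lam ∪ D5 j lam
  · refine ⟨_, Or.inl ⟨?_, rfl⟩, ?_⟩
    · rcases h1 with h | h
      · exact Or.inl h
      · exact Or.inr h.2
    · rw [wf, restr, Set.indicator_of_mem h1, add_assoc]
      exact le_self_add
  by_cases h2 : p ∈ D2 j lam
  · refine ⟨_, Or.inr (Or.inl ⟨h2, rfl⟩), ?_⟩
    rw [wf]
    refine le_trans ?_ (le_add_right le_add_self)
    rw [restr, Set.indicator_of_mem h2]
  have h3 : 2 * (2 * (j : ℝ) + 1) * |(p.1 : ℝ) / lam| ^ (2 * j + 1) < |sigL j lam p.1 p.2| ∧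
      p ∈ D3 j lam ∪ D4 j lam := by
    simp only [Set.mem_union, D1, D2, D3, D4, D5, Set.mem_ofPred_eq] at h1 h2 ⊢
    push Not at h1 h2
    rcases le_total 1 |(p.1 : ℝ) / lam| with h | h
    · have := h2 h (h1.1 h)
      exact ⟨this, Or.inl ⟨h, this⟩⟩
    · have := h1.2 hk h
      exact ⟨this, Or.inr ⟨hk, h, this⟩⟩
  refine ⟨_, Or.inr (Or.inr ⟨h3.1, rfl⟩), ?_⟩
  rw [wf]
  refine le_trans ?_ le_add_self
  rw [restr, Set.indicator_of_mem h3.2]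

lemma enn_aux {L C K A B : ℝ} {a b α β : ℝ≥0∞} (hC : 0 ≤ C) (hK : 0 ≤ K) (hA : 0 ≤ A)
    (h : L ≤ C * (K * (A * B))) (ha : ENNReal.ofReal A * a ≤ α) (hb : ENNReal.ofReal B * b ≤ β) :
    ENNReal.ofReal L * a * b ≤ ENNReal.ofReal C * (ENNReal.ofReal K * (α * β)) := by
  calc _ ≤ ENNReal.ofReal (C * (K * (A * B))) * a * b := by gcongr
    _ = ENNReal.ofReal C * (ENNReal.ofReal K * ((ENNReal.ofReal A * a) * (ENNReal.ofReal B * b))) := by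
        rw [ENNReal.ofReal_mul hC, ENNReal.ofReal_mul hK, ENNReal.ofReal_mul hA]; ring
    _ ≤ _ := by gcongr

/-- Pointwise bound of the integrand by `Bf` when `|σ₂| ≤ |σ₁|`. -/
lemma pw (hj : 2 ≤ j) (hs₁ : -(j : ℝ) + 1 / 2 ≤ s) (s0 : s ≤ -1) :
    ∃ C : ℝ, 0 < C ∧ ∀ lam : ℝ, 1 ≤ lam → ∀ f₁ f₂ : ℤ → ℝ → ℝ≥0∞,
      (∀ τ, f₁ 0 τ = 0) → (∀ τ, f₂ 0 τ = 0) → ∀ p₁ p₂ : ℤ × ℝ,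
      |sigL j lam p₂.1 p₂.2| ≤ |sigL j lam p₁.1 p₁.2| →
      ENNReal.ofReal (|((p₁ + p₂).1 : ℝ) / lam| * jk lam (p₁ + p₂).1 ^ s * (jsg j lam (p₁ + p₂))⁻¹) *
        f₁ p₁.1 p₁.2 * f₂ p₂.1 p₂.2 ≤ ENNReal.ofReal C * Bf j lam s f₁ f₂ (p₁ + p₂) p₁ p₂ := by
  obtain ⟨C, C0, hC⟩ := real_all hj hs₁ s0
  refine ⟨C, C0, ?_⟩
  intro lam hl f₁ f₂ z₁ z₂ p₁ p₂ hσ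
  have l0 : 0 < lam := by linarith
  by_cases h0 : (p₁ + p₂).1 = 0
  · rw [h0]; simp
  by_cases h1 : p₁.1 = 0
  · rw [h1, z₁]; simp
  by_cases h2 : p₂.1 = 0
  · rw [h2, z₂]; simp
  obtain ⟨W₁, i₁, hW₁⟩ := wf_ge (j := j) (s := s) hl f₁ h1
  obtain ⟨W₂, i₂, hW₂⟩ := wf_ge (j := j) (s := s) hl f₂ h2
  have nz : ∀ m : ℤ, m ≠ 0 → (m : ℝ) / lam ≠ 0 := fun m hm => by
    have : (m : ℝ) ≠ 0 := by exact_mod_cast hm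
    positivity
  have hk : ((p₁ + p₂).1 : ℝ) / lam = (p₁.1 : ℝ) / lam + (p₂.1 : ℝ) / lam := by
    rw [Prod.fst_add]; push_cast; ring
  obtain ⟨M, cfg⟩ := exists_cfg (j := j) (by omega) (nz _ h1) (nz _ h2) (by rw [← hk]; exact nz _ h0)
  rw [← hk] at cfg
  set k := ((p₁ + p₂).1 : ℝ) / lam
  set k₁ := (p₁.1 : ℝ) / lam with hk₁
  set k₂ := (p₂.1 : ℝ) / lam with hk₂
  set σ := sigL j lam (p₁ + p₂).1 (p₁ + p₂).2 with hσ0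
  set σ₁ := sigL j lam p₁.1 p₁.2 with hσ1
  set σ₂ := sigL j lam p₂.1 p₂.2 with hσ2
  have rel : σ₁ + σ₂ = σ + (k ^ (2 * j + 1) - k₁ ^ (2 * j + 1) - k₂ ^ (2 * j + 1)) := by
    simp only [hσ0, hσ1, hσ2, sigL, Prod.snd_add, k, k₁, k₂]; ring
  set η := k ^ (2 * j + 1) - k₁ ^ (2 * j + 1) - k₂ ^ (2 * j + 1)
  have qa : ∀ x : ℝ, qr |x| = qr x := fun x => by simp [qr]
  have n0 := qr_nonneg k
  have n1 := qr_nonneg k₁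
  have n2' := qr_nonneg k₂
  have hQ : Q3 lam (p₁ + p₂).1 p₁.1 p₂.1 = ENNReal.ofReal (qr k + qr k₁ + qr k₂) := by
    rw [Q3, qL, qL, qL, if_neg h0, if_neg h1, if_neg h2, ENNReal.ofReal_add (by positivity) n2',
      ENNReal.ofReal_add n0 n1]
  have H1 : |η| ≤ |σ| + |σ₁| + |σ₂| := by
    have : η = σ₁ + σ₂ - σ := by linarith
    rw [this]
    have := abs_sub (σ₁ + σ₂) σ
    have := abs_add_le σ₁ σ₂
    linarith
  have H2 : |σ₁| ≤ |σ| + |σ₂| + |η| := by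
    have : σ₁ = σ + η - σ₂ := by linarith
    rw [this]
    have := abs_sub (σ + η) σ₂
    have := abs_add_le σ η
    linarith
  have J0 := jsg_pos (j := j) (lam := lam) (p₁ + p₂)
  have J2 := jsg_pos (j := j) (lam := lam) p₂
  have K0 := jk_pos (lam := lam) (p₁ + p₂).1
  have K1 := jk_pos (lam := lam) p₁.1
  have K2 := jk_pos (lam := lam) p₂.1
  have W10 := i₁.pos K1 (jsg_pos _)
  have g1 : ENNReal.ofReal (jk lam p₁.1 ^ s) * f₁ p₁.1 p₁.2 ≤ gf lam s f₁ p₁ := le_rfl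
  have g2 : ENNReal.ofReal (jk lam p₂.1 ^ s) * f₂ p₂.1 p₂.2 ≤ gf lam s f₂ p₂ := le_rfl
  have Q0 : 0 ≤ qr k + qr k₁ + qr k₂ := by positivity
  have main := hC |k| |k₁| |k₂| M |η| (jk lam (p₁ + p₂).1) (jk lam p₁.1) (jk lam p₂.1) |σ| |σ₁| |σ₂|
    (jsg j lam (p₁ + p₂)) (jsg j lam p₁) (jsg j lam p₂) (qr k + qr k₁ + qr k₂) W₁ W₂ cfg
    (jap_br _) (jap_br _) (jap_br _) (jap_br _) (jap_br _) (jap_br _)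
    (by rw [qa]; linarith) (by rw [qa]; linarith) (by rw [qa]; linarith) H1 H2 hσ i₁ i₂
  rw [Bf, hQ]
  rcases main with h | h | ⟨hy, h⟩ | h
  · refine (enn_aux C0.le Q0 (by positivity) h g1 g2).trans ?_
    gcongr
    exact le_add_right (le_add_right le_self_add)
  · refine (enn_aux C0.le (by positivity) W10.le h hW₁ g2).trans ?_
    gcongr
    rw [ENNReal.ofReal_mul Q0, mul_assoc]
    exact le_add_right (le_add_right le_add_self)
  · refine (enn_aux C0.le (by positivity) W10.le h hW₁ hW₂).trans ?_
    gcongr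
    rw [chi, if_pos hy, one_mul]
    exact le_add_right le_add_self
  · refine (enn_aux C0.le (by positivity) W10.le h hW₁ hW₂).trans ?_
    gcongr
    rw [ENNReal.ofReal_mul Q0, mul_assoc]
    exact le_add_self
end ptwise

/-! ### Convolution estimates with a square summable frequency weight -/

section line
variable {A B U : ℝ → ℝ≥0∞}

/-- `L¹ ∗ L¹` tested against a constant. -/
lemma conv1 (hA : Measurable A) (hB : Measurable B) :
    ∫⁻ τ, ∫⁻ τ₁, A τ₁ * B (τ - τ₁) = (∫⁻ t, A t) * ∫⁻ t, B t := by
  rw [lintegral_lintegral_swap (by apply Measurable.aemeasurable; unfold Function.uncurry; fun_prop)]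
  have : ∀ τ₁, ∫⁻ τ, A τ₁ * B (τ - τ₁) = A τ₁ * ∫⁻ t, B t := fun τ₁ => by
    rw [lintegral_const_mul _ (by fun_prop), lintegral_sub_right_eq_self B]
  simp_rw [this]
  rw [lintegral_mul_const _ hA]

lemma n2_shift (c : ℝ) : n2 volume (fun t => A (t - c)) = n2 volume A := by
  unfold n2; rw [lintegral_sub_right_eq_self (fun t => A t ^ 2)]

lemma n2_refl (c : ℝ) : n2 volume (fun t => A (c - t)) = n2 volume A := by
  unfold n2; rw [lintegral_sub_left_eq_self (fun t => A t ^ 2)]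

/-- `L² ∗ L¹` tested against `L²`. -/
lemma conv2 (hU : Measurable U) (hA : Measurable A) (hB : Measurable B) :
    ∫⁻ τ, ∫⁻ τ₁, U τ * (A τ₁ * B (τ - τ₁)) ≤ n2 volume U * (n2 volume A * ∫⁻ t, B t) := by
  have e : ∀ τ, ∫⁻ τ₁, U τ * (A τ₁ * B (τ - τ₁)) = ∫⁻ t, B t * (U τ * A (τ - t)) := by
    intro τ
    rw [← lintegral_sub_left_eq_self _ τ]
    refine lintegral_congr fun t => ?_
    rw [sub_sub_cancel]; ring
  simp_rw [e]
  rw [lintegral_lintegral_swap (by apply Measurable.aemeasurable; unfold Function.uncurry; fun_prop)]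
  calc _ ≤ ∫⁻ t, B t * (n2 volume U * n2 volume A) := by
        refine lintegral_mono fun t => ?_
        dsimp only
        rw [lintegral_const_mul _ (by fun_prop)]
        gcongr
        exact (cs hU (by fun_prop)).trans_eq (by rw [n2_shift])
    _ = _ := by rw [lintegral_mul_const _ hB]; ring

/-- `L² ∗ L²` tested against `L¹`. -/
lemma conv4 (hU : Measurable U) (hA : Measurable A) (hB : Measurable B) :
    ∫⁻ τ, ∫⁻ τ₁, U τ * (A τ₁ * B (τ - τ₁)) ≤ (∫⁻ t, U t) * (n2 volume A * n2 volume B) := by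
  calc _ ≤ ∫⁻ τ, U τ * (n2 volume A * n2 volume B) := by
        refine lintegral_mono fun τ => ?_
        dsimp only
        rw [lintegral_const_mul _ (by fun_prop)]
        gcongr
        exact (cs hA (by fun_prop)).trans_eq (by rw [n2_refl])
    _ = _ := by rw [lintegral_mul_const _ hU]
end line

section lattice
variable {lam : ℝ}

/-- Trilinear frequency sums with one square summable weight: Cauchy–Schwarz at the frequency that
carries the weight. -/
lemma qsum {C : ℝ≥0∞} (hC : ∫⁻ m, qL lam m ^ 2 ∂(muL lam) ≤ C) (h b₁ b₂ : ℤ → ℝ≥0∞) :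
    ∫⁻ m, ∫⁻ m₁, Q3 lam m m₁ (m - m₁) * (h m * (b₁ m₁ * b₂ (m - m₁))) ∂(muL lam) ∂(muL lam) ≤
      3 * C ^ (1 / 2 : ℝ) * (n2 (muL lam) h * n2 (muL lam) b₁ * n2 (muL lam) b₂) := by
  have md : ∀ f : ℤ → ℝ≥0∞, Measurable f := fun f => .of_discrete
  have md2 : ∀ f : ℤ × ℤ → ℝ≥0∞, Measurable f := fun f => .of_discrete
  have t1 := schur (P := muL lam) (K := fun m _ => qL lam m) (md2 _) (md h) (md b₁) (md b₂)
    (fun _ => hC)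
  have t2 := schur (P := muL lam) (K := fun m m₁ => qL lam (m - m₁)) (md2 _) (md h) (md b₁) (md b₂)
    (C := C)
    (fun m₁ => (lintegral_sub_right_eq_self (fun m => qL lam m ^ 2) m₁).trans_le hC)
  have t3 := schur (P := muL lam) (K := fun m m₁ => qL lam (m - m₁)) (md2 _) (md h) (md b₂) (md b₁)
    (C := C)
    (fun m₁ => (lintegral_sub_right_eq_self (fun m => qL lam m ^ 2) m₁).trans_le hC)
  have e3 : ∀ m, ∫⁻ m₁, qL lam (m - m₁) * h m * b₂ m₁ * b₁ (m - m₁) ∂(muL lam) =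
      ∫⁻ m₁, qL lam m₁ * h m * b₁ m₁ * b₂ (m - m₁) ∂(muL lam) := by
    intro m
    rw [← lintegral_sub_left_eq_self _ m]
    refine lintegral_congr fun m₁ => ?_
    rw [sub_sub_cancel]; ring
  simp_rw [e3] at t3
  calc _ = ∫⁻ m, ∫⁻ m₁, (qL lam m * h m * b₁ m₁ * b₂ (m - m₁) + qL lam (m - m₁) * h m * b₁ m₁ * b₂ (m - m₁) +
        qL lam m₁ * h m * b₁ m₁ * b₂ (m - m₁)) ∂(muL lam) ∂(muL lam) := by
        refine lintegral_congr fun m => lintegral_congr fun m₁ => ?_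
        rw [Q3]; ring
    _ = _ + _ + _ := by
        have : ∀ m, ∫⁻ m₁, (qL lam m * h m * b₁ m₁ * b₂ (m - m₁) + qL lam (m - m₁) * h m * b₁ m₁ * b₂ (m - m₁) +
            qL lam m₁ * h m * b₁ m₁ * b₂ (m - m₁)) ∂(muL lam) =
            ∫⁻ m₁, qL lam m * h m * b₁ m₁ * b₂ (m - m₁) ∂(muL lam) +
            ∫⁻ m₁, qL lam (m - m₁) * h m * b₁ m₁ * b₂ (m - m₁) ∂(muL lam) +
            ∫⁻ m₁, qL lam m₁ * h m * b₁ m₁ * b₂ (m - m₁) ∂(muL lam) := fun m => by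
          rw [lintegral_add_left (md _), lintegral_add_left (md _)]
        simp_rw [this]
        rw [lintegral_add_left (md _), lintegral_add_left (md _)]
    _ ≤ _ + _ + _ := add_le_add (add_le_add t1 t2) t3
    _ = _ := by ring

/-- A space-time trilinear integral is reduced to a frequency sum by a bound on its `τ`-integrals
for fixed frequencies. -/
lemma qred {C c : ℝ≥0∞} (hC : ∫⁻ m, qL lam m ^ 2 ∂(muL lam) ≤ C) {h b₁ b₂ : ℤ → ℝ≥0∞}
    {U a₁ a₂ : ℤ × ℝ → ℝ≥0∞} (hU : Measurable U) (h₁ : Measurable a₁) (h₂ : Measurable a₂)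
    (hb : ∀ m m₁, ∫⁻ τ, ∫⁻ τ₁, U (m, τ) * (a₁ (m₁, τ₁) * a₂ (m - m₁, τ - τ₁)) ≤ c * (b₁ m₁ * b₂ (m - m₁))) :
    ∫⁻ p, ∫⁻ p₁, h p.1 * (Q3 lam p.1 p₁.1 (p - p₁).1 * (U p * (a₁ p₁ * a₂ (p - p₁)))) ∂(PL lam) ∂(PL lam) ≤
      c * (3 * C ^ (1 / 2 : ℝ)) * (n2 (muL lam) h * n2 (muL lam) b₁ * n2 (muL lam) b₂) := by
  have md : ∀ f : ℤ → ℝ≥0∞, Measurable f := fun f => .of_discrete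
  have mQ : Measurable fun x : ℤ × ℤ × ℤ => Q3 lam x.1 x.2.1 x.2.2 := .of_discrete
  have mh : Measurable h := md h
  have mint : Measurable fun x : (ℤ × ℝ) × (ℤ × ℝ) =>
      h x.1.1 * (Q3 lam x.1.1 x.2.1 (x.1 - x.2).1 * (U x.1 * (a₁ x.2 * a₂ (x.1 - x.2)))) := by
    have : Measurable fun x : (ℤ × ℝ) × (ℤ × ℝ) => Q3 lam x.1.1 x.2.1 (x.1 - x.2).1 :=
      mQ.comp (f := fun x : (ℤ × ℝ) × (ℤ × ℝ) => (x.1.1, x.2.1, (x.1 - x.2).1)) (by fun_prop)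
    fun_prop
  calc _ = ∫⁻ m, (∫⁻ τ, ∫⁻ m₁, (∫⁻ τ₁, h m * (Q3 lam m m₁ (m - m₁) *
        (U (m, τ) * (a₁ (m₁, τ₁) * a₂ (m - m₁, τ - τ₁))))) ∂(muL lam)) ∂(muL lam) := by
        rw [lintegral_PL _ (Measurable.lintegral_prod_right mint)]
        refine lintegral_congr fun m => lintegral_congr fun τ => ?_
        exact lintegral_PL _ (mint.comp (g := _) (f := fun y : ℤ × ℝ => (((m, τ) : ℤ × ℝ), y)) (by fun_prop))
    _ = ∫⁻ m, ∫⁻ m₁, (Q3 lam m m₁ (m - m₁) * (h m * (∫⁻ τ, ∫⁻ τ₁,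
        (U (m, τ) * (a₁ (m₁, τ₁) * a₂ (m - m₁, τ - τ₁)))))) ∂(muL lam) ∂(muL lam) := by
        refine lintegral_congr fun m => ?_
        have mm : Measurable fun x : (ℝ × ℤ) × ℝ => h m * (Q3 lam m x.1.2 (m - x.1.2) *
            (U (m, x.1.1) * (a₁ (x.1.2, x.2) * a₂ (m - x.1.2, x.1.1 - x.2)))) :=
          mint.comp (g := _) (f := fun x : (ℝ × ℤ) × ℝ => (((m, x.1.1) : ℤ × ℝ), ((x.1.2, x.2) : ℤ × ℝ))) (by fun_prop)
        rw [lintegral_lintegral_swap (Measurable.aemeasurable (Measurable.lintegral_prod_right mm))]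
        refine lintegral_congr fun m₁ => ?_
        have m2 : Measurable fun x : ℝ × ℝ => U (m, x.1) * (a₁ (m₁, x.2) * a₂ (m - m₁, x.1 - x.2)) := by fun_prop
        have m3 : ∀ τ, Measurable fun τ₁ : ℝ => U (m, τ) * (a₁ (m₁, τ₁) * a₂ (m - m₁, τ - τ₁)) := by
          intro τ; fun_prop
        have m4 : Measurable fun τ => ∫⁻ τ₁, U (m, τ) * (a₁ (m₁, τ₁) * a₂ (m - m₁, τ - τ₁)) :=
          Measurable.lintegral_prod_right m2
        rw [← lintegral_const_mul _ m4, ← lintegral_const_mul _ (m4.const_mul _)]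
        refine lintegral_congr fun τ => ?_
        rw [← lintegral_const_mul _ (m3 τ), ← lintegral_const_mul _ ((m3 τ).const_mul _)]
        refine lintegral_congr fun τ₁ => ?_
        ring
    _ ≤ ∫⁻ m, ∫⁻ m₁, c * (Q3 lam m m₁ (m - m₁) * (h m * (b₁ m₁ * b₂ (m - m₁)))) ∂(muL lam) ∂(muL lam) := by
        refine lintegral_mono fun m => lintegral_mono fun m₁ => ?_
        calc _ ≤ Q3 lam m m₁ (m - m₁) * (h m * (c * (b₁ m₁ * b₂ (m - m₁)))) := by
              gcongr; exact hb m m₁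
          _ = _ := by ring
    _ = c * ∫⁻ m, ∫⁻ m₁, (Q3 lam m m₁ (m - m₁) * (h m * (b₁ m₁ * b₂ (m - m₁)))) ∂(muL lam) ∂(muL lam) := by
        simp_rw [lintegral_const_mul _ (md _)]
    _ ≤ _ := by
        rw [mul_assoc]
        gcongr
        exact qsum hC h b₁ b₂
end lattice

/-! ### The trilinear estimate and the conclusion -/

section final
variable {j : ℕ} {lam s : ℝ}

@[fun_prop] lemma sig_meas : Measurable fun p : ℤ × ℝ => sigL j lam p.1 p.2 := by
  unfold sigL; fun_prop

@[fun_prop] lemma jsg_meas : Measurable (jsg j lam) := by unfold jsg; fun_prop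

@[fun_prop] lemma jk_meas : Measurable (jk lam) := .of_discrete

lemma D_meas : MeasurableSet (D1 j lam) ∧ MeasurableSet (D2 j lam) ∧ MeasurableSet (D3 j lam) ∧
    MeasurableSet (D4 j lam) ∧ MeasurableSet (D5 j lam) := by
  have h1 : Measurable fun p : ℤ × ℝ => |(p.1 : ℝ) / lam| := by fun_prop
  have h2 : Measurable fun p : ℤ × ℝ => |sigL j lam p.1 p.2| := by fun_prop
  have h3 : ∀ c : ℝ, ∀ n : ℕ, Measurable fun p : ℤ × ℝ => c * |(p.1 : ℝ) / lam| ^ n := by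
    intro c n; fun_prop
  refine ⟨?_, ?_, ?_, ?_, ?_⟩
  · exact (measurableSet_le measurable_const h1).inter (measurableSet_le h2 (h3 _ _))
  · exact (measurableSet_le measurable_const h1).inter
      ((measurableSet_lt (h3 _ _) h2).inter (measurableSet_le h2 (h3 _ _)))
  · exact (measurableSet_le measurable_const h1).inter (measurableSet_lt (h3 _ _) h2)
  · exact (measurableSet_le measurable_const h1).inter
      ((measurableSet_le h1 measurable_const).inter (measurableSet_lt (h3 _ _) h2))
  · exact (measurableSet_le measurable_const h1).inter
      ((measurableSet_le h1 measurable_const).inter (measurableSet_le h2 (h3 _ _)))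

lemma restr_meas {D : Set (ℤ × ℝ)} (hD : MeasurableSet D) {f : ℤ → ℝ → ℝ≥0∞}
    (hf : Measurable (Function.uncurry f)) : Measurable fun p : ℤ × ℝ => restr D f p.1 p.2 :=
  Measurable.indicator hf hD

lemma gf_meas {f : ℤ → ℝ → ℝ≥0∞} (hf : Measurable (Function.uncurry f)) : Measurable (gf lam s f) := by
  have : Measurable fun p : ℤ × ℝ => f p.1 p.2 := hf
  unfold gf; fun_prop

lemma wf_meas {f : ℤ → ℝ → ℝ≥0∞} (hf : Measurable (Function.uncurry f)) : Measurable (wf j lam s f) := by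
  obtain ⟨d1, d2, d3, d4, d5⟩ := D_meas (j := j) (lam := lam)
  have h1 := restr_meas (d1.union d5) hf
  have h2 := restr_meas d2 hf
  have h3 := restr_meas (d3.union d4) hf
  unfold wf
  fun_prop

lemma n2_PL {F : ℤ × ℝ → ℝ≥0∞} (hF : Measurable F) :
    n2 (muL lam) (fun m => n2 volume fun τ => F (m, τ)) = n2 (PL lam) F := by
  rw [n2]
  simp_rw [n2_sq]
  rw [← lintegral_PL lam (f := fun p => F p ^ 2) (by fun_prop)]
  rfl

lemma L2L_eq {F : ℤ × ℝ → ℝ≥0∞} (hF : Measurable F) : L2L lam (fun m τ => F (m, τ)) = n2 (PL lam) F := by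
  rw [L2L, n2, lintegral_PL lam (f := fun p => F p ^ 2) (by fun_prop), lintegral_muL]

/-- The `L²` norm of `wf` is at most the `X^s` norm. -/
lemma n2_wf {f : ℤ → ℝ → ℝ≥0∞} (hf : Measurable (Function.uncurry f)) :
    n2 (PL lam) (wf j lam s f) ≤ XSn j lam s f := by
  obtain ⟨d1, d2, d3, d4, d5⟩ := D_meas (j := j) (lam := lam)
  have h1 := restr_meas (d1.union d5) hf
  have h2 := restr_meas d2 hf
  have h3 := restr_meas (d3.union d4) hf
  unfold wf
  refine (n2_add (by fun_prop) (by fun_prop)).trans ?_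
  refine (add_le_add_left (n2_add (by fun_prop) (by fun_prop)) _).trans_eq ?_
  rw [← L2L_eq (by fun_prop), ← L2L_eq (by fun_prop), ← L2L_eq (by fun_prop)]
  rfl

lemma Y_eq (f : ℤ → ℝ → ℝ≥0∞) :
    n2 (muL lam) (fun m => ENNReal.ofReal (jk lam m ^ s) * ∫⁻ τ, f m τ) = Yn lam s f := by
  rw [n2, Yn, lintegral_muL]
  congr 3
  ext m
  rw [mul_pow, ← ENNReal.ofReal_pow (by have := jk_pos (lam := lam) m; positivity),
    ← Real.rpow_mul_natCast (jk_pos m).le, mul_comm s]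
  rfl

lemma Y_gf (f : ℤ → ℝ → ℝ≥0∞) :
    n2 (muL lam) (fun m => ∫⁻ τ, gf lam s f (m, τ)) = Yn lam s f := by
  -- The left side is the `L²` norm in the frequency of `⟨k⟩^s` times the integral in `τ`.
  rw [← Y_eq]
  congr 1; ext m
  simp only [gf]
  rw [lintegral_const_mul' _ _ (by simp)]

/-- Each of the four summands of `Bf`, tested against a function `h` of the output frequency, is
bounded uniformly in `λ`. -/
lemma trilinear (hj : 1 ≤ j) : ∃ C : ℝ≥0∞, C ≠ ⊤ ∧ ∀ lam : ℝ, 1 ≤ lam → ∀ f₁ f₂ : ℤ → ℝ → ℝ≥0∞,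
    Measurable (Function.uncurry f₁) → Measurable (Function.uncurry f₂) → ∀ h : ℤ → ℝ≥0∞,
    ∫⁻ p, ∫⁻ p₁, h p.1 * Bf j lam s f₁ f₂ p p₁ (p - p₁) ∂(PL lam) ∂(PL lam) ≤
      C * (n2 (muL lam) h * Zn j lam s f₁ * Zn j lam s f₂) := by
  obtain ⟨Cq, hCq, hq⟩ := qL_sum
  obtain ⟨Ct, hCt, ht⟩ := tau_int
  obtain ⟨Cf, hCf, hfr⟩ := freq_sum j hj
  set e : ℝ := 1 + 1 / (2 * (2 * (j : ℝ) + 1)) with he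
  have e1 : 1 < e := by
    have : 0 < 1 / (2 * (2 * (j : ℝ) + 1)) := by positivity
    linarith
  set I2 := n2 volume (fun t => ENNReal.ofReal (jap t)⁻¹) with hI2
  set Ie := ∫⁻ t, ENNReal.ofReal (jap t ^ (-e)) with hIe
  set I3 := n2 volume (fun t => ENNReal.ofReal (jap t ^ (-(2 / 3) : ℝ))) with hI3
  have fI2 : I2 ≠ ⊤ := by
    refine ENNReal.rpow_ne_top_of_nonneg (by norm_num) ?_
    refine ne_top_of_le_ne_top (jap_int (a := 2) (by norm_num)) (lintegral_mono fun t => ?_)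
    have := jap_pos t
    rw [← ENNReal.ofReal_pow (by positivity), ← Real.rpow_neg_one, ← Real.rpow_mul_natCast this.le]
    norm_num
  have fI3 : I3 ≠ ⊤ := by
    refine ENNReal.rpow_ne_top_of_nonneg (by norm_num) ?_
    refine ne_top_of_le_ne_top (jap_int (a := 4 / 3) (by norm_num)) (lintegral_mono fun t => ?_)
    have := jap_pos t
    rw [← ENNReal.ofReal_pow (by positivity), ← Real.rpow_mul_natCast this.le]
    norm_num
  have fIe : Ie ≠ ⊤ := jap_int e1
  have frt : ∀ {a : ℝ≥0∞}, a ≠ ⊤ → a ^ (1 / 2 : ℝ) ≠ ⊤ := fun h =>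
    ENNReal.rpow_ne_top_of_nonneg (by norm_num) h
  refine ⟨1 * (3 * Cq ^ (1 / 2 : ℝ)) + I2 * (3 * Cq ^ (1 / 2 : ℝ)) + (Ct * Cf) ^ (1 / 2 : ℝ) * I3 +
    Ie * (3 * Cq ^ (1 / 2 : ℝ)), ?_, ?_⟩
  · have h3 : 3 * Cq ^ (1 / 2 : ℝ) ≠ ⊤ := ENNReal.mul_ne_top (by simp) (frt hCq)
    exact ENNReal.add_ne_top.mpr ⟨ENNReal.add_ne_top.mpr ⟨ENNReal.add_ne_top.mpr
      ⟨ENNReal.mul_ne_top (by simp) h3, ENNReal.mul_ne_top fI2 h3⟩,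
      ENNReal.mul_ne_top (frt (ENNReal.mul_ne_top hCt hCf)) fI3⟩, ENNReal.mul_ne_top fIe h3⟩
  intro lam hl f₁ f₂ m₁ m₂ h
  have mg₁ : Measurable (gf lam s f₁) := gf_meas m₁
  have mg₂ : Measurable (gf lam s f₂) := gf_meas m₂
  have mw₁ : Measurable (wf j lam s f₁) := wf_meas m₁
  have mw₂ : Measurable (wf j lam s f₂) := wf_meas m₂
  have mh : Measurable h := .of_discrete
  have Yle : ∀ f : ℤ → ℝ → ℝ≥0∞, Yn lam s f ≤ Zn j lam s f := fun f => le_add_self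
  have Xle : ∀ f : ℤ → ℝ → ℝ≥0∞, Measurable (Function.uncurry f) →
      n2 (PL lam) (wf j lam s f) ≤ Zn j lam s f := fun f hf => (n2_wf hf).trans le_self_add
  -- One bound for each summand of `Bf`; the third one follows from `schur`, the others from `qred`.
  have T1 := qred (c := 1) (hq lam hl) (h := h) (U := fun _ => 1) (a₁ := gf lam s f₁) (a₂ := gf lam s f₂)
    (b₁ := fun m => ∫⁻ τ, gf lam s f₁ (m, τ)) (b₂ := fun m => ∫⁻ τ, gf lam s f₂ (m, τ))
    measurable_const mg₁ mg₂ (fun m n => by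
      simp only [one_mul]
      exact (conv1 (A := fun τ => gf lam s f₁ (n, τ)) (B := fun τ => gf lam s f₂ (m - n, τ))
        (by fun_prop) (by fun_prop)).le)
  have T2 := qred (c := I2) (hq lam hl) (h := h) (U := fun p => ENNReal.ofReal (jsg j lam p)⁻¹)
    (a₁ := wf j lam s f₁) (a₂ := gf lam s f₂)
    (b₁ := fun m => n2 volume fun τ => wf j lam s f₁ (m, τ)) (b₂ := fun m => ∫⁻ τ, gf lam s f₂ (m, τ))
    (by fun_prop) mw₁ mg₂ (fun m n => by
      refine (conv2 (A := fun τ => wf j lam s f₁ (n, τ)) (B := fun τ => gf lam s f₂ (m - n, τ))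
        (U := fun τ => ENNReal.ofReal (jsg j lam (m, τ))⁻¹)
        (by fun_prop) (by fun_prop) (by fun_prop)).trans_eq ?_
      congr 1
      exact n2_shift (A := fun t => ENNReal.ofReal (jap t)⁻¹) (((m : ℝ) / lam) ^ (2 * j + 1)))
  have T4 := qred (c := Ie) (hq lam hl) (h := h)
    (U := fun p => ENNReal.ofReal (jsg j lam p ^ (-e)))
    (a₁ := wf j lam s f₁) (a₂ := wf j lam s f₂)
    (b₁ := fun m => n2 volume fun τ => wf j lam s f₁ (m, τ))
    (b₂ := fun m => n2 volume fun τ => wf j lam s f₂ (m, τ))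
    (by fun_prop) mw₁ mw₂ (fun m n => by
      refine (conv4 (A := fun τ => wf j lam s f₁ (n, τ)) (B := fun τ => wf j lam s f₂ (m - n, τ))
        (U := fun τ => ENNReal.ofReal (jsg j lam (m, τ) ^ (-e)))
        (by fun_prop) (by fun_prop) (by fun_prop)).trans_eq ?_
      congr 1
      exact lintegral_sub_right_eq_self (fun t => ENNReal.ofReal (jap t ^ (-e)))
        (((m : ℝ) / lam) ^ (2 * j + 1)))
  have mchi : Measurable (chi lam) := .of_discrete
  -- In the third summand `⟨σ⟩⁻¹` is split as `⟨σ⟩^{-1/3} ⟨σ⟩^{-2/3}`: the first part makes the Schur kernel square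
  -- integrable, and the second one has a square in `L¹(dτ)`.
  have hK : Measurable (Function.uncurry fun p p₁ : ℤ × ℝ => chi lam p₁.1 *
      ENNReal.ofReal (jsg j lam p ^ (-(1 / 3) : ℝ) * jsg j lam (p - p₁) ^ (-(3 / 4) : ℝ))) := by
    unfold Function.uncurry; fun_prop
  have hKC : ∀ p₁ : ℤ × ℝ, ∫⁻ p, (chi lam p₁.1 *
      ENNReal.ofReal (jsg j lam p ^ (-(1 / 3) : ℝ) * jsg j lam (p - p₁) ^ (-(3 / 4) : ℝ))) ^ 2 ∂(PL lam) ≤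
      Ct * Cf := by
    intro p₁
    rw [chi]
    split_ifs with hk
    swap
    · simp
    rw [lintegral_PL lam (by fun_prop)]
    set k₁ := (p₁.1 : ℝ) / lam with hk₁
    calc _ ≤ ∫⁻ m : ℤ, Ct * ENNReal.ofReal (jap (p₁.2 - (((m : ℝ) / lam) ^ (2 * j + 1) -
        ((m : ℝ) / lam - k₁) ^ (2 * j + 1))) ^ (-(2 / 3) : ℝ)) ∂(muL lam) := by
          refine lintegral_mono fun m => ?_
          refine le_trans (le_of_eq ?_) ((ht (((m : ℝ) / lam) ^ (2 * j + 1))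
            (p₁.2 + ((m : ℝ) / lam - k₁) ^ (2 * j + 1))).trans_eq ?_)
          · refine lintegral_congr fun τ => ?_
            have q1 := jsg_pos (j := j) (lam := lam) (m, τ)
            have q2 := jsg_pos (j := j) (lam := lam) ((m, τ) - p₁)
            rw [one_mul, ← ENNReal.ofReal_pow (by positivity), mul_pow, ← Real.rpow_mul_natCast q1.le,
              ← Real.rpow_mul_natCast q2.le]
            have e2 : jsg j lam ((m, τ) - p₁) = jap (τ - (p₁.2 + ((m : ℝ) / lam - k₁) ^ (2 * j + 1))) := by
              simp only [jsg, sigL, Prod.fst_sub, Prod.snd_sub]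
              congr 1; push_cast; rw [sub_div]; ring
            have e3 : jsg j lam (m, τ) = jap (τ - ((m : ℝ) / lam) ^ (2 * j + 1)) := rfl
            rw [e2, e3]
            norm_num
          · rw [jap_sub_comm]
            congr 4; ring
      _ = Ct * ∫⁻ m : ℤ, ENNReal.ofReal (jap (p₁.2 - (((m : ℝ) / lam) ^ (2 * j + 1) -
        ((m : ℝ) / lam - k₁) ^ (2 * j + 1))) ^ (-(2 / 3) : ℝ)) ∂(muL lam) :=
          lintegral_const_mul _ .of_discrete
      _ ≤ _ := by gcongr; exact hfr lam hl k₁ hk p₁.2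
  have T3 := schur (P := PL lam) (H := fun p => h p.1 * ENNReal.ofReal (jsg j lam p ^ (-(2 / 3) : ℝ)))
    hK (by fun_prop) mw₁ mw₂ hKC
  have hH : n2 (PL lam) (fun p => h p.1 * ENNReal.ofReal (jsg j lam p ^ (-(2 / 3) : ℝ))) = n2 (muL lam) h * I3 := by
    rw [n2, lintegral_PL lam (by fun_prop)]
    have : ∀ m, ∫⁻ τ, (h m * ENNReal.ofReal (jsg j lam (m, τ) ^ (-(2 / 3) : ℝ))) ^ 2 =
        h m ^ 2 * ∫⁻ t, ENNReal.ofReal (jap t ^ (-(2 / 3) : ℝ)) ^ 2 := by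
      intro m
      simp_rw [mul_pow]
      rw [lintegral_const_mul _ (by fun_prop)]
      congr 1
      exact lintegral_sub_right_eq_self (fun t => ENNReal.ofReal (jap t ^ (-(2 / 3) : ℝ)) ^ 2)
        (((m : ℝ) / lam) ^ (2 * j + 1))
    simp_rw [this]
    rw [lintegral_mul_const _ .of_discrete, ENNReal.mul_rpow_of_nonneg _ _ (by norm_num)]
    rfl
  rw [hH] at T3
  rw [Y_gf, Y_gf] at T1
  rw [Y_gf, n2_PL mw₁] at T2
  rw [n2_PL mw₁, n2_PL mw₂] at T4
  have mQ : Measurable fun x : (ℤ × ℝ) × (ℤ × ℝ) => Q3 lam x.1.1 x.2.1 (x.1 - x.2).1 := by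
    have mQ : Measurable fun x : ℤ × ℤ × ℤ => Q3 lam x.1 x.2.1 x.2.2 := .of_discrete
    exact mQ.comp (f := fun x : (ℤ × ℝ) × (ℤ × ℝ) => (x.1.1, x.2.1, (x.1 - x.2).1)) (by fun_prop)
  have split4 : ∀ t₁ t₂ t₃ t₄ : ℤ × ℝ → ℤ × ℝ → ℝ≥0∞, Measurable (Function.uncurry t₁) →
      Measurable (Function.uncurry t₂) → Measurable (Function.uncurry t₃) →
      ∫⁻ p, ∫⁻ p₁, (t₁ p p₁ + t₂ p p₁ + t₃ p p₁ + t₄ p p₁) ∂(PL lam) ∂(PL lam) =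
        ∫⁻ p, ∫⁻ p₁, t₁ p p₁ ∂(PL lam) ∂(PL lam) + ∫⁻ p, ∫⁻ p₁, t₂ p p₁ ∂(PL lam) ∂(PL lam) +
        ∫⁻ p, ∫⁻ p₁, t₃ p p₁ ∂(PL lam) ∂(PL lam) + ∫⁻ p, ∫⁻ p₁, t₄ p p₁ ∂(PL lam) ∂(PL lam) := by
    intro t₁ t₂ t₃ t₄ h1 h2 h3
    have h1' : ∀ p, Measurable (t₁ p) := fun p => h1.of_uncurry_left
    have h2' : ∀ p, Measurable (t₂ p) := fun p => h2.of_uncurry_left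
    have h3' : ∀ p, Measurable (t₃ p) := fun p => h3.of_uncurry_left
    have i1 : Measurable fun p => ∫⁻ p₁, t₁ p p₁ ∂(PL lam) := h1.lintegral_prod_right
    have i2 : Measurable fun p => ∫⁻ p₁, t₂ p p₁ ∂(PL lam) := h2.lintegral_prod_right
    have i3 : Measurable fun p => ∫⁻ p₁, t₃ p p₁ ∂(PL lam) := h3.lintegral_prod_right
    have : ∀ p, ∫⁻ p₁, (t₁ p p₁ + t₂ p p₁ + t₃ p p₁ + t₄ p p₁) ∂(PL lam) =
        ∫⁻ p₁, t₁ p p₁ ∂(PL lam) + ∫⁻ p₁, t₂ p p₁ ∂(PL lam) + ∫⁻ p₁, t₃ p p₁ ∂(PL lam) +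
          ∫⁻ p₁, t₄ p p₁ ∂(PL lam) := by
      intro p
      have a12 : Measurable fun q => t₁ p q + t₂ p q := (h1' p).add (h2' p)
      have a123 : Measurable fun q => t₁ p q + t₂ p q + t₃ p q := a12.add (h3' p)
      rw [lintegral_add_left a123, lintegral_add_left a12, lintegral_add_left (h1' p)]
    simp_rw [this]
    have i12 : Measurable fun p => ∫⁻ p₁, t₁ p p₁ ∂(PL lam) + ∫⁻ p₁, t₂ p p₁ ∂(PL lam) := i1.add i2
    have i123 : Measurable fun p => ∫⁻ p₁, t₁ p p₁ ∂(PL lam) + ∫⁻ p₁, t₂ p p₁ ∂(PL lam) +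
        ∫⁻ p₁, t₃ p p₁ ∂(PL lam) := i12.add i3
    rw [lintegral_add_left i123, lintegral_add_left i12, lintegral_add_left i1]
  refine le_trans (le_of_eq ?_) ((add_le_add (add_le_add (add_le_add T1 T2) T3) T4).trans ?_)
  · rw [← split4]
    · refine lintegral_congr fun p => lintegral_congr fun p₁ => ?_
      have q1 := jsg_pos (j := j) (lam := lam) p
      have q2 := jsg_pos (j := j) (lam := lam) (p - p₁)
      have ee : ENNReal.ofReal ((jsg j lam p)⁻¹ * jsg j lam (p - p₁) ^ (-(3 / 4) : ℝ)) =
          ENNReal.ofReal (jsg j lam p ^ (-(1 / 3) : ℝ) * jsg j lam (p - p₁) ^ (-(3 / 4) : ℝ)) *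
            ENNReal.ofReal (jsg j lam p ^ (-(2 / 3) : ℝ)) := by
        rw [← ENNReal.ofReal_mul (by positivity)]
        congr 1
        rw [mul_right_comm, ← Real.rpow_add q1, ← Real.rpow_neg_one]
        norm_num
      rw [Bf, ee, show (-1 - 1 / (2 * (2 * (j : ℝ) + 1))) = -e by rw [he]; ring]
      ring
    · unfold Function.uncurry; fun_prop
    · unfold Function.uncurry; fun_prop
    · unfold Function.uncurry; fun_prop
  · have x1 := Xle f₁ m₁
    have x2 := Xle f₂ m₂
    have y1 := Yle f₁
    have y2 := Yle f₂
    calc _ ≤ 1 * (3 * Cq ^ (1 / 2 : ℝ)) * (n2 (muL lam) h * Zn j lam s f₁ * Zn j lam s f₂) +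
          I2 * (3 * Cq ^ (1 / 2 : ℝ)) * (n2 (muL lam) h * Zn j lam s f₁ * Zn j lam s f₂) +
          (Ct * Cf) ^ (1 / 2 : ℝ) * (n2 (muL lam) h * I3 * Zn j lam s f₁ * Zn j lam s f₂) +
          Ie * (3 * Cq ^ (1 / 2 : ℝ)) * (n2 (muL lam) h * Zn j lam s f₁ * Zn j lam s f₂) := by
          gcongr
      _ = _ := by ring

/-- Dropping the restriction to nonzero frequencies only enlarges the convolution. -/
lemma convL_le {f₁ f₂ : ℤ → ℝ → ℝ≥0∞} (m₁ : Measurable (Function.uncurry f₁))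
    (m₂ : Measurable (Function.uncurry f₂)) (p : ℤ × ℝ) :
    convL lam f₁ f₂ p.1 p.2 ≤ ∫⁻ p₁, f₁ p₁.1 p₁.2 * f₂ (p - p₁).1 (p - p₁).2 ∂(PL lam) := by
  have m₁' : Measurable fun q : ℤ × ℝ => f₁ q.1 q.2 := m₁
  have m₂' : Measurable fun q : ℤ × ℝ => f₂ (p - q).1 (p - q).2 := m₂.comp (f := fun q => p - q) (by fun_prop)
  have mm : Measurable fun q : ℤ × ℝ => f₁ q.1 q.2 * f₂ (p - q).1 (p - q).2 := m₁'.mul m₂'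
  rw [lintegral_PL lam mm, lintegral_muL, convL]
  gcongr
  split_ifs
  · exact le_rfl
  · exact zero_le

end final

/-- **Lemma 3.2 (bilinear estimate, `Y^s` part):** with
`g(k,τ) = |k|⟨σ⟩^{−1}(f₁∗f₂)(k,τ)` (the modulus of the space–time Fourier transform of
`Λ^{−1}∂_x(u₁u₂)`), one has `‖g‖_{Y^s} ≤ C‖f₁‖_{Z^s}‖f₂‖_{Z^s}` with `C` independent of `λ`. -/
theorem stmt_15 (j : ℕ) (hj : 2 ≤ j) (s : ℝ)
    (hs₁ : -(j : ℝ) + 1 / 2 ≤ s) (hs₂ : s ≤ -(j : ℝ) / 2) :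
    ∃ C : ℝ, 0 < C ∧ ∀ lam : ℝ, 1 ≤ lam → ∀ f₁ f₂ : ℤ → ℝ → ℝ≥0∞,
      Measurable (Function.uncurry f₁) → Measurable (Function.uncurry f₂) →
      (∀ τ, f₁ 0 τ = 0) → (∀ τ, f₂ 0 τ = 0) →
      Yn lam s (fun m τ =>
          ENNReal.ofReal (|(m : ℝ) / lam| * (jap (sigL j lam m τ))⁻¹) *
            convL lam f₁ f₂ m τ) ≤
        ENNReal.ofReal C * Zn j lam s f₁ * Zn j lam s f₂ := by
  have hj' : (2 : ℝ) ≤ j := by exact_mod_cast hj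
  have s0 : s ≤ -1 := by linarith
  obtain ⟨C, C0, hpw⟩ := pw hj hs₁ s0
  obtain ⟨D, hD, htri⟩ := trilinear (j := j) (s := s) (by omega)
  set E := ENNReal.ofReal C * (D + D) with hE
  have fE : E ≠ ⊤ := ENNReal.mul_ne_top (by simp) (by simp [hD])
  refine ⟨E.toReal + 1, by positivity, ?_⟩
  intro lam hl f₁ f₂ m₁ m₂ z₁ z₂
  have EE : E ≤ ENNReal.ofReal (E.toReal + 1) := by
    rw [← ENNReal.ofReal_toReal fE]
    exact ENNReal.ofReal_le_ofReal (by simp)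
  suffices hmain : Yn lam s (fun m τ => ENNReal.ofReal (|(m : ℝ) / lam| * (jap (sigL j lam m τ))⁻¹) *
      convL lam f₁ f₂ m τ) ≤ E * Zn j lam s f₁ * Zn j lam s f₂ from hmain.trans (by gcongr)
  rw [← Y_eq]
  refine n2_dual (fun S => ?_) _ _ fun h => ?_
  · rw [muL, Measure.smul_apply, smul_eq_mul]
    exact ENNReal.mul_ne_top (by simp) (by simp)
  -- Symmetrization: the input with the larger modulation plays the role of `f₁`.
  have pt : ∀ p p₁ : ℤ × ℝ, ENNReal.ofReal (|(p.1 : ℝ) / lam| * jk lam p.1 ^ s * (jsg j lam p)⁻¹) *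
      (f₁ p₁.1 p₁.2 * f₂ (p - p₁).1 (p - p₁).2) ≤
      ENNReal.ofReal C * (Bf j lam s f₁ f₂ p p₁ (p - p₁) + Bf j lam s f₂ f₁ p (p - p₁) p₁) := by
    intro p p₁
    rw [mul_add]
    rcases le_total |sigL j lam (p - p₁).1 (p - p₁).2| |sigL j lam p₁.1 p₁.2| with hσ | hσ
    · have := hpw lam hl f₁ f₂ z₁ z₂ p₁ (p - p₁) hσ
      rw [add_sub_cancel, mul_assoc] at this
      exact this.trans le_self_add
    · have := hpw lam hl f₂ f₁ z₂ z₁ (p - p₁) p₁ hσ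
      rw [sub_add_cancel, mul_assoc, mul_comm (f₂ _ _)] at this
      exact this.trans le_add_self
  have mf₁ : Measurable fun q : ℤ × ℝ => f₁ q.1 q.2 := m₁
  have mf₂ : Measurable fun q : ℤ × ℝ => f₂ q.1 q.2 := m₂
  have mh : Measurable h := .of_discrete
  have mff : Measurable fun x : (ℤ × ℝ) × (ℤ × ℝ) => f₁ x.2.1 x.2.2 * f₂ (x.1 - x.2).1 (x.1 - x.2).2 :=
    (mf₁.comp measurable_snd).mul (mf₂.comp (f := fun x : (ℤ × ℝ) × (ℤ × ℝ) => x.1 - x.2) (by fun_prop))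
  have mI : Measurable fun p : ℤ × ℝ => ∫⁻ p₁, f₁ p₁.1 p₁.2 * f₂ (p - p₁).1 (p - p₁).2 ∂(PL lam) :=
    Measurable.lintegral_prod_right mff
  have mB : ∀ (f g : ℤ → ℝ → ℝ≥0∞), Measurable (Function.uncurry f) → Measurable (Function.uncurry g) →
      Measurable fun x : (ℤ × ℝ) × (ℤ × ℝ) => Bf j lam s f g x.1 x.2 (x.1 - x.2) := by
    intro f g hf hg
    have mg₁ : Measurable (gf lam s f) := gf_meas hf
    have mg₂ : Measurable (gf lam s g) := gf_meas hg
    have mw₁ : Measurable (wf j lam s f) := wf_meas hf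
    have mw₂ : Measurable (wf j lam s g) := wf_meas hg
    have mQ : Measurable fun x : (ℤ × ℝ) × (ℤ × ℝ) => Q3 lam x.1.1 x.2.1 (x.1 - x.2).1 := by
      have mQ : Measurable fun x : ℤ × ℤ × ℤ => Q3 lam x.1 x.2.1 x.2.2 := .of_discrete
      exact mQ.comp (f := fun x : (ℤ × ℝ) × (ℤ × ℝ) => (x.1.1, x.2.1, (x.1 - x.2).1)) (by fun_prop)
    have mchi : Measurable (chi lam) := .of_discrete
    unfold Bf
    fun_prop
  have mB1 := mB f₁ f₂ m₁ m₂
  have swp : ∀ p : ℤ × ℝ, ∫⁻ p₁, h p.1 * Bf j lam s f₂ f₁ p (p - p₁) p₁ ∂(PL lam) =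
      ∫⁻ p₁, h p.1 * Bf j lam s f₂ f₁ p p₁ (p - p₁) ∂(PL lam) := by
    intro p
    rw [← lintegral_sub_left_eq_self _ p]
    refine lintegral_congr fun p₁ => ?_
    rw [sub_sub_cancel]
  calc ∫⁻ m, h m * (ENNReal.ofReal (jk lam m ^ s) * ∫⁻ τ,
        ENNReal.ofReal (|(m : ℝ) / lam| * (jap (sigL j lam m τ))⁻¹) * convL lam f₁ f₂ m τ) ∂(muL lam)
      ≤ ∫⁻ m, (∫⁻ τ, h m * (ENNReal.ofReal (|(m : ℝ) / lam| * jk lam m ^ s * (jsg j lam (m, τ))⁻¹) *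
          ∫⁻ p₁, f₁ p₁.1 p₁.2 * f₂ ((m, τ) - p₁).1 ((m, τ) - p₁).2 ∂(PL lam))) ∂(muL lam) := by
        refine lintegral_mono fun m => ?_
        dsimp only
        rw [← mul_assoc]
        refine (lintegral_const_mul_le _ _).trans (lintegral_mono fun τ => ?_)
        have hjk := jk_pos (lam := lam) m
        calc _ ≤ h m * ENNReal.ofReal (jk lam m ^ s) *
              (ENNReal.ofReal (|(m : ℝ) / lam| * (jap (sigL j lam m τ))⁻¹) *
              ∫⁻ p₁, f₁ p₁.1 p₁.2 * f₂ ((m, τ) - p₁).1 ((m, τ) - p₁).2 ∂(PL lam)) := by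
              gcongr
              exact convL_le m₁ m₂ (m, τ)
          _ = _ := by
              have e : ENNReal.ofReal (|(m : ℝ) / lam| * jk lam m ^ s * (jsg j lam (m, τ))⁻¹) =
                  ENNReal.ofReal (jk lam m ^ s) *
                    ENNReal.ofReal (|(m : ℝ) / lam| * (jap (sigL j lam m τ))⁻¹) := by
                rw [← ENNReal.ofReal_mul (by positivity)]
                congr 1
                rw [jsg]
                ring
              rw [e]
              ring
    _ = ∫⁻ p : ℤ × ℝ, h p.1 * (ENNReal.ofReal (|(p.1 : ℝ) / lam| * jk lam p.1 ^ s * (jsg j lam p)⁻¹) *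
          ∫⁻ p₁, f₁ p₁.1 p₁.2 * f₂ (p - p₁).1 (p - p₁).2 ∂(PL lam)) ∂(PL lam) := by
        rw [lintegral_PL lam (by fun_prop)]
    _ ≤ ∫⁻ p : ℤ × ℝ, ∫⁻ p₁, ENNReal.ofReal C * (h p.1 * Bf j lam s f₁ f₂ p p₁ (p - p₁) +
          h p.1 * Bf j lam s f₂ f₁ p (p - p₁) p₁) ∂(PL lam) ∂(PL lam) := by
        refine lintegral_mono fun p => ?_
        dsimp only
        rw [← mul_assoc]
        refine (lintegral_const_mul_le _ _).trans (lintegral_mono fun p₁ => ?_)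
        rw [mul_assoc]
        refine (mul_le_mul_right (pt p p₁) (h p.1)).trans_eq ?_
        ring
    _ = ENNReal.ofReal C * (∫⁻ p : ℤ × ℝ, ∫⁻ p₁, h p.1 * Bf j lam s f₁ f₂ p p₁ (p - p₁) ∂(PL lam) ∂(PL lam) +
          ∫⁻ p : ℤ × ℝ, ∫⁻ p₁, h p.1 * Bf j lam s f₂ f₁ p p₁ (p - p₁) ∂(PL lam) ∂(PL lam)) := by
        have mhB : Measurable fun x : (ℤ × ℝ) × (ℤ × ℝ) => h x.1.1 * Bf j lam s f₁ f₂ x.1 x.2 (x.1 - x.2) := by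
          fun_prop
        have mp : ∀ p : ℤ × ℝ, Measurable fun p₁ => h p.1 * Bf j lam s f₁ f₂ p p₁ (p - p₁) := fun p =>
          mhB.comp (g := _) (f := fun p₁ : ℤ × ℝ => (p, p₁)) (by fun_prop)
        have e1 : ∀ p : ℤ × ℝ, ∫⁻ p₁, ENNReal.ofReal C * (h p.1 * Bf j lam s f₁ f₂ p p₁ (p - p₁) +
            h p.1 * Bf j lam s f₂ f₁ p (p - p₁) p₁) ∂(PL lam) = ENNReal.ofReal C *
            (∫⁻ p₁, h p.1 * Bf j lam s f₁ f₂ p p₁ (p - p₁) ∂(PL lam) +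
              ∫⁻ p₁, h p.1 * Bf j lam s f₂ f₁ p p₁ (p - p₁) ∂(PL lam)) := by
          intro p
          rw [lintegral_const_mul' _ _ (by simp), lintegral_add_left (mp p), swp]
        simp_rw [e1]
        rw [lintegral_const_mul' _ _ (by simp), lintegral_add_left (Measurable.lintegral_prod_right mhB)]
    _ ≤ ENNReal.ofReal C * (D * (n2 (muL lam) h * Zn j lam s f₁ * Zn j lam s f₂) +
          D * (n2 (muL lam) h * Zn j lam s f₂ * Zn j lam s f₁)) := by
        gcongr
        · exact htri lam hl f₁ f₂ m₁ m₂ h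
        · exact htri lam hl f₂ f₁ m₂ m₁ h
    _ = E * Zn j lam s f₁ * Zn j lam s f₂ * n2 (muL lam) h := by rw [hE]; ring

end
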